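/- Fix n ≥ 2. Let F ∈ ℤ[Y,X₁,…,Xₙ] be monic in Y with deg_Y F ≥ 2, and suppose F is an n-genuine polynomial that is not a strongly n-genuine polynomial. Then there exists an integer e(n) ≥ 1 depending only on n, and a constant C depending only on n and deg F, such that N(F,B) ≤ C · (log(‖F‖+2))^{e(n)} · B^{n−1} · (log(B+2))^{2e(n)} for all real B ≥ 1. -/

import Mathlib

open Polynomial

noncomputable section

/-- The rational function field `ℚ(X₁,…,Xₙ)`. -/
abbrev RF (n : ℕ) := FractionRing (MvPolynomial (Fin n) ℚ)

/-- Base change a polynomial `F ∈ ℤ[Y,X₁,…,Xₙ]` (written as a polynomial in `Y`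
with coefficients in `ℤ[X₁,…,Xₙ]`) to `ℚ[Y,X₁,…,Xₙ]`. -/
def toQ {n : ℕ} (F : Polynomial (MvPolynomial (Fin n) ℤ)) :
    Polynomial (MvPolynomial (Fin n) ℚ) :=
  F.map (MvPolynomial.map (Int.castRingHom ℚ))

/-- View a polynomial in `ℚ[X][Y]` as a polynomial in `ℚ(X)[Y]`. -/
def toFracQ {n : ℕ} (F : Polynomial (MvPolynomial (Fin n) ℚ)) : Polynomial (RF n) :=
  F.map (algebraMap (MvPolynomial (Fin n) ℚ) (RF n))

/-- View a polynomial in `ℤ[X][Y]` as a polynomial in `ℚ(X)[Y]`. -/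
def toFrac {n : ℕ} (F : Polynomial (MvPolynomial (Fin n) ℤ)) : Polynomial (RF n) :=
  toFracQ (toQ F)

/-- The degree of `F(Y,X)` in the variable `Xᵢ`. -/
def degX {n : ℕ} {R : Type*} [CommSemiring R]
    (F : Polynomial (MvPolynomial (Fin n) R)) (i : Fin n) : ℕ :=
  F.support.sup fun k => (F.coeff k).degreeOf i

/-- The total degree of `F(Y,X₁,…,Xₙ)` as a polynomial in `n+1` variables. -/
def totalDeg {n : ℕ} {R : Type*} [CommSemiring R]
    (F : Polynomial (MvPolynomial (Fin n) R)) : ℕ :=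
  F.support.sup fun k => k + (F.coeff k).totalDegree

/-- `‖g‖`: the maximum absolute value of a coefficient of `g ∈ ℤ[X₁,…,Xₙ]`. -/
def mvNorm {n : ℕ} (g : MvPolynomial (Fin n) ℤ) : ℕ :=
  g.support.sup fun m => (g.coeff m).natAbs

/-- `‖F‖`: the maximum absolute value of a coefficient of `F ∈ ℤ[Y,X₁,…,Xₙ]`. -/
def polyNorm {n : ℕ} (F : Polynomial (MvPolynomial (Fin n) ℤ)) : ℕ :=
  F.support.sup fun k => mvNorm (F.coeff k)

/-- The counting function
`N(F,B) = #{x ∈ ℤⁿ ∩ [−B,B]ⁿ : ∃ y ∈ ℤ, F(y,x) = 0}`. -/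
def NFB {n : ℕ} (F : Polynomial (MvPolynomial (Fin n) ℤ)) (B : ℝ) : ℕ :=
  Set.ncard {x : Fin n → ℤ | (∀ i, |(x i : ℝ)| ≤ B) ∧
    ∃ y : ℤ, Polynomial.eval y (F.map (MvPolynomial.eval x)) = 0}

/-- `F ∈ ℤ[Y,X₁,…,Xₙ]` is absolutely irreducible: irreducible over `ℚ̄`. -/
def AbsIrred {n : ℕ} (F : Polynomial (MvPolynomial (Fin n) ℤ)) : Prop :=
  Irreducible (F.map (MvPolynomial.map (Int.castRingHom (AlgebraicClosure ℚ))))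

/-- `G` has positive degree in `Y` and in each variable `Xᵢ`. -/
def AllPosDeg {n : ℕ} (G : Polynomial (MvPolynomial (Fin n) ℤ)) : Prop :=
  0 < G.natDegree ∧ ∀ i : Fin n, 0 < degX G i

/-- A field extension `M` of `ℚ(X₁,…,Xₙ)` is an `n`-genuine extension: every
`G ∈ ℤ[Y,X₁,…,Xₙ]` irreducible over `ℚ(X)` with `M ≅ ℚ(X)[Y]/(G)` has positive
degree in each of `Y, X₁, …, Xₙ`. -/
def IsGenuineExt (n : ℕ) (M : Type*) [Field M] [Algebra (RF n) M] : Prop :=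
  ∀ G : Polynomial (MvPolynomial (Fin n) ℤ), Irreducible (toFrac G) →
    Nonempty (AdjoinRoot (toFrac G) ≃ₐ[RF n] M) → AllPosDeg G

/-- A field extension `M` of `ℚ(X₁,…,Xₙ)` is strongly `n`-genuine: every
intermediate field strictly containing `ℚ(X)` is `n`-genuine. -/
def IsStronglyGenuineExt (n : ℕ) (M : Type*) [Field M] [Algebra (RF n) M] : Prop :=
  ∀ M' : IntermediateField (RF n) M, M' ≠ ⊥ → IsGenuineExt n M'

/-- The extension `ℚ(X)[Y]/(Fq)` presented by `Fq ∈ ℚ[X][Y]` is `n`-genuine. -/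
def GenuineExtOfQ {n : ℕ} (Fq : Polynomial (MvPolynomial (Fin n) ℚ)) : Prop :=
  ∀ G : Polynomial (MvPolynomial (Fin n) ℤ), Irreducible (toFrac G) →
    Nonempty (AdjoinRoot (toFrac G) ≃ₐ[RF n] AdjoinRoot (toFracQ Fq)) → AllPosDeg G

/-- The extension `ℚ(X)[Y]/(Fq)` presented by `Fq ∈ ℚ[X][Y]` is strongly
`n`-genuine: for any field `M` isomorphic over `ℚ(X)` to `ℚ(X)[Y]/(Fq)`, every
intermediate field strictly containing `ℚ(X)` is `n`-genuine. -/
def StronglyGenuineExtOfQ {n : ℕ} (Fq : Polynomial (MvPolynomial (Fin n) ℚ)) : Prop :=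
  ∀ (M : Type) [Field M] [Algebra (RF n) M],
    Nonempty (AdjoinRoot (toFracQ Fq) ≃ₐ[RF n] M) → IsStronglyGenuineExt n M

/-- An absolutely irreducible `F ∈ ℤ[Y,X₁,…,Xₙ]` is an `n`-genuine polynomial. -/
def IsGenuinePoly {n : ℕ} (F : Polynomial (MvPolynomial (Fin n) ℤ)) : Prop :=
  AbsIrred F ∧ GenuineExtOfQ (toQ F)

/-- An absolutely irreducible `F ∈ ℤ[Y,X₁,…,Xₙ]` is a strongly `n`-genuine polynomial. -/
def IsStronglyGenuinePoly {n : ℕ} (F : Polynomial (MvPolynomial (Fin n) ℤ)) : Prop :=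
  AbsIrred F ∧ StronglyGenuineExtOfQ (toQ F)

/-- The ring map `ℚ[X₁,…,Xₙ] → ℚ[X₁,…,Xₙ]` induced by the linear substitution
`Xᵢ ↦ Σⱼ σᵢⱼ Xⱼ`. -/
def lsubMv {n : ℕ} (σ : Matrix (Fin n) (Fin n) ℚ) :
    MvPolynomial (Fin n) ℚ →+* MvPolynomial (Fin n) ℚ :=
  (MvPolynomial.aeval (R := ℚ)
    fun i => ∑ j, MvPolynomial.C (σ i j) * MvPolynomial.X j).toRingHom

/-- `F_σ(Y,X) := F(Y,σ(X))` for a linear change of variables `σ`. -/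
def applyGL {n : ℕ} (σ : Matrix (Fin n) (Fin n) ℚ)
    (Fq : Polynomial (MvPolynomial (Fin n) ℚ)) : Polynomial (MvPolynomial (Fin n) ℚ) :=
  Fq.map (lsubMv σ)

/-- `F` is `(1,n)`-allowable: absolutely irreducible, monic in `Y`, and
`ℚ(X)[Y]/(F_σ)` is an `n`-genuine extension for every `σ ∈ GLₙ(ℚ)`. -/
def IsAllowable {n : ℕ} (F : Polynomial (MvPolynomial (Fin n) ℤ)) : Prop :=
  AbsIrred F ∧ F.Monic ∧
    ∀ σ : Matrix (Fin n) (Fin n) ℚ, IsUnit σ.det → GenuineExtOfQ (applyGL σ (toQ F))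

/-- `F` is strongly `(1,n)`-allowable: absolutely irreducible, monic in `Y`, and
`ℚ(X)[Y]/(F_σ)` is a strongly `n`-genuine extension for every `σ ∈ GLₙ(ℚ)`. -/
def IsStronglyAllowable {n : ℕ} (F : Polynomial (MvPolynomial (Fin n) ℤ)) : Prop :=
  AbsIrred F ∧ F.Monic ∧
    ∀ σ : Matrix (Fin n) (Fin n) ℚ, IsUnit σ.det → StronglyGenuineExtOfQ (applyGL σ (toQ F))

/-- `F` has the form (1.2) with parameter `m`:
`F = Y^{md} + f₁(X) Y^{m(d-1)} + ⋯ + f_{d-1}(X) Y^m + f_d(X)` with `f_d ≠ 0`. -/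
def HasForm (n m : ℕ) (F : Polynomial (MvPolynomial (Fin n) ℤ)) : Prop :=
  ∃ (d : ℕ) (f : ℕ → MvPolynomial (Fin n) ℤ), 1 ≤ d ∧ f d ≠ 0 ∧
    F = Polynomial.X ^ (m * d) +
      ∑ j ∈ Finset.Icc 1 d, Polynomial.C (f j) * Polynomial.X ^ (m * (d - j))

/-- `P` has a linear factor in `Y`: `P = (Y − Q(X))·H̃(Y,X)`. -/
def HasLinearFactorY {n : ℕ} {R : Type*} [CommRing R]
    (P : Polynomial (MvPolynomial (Fin n) R)) : Prop :=
  ∃ (Q : MvPolynomial (Fin n) R) (H : Polynomial (MvPolynomial (Fin n) R)),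
    P = (Polynomial.X - Polynomial.C Q) * H

/-- The canonical map `ℚ[X₁,…,Xₙ] → ℚ(X)[Y]/(F)`. -/
def structMap {n : ℕ} (F : Polynomial (MvPolynomial (Fin n) ℤ)) :
    MvPolynomial (Fin n) ℚ →+* AdjoinRoot (toFrac F) :=
  (algebraMap (RF n) (AdjoinRoot (toFrac F))).comp
    (algebraMap (MvPolynomial (Fin n) ℚ) (RF n))

/-- `z ∈ ℚ(X)[Y]/(F)` lies in the subfield `ℚ((Xᵢ)_{i≠j})`: it can be written
as a quotient of two polynomials not involving `Xⱼ`. -/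
def CoordMem {n : ℕ} (j : Fin n) (F : Polynomial (MvPolynomial (Fin n) ℤ))
    (z : AdjoinRoot (toFrac F)) : Prop :=
  ∃ a b : MvPolynomial (Fin n) ℚ,
    MvPolynomial.degreeOf j a = 0 ∧ MvPolynomial.degreeOf j b = 0 ∧
    structMap F b ≠ 0 ∧ z * structMap F b = structMap F a

/-- `z ∈ ℚ(X)[Y]/(F)` is algebraic over the subfield `ℚ((Xᵢ)_{i≠j})`. -/
def AlgOverCoord {n : ℕ} (j : Fin n) (F : Polynomial (MvPolynomial (Fin n) ℤ))
    (z : AdjoinRoot (toFrac F)) : Prop :=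
  ∃ P : Polynomial (AdjoinRoot (toFrac F)), P ≠ 0 ∧ (∀ k, CoordMem j F (P.coeff k)) ∧
    Polynomial.eval z P = 0

/-- Substitute `Xᵢ = xᵢ` for `i ∈ I` into `F`, over `ℚ̄`. -/
def substSome {n : ℕ} (I : Finset (Fin n)) (x : Fin n → ℚ)
    (F : Polynomial (MvPolynomial (Fin n) ℤ)) :
    Polynomial (MvPolynomial (Fin n) (AlgebraicClosure ℚ)) :=
  (toQ F).map
    ((MvPolynomial.aeval (R := ℚ) fun i =>
      if i ∈ I then MvPolynomial.C (algebraMap ℚ (AlgebraicClosure ℚ) (x i))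
      else MvPolynomial.X i).toRingHom)

/-- Substitute `Xᵢ = xᵢ` for all `i ≠ i₀` into `F`, over `ℚ̄`. -/
def substKeepFirst {n : ℕ} (i0 : Fin n) (x : {i : Fin n // i ≠ i0} → ℤ)
    (F : Polynomial (MvPolynomial (Fin n) ℤ)) :
    Polynomial (MvPolynomial (Fin n) (AlgebraicClosure ℚ)) :=
  F.map
    ((MvPolynomial.aeval (R := ℤ) fun i =>
      if h : i = i0 then (MvPolynomial.X i : MvPolynomial (Fin n) (AlgebraicClosure ℚ))
      else MvPolynomial.C ((x ⟨i, h⟩ : ℤ) : AlgebraicClosure ℚ)).toRingHom)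

/-- `‖L‖`: maximum absolute value of an entry of an integer matrix. -/
def matNorm {n : ℕ} (L : Matrix (Fin n) (Fin n) ℤ) : ℕ :=
  Finset.univ.sup fun p : Fin n × Fin n => (L p.1 p.2).natAbs

/-- The standard additive character `e_p(a) = exp(2πi a/p)` on `ZMod p`. -/
def eZp (p : ℕ) (a : ZMod p) : ℂ :=
  Complex.exp (2 * Real.pi * Complex.I * (a.val : ℂ) / (p : ℂ))


/-- weight -/
def wt {n : ℕ} (x : Fin n → ℤ) : ℝ := ∏ j, (1 + |(x j : ℝ)|)

lemma one_le_wt {n : ℕ} (x : Fin n → ℤ) : 1 ≤ wt x := by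
  unfold wt
  have h : ∏ j : Fin n, (1:ℝ) ≤ ∏ j, (1 + |(x j : ℝ)|) := by
    apply Finset.prod_le_prod
    · intro j _; positivity
    · intro j _; linarith [abs_nonneg (x j : ℝ)]
  simpa using h

lemma wt_insertNth {m : ℕ} (i : Fin (m+1)) (s : ℤ) (x : Fin m → ℤ) :
    wt (i.insertNth s x : Fin (m+1) → ℤ) = (1 + |(s : ℝ)|) * wt x := by
  unfold wt
  rw [Fin.prod_univ_succAbove _ i]
  simp

lemma wt_le {n : ℕ} (x : Fin n → ℤ) (N : ℝ) (h : ∀ j, |(x j : ℝ)| ≤ N) : wt x ≤ (1 + N) ^ n := by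
  unfold wt
  calc _ ≤ ∏ j : Fin n, (1 + N) := by
        apply Finset.prod_le_prod
        · intro j _; positivity
        · intro j _; linarith [h j]
    _ = _ := by simp

lemma uni_growth (g : ℤ[X]) (A : ℝ) (a : ℕ) (h : ∀ s : ℤ, |((g.eval s : ℤ) : ℝ)| ≤ A * (1 + |(s:ℝ)|) ^ a) :
    g.natDegree ≤ a := by
  by_contra hlt
  push Not at hlt
  have hg0 : g ≠ 0 := by rintro rfl; simp at hlt
  set G : ℝ[X] := g.map (Int.castRingHom ℝ)
  have hdeg : G.natDegree = g.natDegree := natDegree_map_eq_of_injective (RingHom.injective_int _) g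
  have hG0 : G ≠ 0 := by
    rw [Ne, Polynomial.map_eq_zero_iff (RingHom.injective_int _)]; exact hg0
  set Q : ℝ[X] := (X + C 1) ^ a
  have hQ : Q.natDegree = a := by
    simp only [Q]; rw [natDegree_pow, natDegree_X_add_C, mul_one]
  have hQ0 : Q ≠ 0 := by
    apply pow_ne_zero; exact X_add_C_ne_zero 1
  have ht := Polynomial.abs_div_tendsto_atTop_atTop_of_degree_gt G Q (by
    rw [degree_eq_natDegree hG0, degree_eq_natDegree hQ0, hdeg, hQ]; exact_mod_cast hlt) hQ0
  have ht2 := ht.comp tendsto_natCast_atTop_atTop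
  obtain ⟨k, hk⟩ := (ht2.eventually (Filter.eventually_gt_atTop A)).exists
  simp only [Function.comp] at hk
  have h1 := h k
  have e1 : ((g.eval (k:ℤ) : ℤ) : ℝ) = G.eval (k:ℝ) := by
    have := Polynomial.eval_intCast_map (Int.castRingHom ℝ) g (k:ℤ)
    simp only [G]; simpa using this.symm
  have e2 : Q.eval (k:ℝ) = (1 + |((k:ℤ):ℝ)|) ^ a := by
    simp [Q, add_comm]
  rw [abs_div, e2, abs_of_pos (a := (1 + |((k:ℤ):ℝ)|) ^ a) (by positivity), ← e1, lt_div_iff₀ (by positivity)] at hk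
  linarith

lemma deg_of_growth {n : ℕ} (p : MvPolynomial (Fin n) ℤ) (j : Fin n) (a : ℕ)
    (h : ∀ x : Fin n → ℤ, ∃ A : ℝ, ∀ s : ℤ,
      |((MvPolynomial.eval (Function.update x j s) p : ℤ) : ℝ)| ≤ A * (1 + |(s:ℝ)|) ^ a) :
    p.degreeOf j ≤ a := by
  cases n with
  | zero => exact j.elim0
  | succ m =>
  set e : Equiv.Perm (Fin (m+1)) := Equiv.swap 0 j
  set p' := MvPolynomial.rename e p
  have h1 : p'.degreeOf 0 = p.degreeOf j := by
    have := MvPolynomial.degreeOf_rename_of_injective (p := p) e.injective j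
    simpa [p', e] using this
  by_cases hp : p = 0
  · simp [hp]
  have hp' : p' ≠ 0 := by
    intro h0
    exact hp ((MvPolynomial.rename_injective e e.injective) (by simpa [p'] using h0))
  have h2 := MvPolynomial.natDegree_finSuccEquiv p'
  set P := MvPolynomial.finSuccEquiv ℤ m p'
  have hP : P ≠ 0 := by
    intro h0; exact hp' ((MvPolynomial.finSuccEquiv ℤ m).injective (by simpa [P] using h0))
  have hl : P.leadingCoeff ≠ 0 := leadingCoeff_ne_zero.mpr hP
  obtain ⟨x', hx'⟩ : ∃ x', MvPolynomial.eval x' P.leadingCoeff ≠ 0 := by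
    by_contra hc
    push Not at hc
    exact hl (MvPolynomial.funext (fun x => by simpa using hc x))
  set g := P.map (MvPolynomial.eval x')
  have hg : g.natDegree = P.natDegree := natDegree_map_of_leadingCoeff_ne_zero _ hx'
  rw [← h1, ← h2, ← hg]
  obtain ⟨A, hA⟩ := h ((Fin.cons 0 x' : Fin (m+1) → ℤ) ∘ e)
  apply uni_growth g A a
  intro s
  convert hA s using 4
  have e1 := MvPolynomial.eval_eq_eval_mv_eval' x' s p'
  rw [show g.eval s = _ from e1.symm]
  simp only [p', MvPolynomial.eval_rename]
  congr 2
  ext k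
  simp only [Function.comp, Function.update_apply]
  split_ifs with hk
  · subst hk; simp [e]
  · have : e k ≠ 0 := by
      intro h0
      apply hk
      have : k = e.symm 0 := by rw [← h0]; simp
      simpa [e] using this
    obtain ⟨l, hl⟩ := Fin.exists_succ_eq.mpr this
    rw [← hl]; simp

def Grw {n : ℕ} (p : MvPolynomial (Fin n) ℤ) (A : ℝ) (a : ℕ) : Prop :=
  ∀ x, |((MvPolynomial.eval x p : ℤ) : ℝ)| ≤ A * wt x ^ a

def DegLE {n : ℕ} (p : MvPolynomial (Fin n) ℤ) (a : ℕ) : Prop := ∀ j, p.degreeOf j ≤ a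

lemma wt_update_le {n : ℕ} (x : Fin n → ℤ) (j : Fin n) (s : ℤ) :
    wt (Function.update x j s) ≤ wt x * (1 + |(s:ℝ)|) := by
  cases n with
  | zero => exact j.elim0
  | succ m =>
  have h1 : Function.update x j s = j.insertNth s (j.removeNth x) := by
    simp
  have h2 : wt x = (1 + |(x j:ℝ)|) * wt (j.removeNth x) := by
    conv_lhs => rw [← Fin.insertNth_self_removeNth j x]
    rw [wt_insertNth]
  rw [h1, wt_insertNth, h2]
  have := one_le_wt (j.removeNth x)
  have h3 := abs_nonneg (x j : ℝ)
  have h4 := abs_nonneg (s : ℝ)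
  have h5 : 0 ≤ |(x j:ℝ)| * (wt (j.removeNth x) * (1 + |(s:ℝ)|)) := by positivity
  nlinarith

lemma Grw.nonneg {n : ℕ} {p : MvPolynomial (Fin n) ℤ} {A : ℝ} {a : ℕ} (h : Grw p A a) : 0 ≤ A := by
  have := (abs_nonneg _).trans (h 0)
  have h2 : (0:ℝ) < wt (0 : Fin n → ℤ) ^ a := by
    have := one_le_wt (0 : Fin n → ℤ); positivity
  exact nonneg_of_mul_nonneg_left this h2

lemma Grw.degLE {n : ℕ} {p : MvPolynomial (Fin n) ℤ} {A : ℝ} {a : ℕ} (h : Grw p A a) : DegLE p a := by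
  intro j
  apply deg_of_growth
  intro x
  refine ⟨A * wt x ^ a, fun s => ?_⟩
  have hA := h.nonneg
  refine (h _).trans ?_
  rw [mul_assoc, ← mul_pow]
  have h1 := wt_update_le x j s
  have h2 := one_le_wt (Function.update x j s)
  gcongr

/-- box -/
def box (n N : ℕ) : Finset (Fin n → ℤ) := Fintype.piFinset fun _ => Finset.Icc (-(N:ℤ)) N

lemma mem_box {n N : ℕ} {x : Fin n → ℤ} : x ∈ box n N ↔ ∀ j, |x j| ≤ (N:ℤ) := by
  simp [box, abs_le]

lemma wt_box {n N : ℕ} {x : Fin n → ℤ} (h : x ∈ box n N) : wt x ≤ (1 + (N:ℝ)) ^ n := by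
  apply wt_le
  intro j
  have := mem_box.mp h j
  exact_mod_cast this

lemma card_box (n N : ℕ) : (box n N).card = (2 * N + 1) ^ n := by
  simp [box]
  congr 1
  omega

lemma zeros_box (n a : ℕ) : ∃ C : ℝ, 0 < C ∧ ∀ p : MvPolynomial (Fin n) ℤ, p ≠ 0 → DegLE p a →
    ∀ N : ℕ, 1 ≤ N → ∀ S : Finset (Fin n → ℤ), (∀ x ∈ S, x ∈ box n N ∧ MvPolynomial.eval x p = 0) →
    (S.card : ℝ) * N ≤ C * N ^ n := by
  refine ⟨3 ^ n * (n * a) + 1, by positivity, ?_⟩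
  intro p hp hd N hN S hS
  have h := MvPolynomial.schwartz_zippel_sum_degreeOf hp (fun _ => Finset.Icc (-(N:ℤ)) N)
  have hc : (Finset.Icc (-(N:ℤ)) N).card = 2 * N + 1 := by simp; omega
  rw [hc] at h
  have hsub : S ⊆ {x ∈ Fintype.piFinset fun _ : Fin n => Finset.Icc (-(N:ℤ)) N | MvPolynomial.eval x p = 0} := by
    intro x hx
    exact Finset.mem_filter.mpr (hS x hx)
  have hcard := Finset.card_le_card hsub
  set Z := ({x ∈ Fintype.piFinset fun _ : Fin n => Finset.Icc (-(N:ℤ)) N | MvPolynomial.eval x p = 0} : Finset (Fin n → ℤ)).card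
  have h' : (Z : ℝ) / (∏ i : Fin n, ((2 * N + 1 : ℕ) : ℝ)) ≤ ∑ i : Fin n, ((p.degreeOf i : ℝ) / ((2 * N + 1 : ℕ) : ℝ)) := by
    have := (NNRat.cast_le (K := ℝ)).mpr h
    push_cast at this ⊢
    exact this
  have h3 : ∑ i : Fin n, ((p.degreeOf i : ℝ) / ((2 * N + 1 : ℕ) : ℝ)) ≤ n * a / N := by
    calc _ ≤ ∑ i : Fin n, (a : ℝ) / N := by
          apply Finset.sum_le_sum
          intro i _
          have h1 : (p.degreeOf i : ℝ) ≤ a := by exact_mod_cast hd i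
          have hN' : (0:ℝ) < N := by exact_mod_cast hN
          apply div_le_div₀ (by positivity) h1 hN'
          push_cast; linarith
      _ = _ := by simp; ring
  have hN' : (1:ℝ) ≤ N := by exact_mod_cast hN
  have h4 := h'.trans h3
  simp only [Finset.prod_const, Finset.card_univ, Fintype.card_fin] at h4
  rw [div_le_div_iff₀ (by positivity) (by positivity)] at h4
  have h5 : ((2 * N + 1 : ℕ) : ℝ) ^ n ≤ 3 ^ n * N ^ n := by
    rw [← mul_pow]; push_cast; gcongr; linarith
  have h6 : (S.card : ℝ) ≤ Z := by exact_mod_cast hcard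
  calc (S.card : ℝ) * N ≤ Z * N := by gcongr
    _ ≤ n * a * ((2 * N + 1 : ℕ) : ℝ) ^ n := h4
    _ ≤ n * a * (3 ^ n * N ^ n) := by gcongr
    _ ≤ _ := by nlinarith [pow_pos (show (0:ℝ) < N by linarith) n]

/-- discriminant-like resultant -/
def Dsc {R : Type*} [CommRing R] (f : R[X]) : R :=
  resultant f (derivative f) f.natDegree (f.natDegree - 1)

lemma Dsc_map {R S : Type*} [CommRing R] [CommRing S] [Nontrivial S] (φ : R →+* S) (f : R[X]) (hf : f.Monic) :
    Dsc (f.map φ) = φ (Dsc f) := by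
  unfold Dsc
  rw [hf.natDegree_map, derivative_map, resultant_map_map]

lemma Dsc_bezout {R : Type*} [CommRing R] (f : R[X]) (hf : f.natDegree ≠ 0) :
    ∃ u v : R[X], f * u + derivative f * v = C (Dsc f) := by
  obtain ⟨u, v, -, -, h⟩ := exists_mul_add_mul_eq_C_resultant (m := f.natDegree) (n := f.natDegree - 1)
    f (derivative f) le_rfl (natDegree_derivative_le f) (Or.inl hf)
  exact ⟨u, v, h⟩

lemma Dsc_ne_zero_of_irreducible {R K : Type*} [CommRing R] [Field K] [CharZero K] (φ : R →+* K)
    (f : R[X]) (hf : f.Monic) (hirr : Irreducible (f.map φ)) : Dsc f ≠ 0 := by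
  intro h0
  have h1 := Dsc_map φ f hf
  rw [h0, map_zero] at h1
  have hs : (f.map φ).Separable := hirr.separable
  have hd : (f.map φ).natDegree ≠ 0 := hirr.natDegree_pos.ne'
  have h2 := resultant_ne_zero _ _ hs
  rw [natDegree_derivative] at h2
  exact h2 h1

lemma Dsc_bound {f : ℤ[X]} {δ : ℕ} (hδ : f.natDegree ≤ δ) (M : ℝ) (hM : 1 ≤ M)
    (h : ∀ k, |((f.coeff k : ℤ) : ℝ)| ≤ M) :
    |((Dsc f : ℤ) : ℝ)| ≤ (2 * δ).factorial * ((δ + 1) * M) ^ (2 * δ) := by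
  unfold Dsc resultant
  have hent : ∀ i j, |(((sylvester f (derivative f) f.natDegree (f.natDegree - 1)).map (Int.cast : ℤ → ℝ)) i j)| ≤ (δ + 1) * M := by
    have hδ' : (f.natDegree : ℝ) ≤ δ := by exact_mod_cast hδ
    have hnn : (0:ℝ) ≤ δ := by positivity
    have hb1 : M ≤ (δ + 1) * M := by nlinarith
    have hb2 : ∀ k, |(((derivative f).coeff k : ℤ) : ℝ)| ≤ (δ + 1) * M := by
      intro k
      rw [coeff_derivative]
      by_cases hk : k + 1 ≤ f.natDegree
      · push_cast
        rw [abs_mul, mul_comm]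
        have : |((k:ℝ) + 1)| ≤ δ + 1 := by
          rw [abs_of_nonneg (by positivity)]
          have : ((k + 1 : ℕ) : ℝ) ≤ δ := by exact_mod_cast hk.trans hδ
          push_cast at this; linarith
        exact mul_le_mul this (h _) (abs_nonneg _) (by positivity)
      · rw [coeff_eq_zero_of_natDegree_lt (by omega)]; simp; positivity
    intro i j
    have h0 : (0:ℝ) ≤ (δ + 1) * M := by positivity
    simp only [Matrix.map_apply, sylvester, Matrix.of_apply]
    induction j using Fin.addCases with
    | left j => simp only [Fin.addCases_left]; split_ifs <;> simp <;> first | exact hb2 _ | exact (h _).trans hb1 | skip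
                all_goals first | exact h0 | positivity
    | right j => simp only [Fin.addCases_right]; split_ifs <;> simp <;> first | exact hb2 _ | exact (h _).trans hb1 | skip
                 all_goals first | exact h0 | positivity
  have hdet := Matrix.det_le (abv := AbsoluteValue.abs) hent
  have e : (((sylvester f (derivative f) f.natDegree (f.natDegree - 1)).det : ℤ) : ℝ) =
      ((sylvester f (derivative f) f.natDegree (f.natDegree - 1)).map (Int.cast : ℤ → ℝ)).det := by
    have := RingHom.map_det (Int.castRingHom ℝ) (sylvester f (derivative f) f.natDegree (f.natDegree - 1))
    simpa using this
  rw [e]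
  refine hdet.trans ?_
  simp only [Fintype.card_fin, nsmul_eq_mul]
  have h1 : (1:ℝ) ≤ (δ + 1) * M := by
    have hnn : (0:ℝ) ≤ δ := by positivity
    nlinarith
  have h2 : f.natDegree + (f.natDegree - 1) ≤ 2 * δ := by omega
  gcongr


lemma theta_lower (x : ℝ) (hx : (50:ℝ)^4 ≤ x) : x / 2 ≤ Chebyshev.theta x := by
  have hx1 : 1 ≤ x := by linarith
  set u := √(√x) with hu
  have hu0 : 0 ≤ u := Real.sqrt_nonneg _
  have hu2 : u ^ 2 = √x := Real.sq_sqrt (Real.sqrt_nonneg _)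
  have hu4 : u ^ 4 = x := by
    rw [show u^4 = (u^2)^2 by ring, hu2, Real.sq_sqrt (by linarith)]
  have hu50 : 50 ≤ u := by
    rw [← hu4] at hx
    exact le_of_pow_le_pow_left₀ (by norm_num) hu0 hx
  have hlog : Real.log x ≤ 4 * u := by
    rw [← hu4, Real.log_pow]
    push_cast
    linarith [Real.log_le_self hu0]
  have hlog2 : Real.log (x + 2) ≤ 4 * u + 2 := by
    have : Real.log (x + 2) ≤ Real.log (x * 3) := Real.log_le_log (by linarith) (by linarith)
    rw [Real.log_mul (by linarith) (by norm_num)] at this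
    have h3 : Real.log 3 ≤ 2 := by
      have := Real.log_le_sub_one_of_pos (show (0:ℝ) < 3 by norm_num)
      linarith
    linarith
  have h := Chebyshev.theta_ge' hx1
  have h2 : (0.69:ℝ) ≤ Real.log 2 := by have := Real.log_two_gt_d9; linarith
  refine le_trans ?_ h
  rw [← hu2]
  have h4 : (x-1) * 0.69 ≤ (x - 1) * Real.log 2 := by
    apply mul_le_mul_of_nonneg_left h2; linarith
  have h5 : 2 * u^2 * Real.log x ≤ 2 * u^2 * (4 * u) := by gcongr
  rw [← hu4] at h4 ⊢
  rw [← hu4] at h5 hlog2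
  have h6 : (8:ℝ) * u^3 ≤ 0.16 * u ^ 4 := by
    have : 0 ≤ u^3 * (u - 50) := by apply mul_nonneg; positivity; linarith
    nlinarith
  have h7 : (50:ℝ)^3 * u ≤ u^4 := by
    have : (50:ℝ)^3 ≤ u^3 := by gcongr
    nlinarith
  nlinarith

lemma exists_prime (P : ℝ) (hP : 1 ≤ P) (c : ℤ) (hc : c ≠ 0) :
    ∃ p : ℕ, p.Prime ∧ P ≤ p ∧ (p:ℝ) ≤ 50 ^ 4 * (P + Real.log |(c:ℝ)|) ∧ ¬ (p:ℤ) ∣ c := by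
  by_contra hcon
  push Not at hcon
  set l := Real.log |(c:ℝ)| with hl
  have hc1 : (1:ℝ) ≤ |(c:ℝ)| := by
    have := Int.one_le_abs hc
    exact_mod_cast this
  have hl0 : 0 ≤ l := Real.log_nonneg hc1
  set Z := 50 ^ 4 * (P + l)
  have hZ : (50:ℝ)^4 ≤ Z := by simp only [Z]; nlinarith
  have h1 := theta_lower Z hZ
  have h2 : Chebyshev.theta P ≤ Real.log 4 * P := Chebyshev.theta_le_log4_mul_x (by linarith)
  have hlog4 : Real.log 4 ≤ 3 := by
    have := Real.log_le_sub_one_of_pos (show (0:ℝ) < 4 by norm_num)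
    linarith
  have hPZ : ⌊P⌋₊ ≤ ⌊Z⌋₊ := Nat.floor_le_floor (by simp only [Z]; nlinarith)
  have h3 : Chebyshev.theta Z = Chebyshev.theta P + ∑ p ∈ Finset.Ioc ⌊P⌋₊ ⌊Z⌋₊ with p.Prime, Real.log p := by
    unfold Chebyshev.theta
    rw [← Finset.sum_union]
    · congr 1
      rw [← Finset.filter_union, Finset.Ioc_union_Ioc_eq_Ioc (Nat.zero_le _) hPZ]
    · apply Finset.disjoint_filter_filter
      rw [Finset.disjoint_left]
      intro a ha hb
      simp at ha hb; omega
  have h4 : ∑ p ∈ Finset.Ioc ⌊P⌋₊ ⌊Z⌋₊ with p.Prime, Real.log p ≤ l := by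
    rw [← Real.log_prod]
    · have hdvd : ∏ p ∈ Finset.Ioc ⌊P⌋₊ ⌊Z⌋₊ with p.Prime, p ∣ c.natAbs := by
        apply Finset.prod_primes_dvd
        · intro p hp; simp at hp; exact hp.2.prime
        · intro p hp
          simp only [Finset.mem_filter, Finset.mem_Ioc] at hp
          have := hcon p hp.2 (Nat.lt_of_floor_lt hp.1.1).le (by
            exact (Nat.le_floor_iff (by linarith)).mp hp.1.2)
          exact Int.natCast_dvd.mp this
      have hle := Nat.le_of_dvd (Int.natAbs_pos.mpr hc) hdvd
      have : ((∏ p ∈ Finset.Ioc ⌊P⌋₊ ⌊Z⌋₊ with p.Prime, p : ℕ) : ℝ) ≤ |(c:ℝ)| := by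
        have h5 : ((c.natAbs : ℕ) : ℝ) = |(c:ℝ)| := by
          rw [Nat.cast_natAbs]; simp
        rw [← h5]; exact_mod_cast hle
      push_cast at this
      apply Real.log_le_log _ this
      apply Finset.prod_pos
      intro p hp; simp at hp; exact_mod_cast hp.2.pos
    · intro p hp; simp at hp; exact_mod_cast hp.2.ne_zero
  have h5 : Z / 2 ≤ 3 * P + l := by nlinarith
  simp only [Z] at h5
  nlinarith

/-- root of a monic polynomial which is a fraction. -/
lemma int_closed_root {A : Type*} [CommRing A] [IsDomain A] [IsIntegrallyClosed A]
    {Ω : Type*} [Field Ω] (ψ : A →+* Ω) (hψ : Function.Injective ψ) (f : A[X]) (hf : f.Monic)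
    (z : Ω) (hz : (f.map ψ).eval z = 0) (u v : A) (hv : v ≠ 0) (huv : ψ v * z = ψ u) :
    ∃ r : A, ψ r = z ∧ f.eval r = 0 ∧ v * r = u := by
  set K := FractionRing A
  set L : K →+* Ω := IsFractionRing.lift hψ
  have hL : ∀ a, L (algebraMap A K a) = ψ a := fun a => IsFractionRing.lift_algebraMap hψ a
  have hψv : ψ v ≠ 0 := by
    intro h; exact hv (hψ (by rw [h, map_zero]))
  have hz' : z = L (algebraMap A K u / algebraMap A K v) := by
    rw [map_div₀, hL, hL]; field_simp; linear_combination huv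
  have hintg : IsIntegral A (algebraMap A K u / algebraMap A K v) := by
    refine ⟨f, hf, ?_⟩
    apply L.injective
    rw [hom_eval₂, ← hz', map_zero, show L.comp (algebraMap A K) = ψ from RingHom.ext hL, ← eval_map]
    exact hz
  obtain ⟨r, hr⟩ := IsIntegrallyClosed.algebraMap_eq_of_integral hintg
  have hrz : ψ r = z := by rw [hz', ← hr, hL]
  refine ⟨r, hrz, ?_, ?_⟩
  · apply hψ
    rw [map_zero, ← hz, ← hrz, eval_map_apply]
  · apply hψ; rw [map_mul, hrz, huv]


lemma ev2_eval (f : ℤ[X][X]) (g : ℤ[X]) (x : ℤ) :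
    (f.eval g).eval x = (f.map (evalRingHom x)).eval (g.eval x) := by
  have := eval_map_apply (f := evalRingHom x) (p := f) g
  simpa using this.symm

lemma ev2_congr (f : ℤ[X][X]) (p x x0 y y0 : ℤ) (hx : p ∣ x - x0) (hy : p ∣ y - y0) :
    p ∣ (f.map (evalRingHom x)).eval y - (f.map (evalRingHom x0)).eval y0 := by
  have h1 : p ∣ (f.map (evalRingHom x)).eval y - (f.map (evalRingHom x)).eval y0 :=
    hy.trans (sub_dvd_eval_sub _ _ _)
  have h2 : p ∣ (f.map (evalRingHom x)).eval y0 - (f.map (evalRingHom x0)).eval y0 := by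
    have e := fun x => ev2_eval f (C y0) x
    simp only [eval_C] at e
    rw [← e, ← e]
    exact hx.trans (sub_dvd_eval_sub _ _ _)
  have := dvd_add h1 h2
  simpa using this

lemma hensel_poly (p : ℤ) (f : ℤ[X][X]) (x0 y0 v : ℤ)
    (hv : p ∣ 1 - v * ((derivative f).map (evalRingHom x0)).eval y0) (M : ℕ) :
    ∃ g : ℤ[X], ∀ x y : ℤ, p ∣ x - x0 → p ∣ y - y0 → (f.map (evalRingHom x)).eval y = 0 →
      p ^ (M + 1) ∣ y - g.eval x := by
  induction M with
  | zero => exact ⟨C y0, fun x y hx hy h => by simpa using hy⟩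
  | succ M ih =>
    obtain ⟨g, hg⟩ := ih
    refine ⟨g - C v * f.eval g, fun x y hx hy h => ?_⟩
    have hgy := hg x y hx hy h
    rw [eval_sub, eval_mul, eval_C, ev2_eval]
    set hh := f.map (evalRingHom x) with hhd
    set w := g.eval x
    obtain ⟨k, hk⟩ := binomExpansion hh y (w - y)
    rw [add_sub_cancel, h, zero_add] at hk
    have hder : derivative hh = (derivative f).map (evalRingHom x) := derivative_map _ _
    have hc := ev2_congr (derivative f) p x x0 y y0 hx hy
    rw [← hder] at hc
    have e : y - (w - v * hh.eval w) = (y - w) * (1 - v * ((derivative f).map (evalRingHom x0)).eval y0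
        - v * ((derivative hh).eval y - ((derivative f).map (evalRingHom x0)).eval y0) + v * k * (y - w)) := by
      rw [hk]; ring
    rw [e, pow_succ]
    apply mul_dvd_mul hgy
    apply dvd_add
    · exact dvd_sub hv (Dvd.dvd.mul_left hc _)
    · exact Dvd.dvd.mul_left ((dvd_pow_self p (Nat.succ_ne_zero M)).trans hgy) _

lemma sum_reflect_aux (J : ℕ) : (∑ k : Fin J, (J - (k:ℕ))) * 2 = J * (J + 1) := by
  rw [Fin.sum_univ_eq_sum_range (fun k => J - k) J]
  induction J with
  | zero => simp
  | succ J ih =>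
    rw [Finset.sum_range_succ']
    have : ∀ k, J + 1 - (k + 1) = J - k := fun k => by omega
    simp only [this, Nat.sub_zero]
    rw [add_mul, ih]; ring

lemma siegel_aux (p N T μ : ℕ) (hp : 2 ≤ p) (hN : 1 ≤ N) (hT : 1 ≤ T) (h16 : 16 * N ≤ p ^ 2)
    (hμ : 16 * T ≤ 4 ^ μ) : ∃ Z : ℕ, p ^ (2 * μ + 3) * N ^ μ * T ≤ Z ^ 2 ∧ (2 * μ + 2) * Z < p ^ (2 * μ + 2) := by
  set Q := p ^ (2 * μ + 3) * N ^ μ * T with hQ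
  have hQ1 : 1 ≤ Q := Nat.one_le_iff_ne_zero.mpr (by positivity)
  refine ⟨Nat.sqrt Q + 1, ?_, ?_⟩
  · exact (Nat.lt_succ_sqrt' Q).le
  · have hs : 1 ≤ Nat.sqrt Q := Nat.le_sqrt.mpr (by simpa using hQ1)
    have hs2 : Nat.sqrt Q ^ 2 ≤ Q := Nat.sqrt_le' Q
    have h4 : (Nat.sqrt Q + 1) ^ 2 ≤ 4 * Q := by nlinarith
    have h2 : (μ + 1) ^ 2 ≤ 4 ^ μ := by
      have : μ + 1 ≤ 2 ^ μ := Nat.lt_two_pow_self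
      calc (μ+1)^2 ≤ (2^μ)^2 := Nat.pow_le_pow_left this 2
        _ = 4 ^ μ := by rw [← pow_mul, mul_comm, pow_mul]; norm_num
    have h5 : 16 * (μ+1)^2 * N^μ * T < p ^ (2 * μ) * p := by
      calc 16 * (μ+1)^2 * N^μ * T = (μ+1)^2 * (16 * T) * N ^ μ := by ring
        _ ≤ 4 ^ μ * 4 ^ μ * N ^ μ := by gcongr
        _ = (16 * N) ^ μ := by rw [mul_pow, ← mul_pow]; norm_num
        _ ≤ (p ^ 2) ^ μ := by gcongr
        _ = p ^ (2 * μ) * 1 := by rw [← pow_mul, mul_one]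
        _ < p ^ (2 * μ) * p := by
          apply Nat.mul_lt_mul_of_pos_left (by omega) (by positivity)
    apply lt_of_pow_lt_pow_left₀ 2 (by positivity)
    calc ((2 * μ + 2) * (Nat.sqrt Q + 1)) ^ 2 = 4 * (μ+1)^2 * (Nat.sqrt Q + 1) ^ 2 := by ring
      _ ≤ 4 * (μ+1)^2 * (4 * Q) := by gcongr
      _ = p ^ (2 * μ + 3) * (16 * (μ+1)^2 * N^μ * T) := by rw [hQ]; ring
      _ < p ^ (2 * μ + 3) * (p ^ (2 * μ) * p) := by
          apply Nat.mul_lt_mul_of_pos_left h5 (by positivity)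
      _ = (p ^ (2 * μ + 2)) ^ 2 := by ring

lemma siegel (p N T μ : ℕ) (hp : 2 ≤ p) (hN : 1 ≤ N) (hT : 1 ≤ T) (h16 : 16 * N ≤ p ^ 2)
    (hμ : 16 * T ≤ 4 ^ μ) (g : ℤ[X]) (x0 : ℤ) :
    ∃ A0 A1 : ℤ[X], A0.natDegree ≤ μ ∧ A1.natDegree ≤ μ ∧ (A0 ≠ 0 ∨ A1 ≠ 0) ∧
      ∀ x y : ℤ, |x| ≤ N → |y| ≤ T → (p:ℤ) ∣ x - x0 → (p:ℤ) ^ (2 * μ + 2) ∣ y - g.eval x →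
        A0.eval x + A1.eval x * y = 0 := by
  obtain ⟨Z, hZ1, hZ2⟩ := siegel_aux p N T μ hp hN hT h16 hμ
  set J := 2 * μ + 2 with hJ
  let W : Fin (μ+1) × Fin 2 → ℕ := fun q => N ^ (q.1 : ℕ) * (if q.2 = 0 then 1 else T)
  have hW : ∀ q, 0 < W q := by
    intro q; simp only [W]; split_ifs <;> positivity
  let dom : Finset (Fin (μ+1) × Fin 2 → ℤ) := Fintype.piFinset fun q => Finset.Icc (0:ℤ) ((Z / W q : ℕ) : ℤ)
  let poly : (Fin (μ+1) → ℤ) → ℤ[X] := fun a => ∑ i : Fin (μ+1), C (a i) * X ^ (i:ℕ)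
  have hpolysub : ∀ a b, poly (a - b) = poly a - poly b := by
    intro a b; simp only [poly, ← Finset.sum_sub_distrib, Pi.sub_apply, C_sub, sub_mul]
  let A : (Fin (μ+1) × Fin 2 → ℤ) → ℤ[X] := fun a =>
    poly (fun i => a (i, 0)) + poly (fun i => a (i, 1)) * g
  have hAsub : ∀ a b, A (a - b) = A a - A b := by
    intro a b
    have h1 := hpolysub (fun i => a (i,0)) (fun i => b (i,0))
    have h2 := hpolysub (fun i => a (i,1)) (fun i => b (i,1))
    have e1 : (fun i => (a - b) (i, (0:Fin 2))) = (fun i => a (i,0)) - (fun i => b (i,0)) := rfl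
    have e2 : (fun i => (a - b) (i, (1:Fin 2))) = (fun i => a (i,1)) - (fun i => b (i,1)) := rfl
    simp only [A]
    rw [e1, e2, h1, h2]; ring
  let im : (Fin (μ+1) × Fin 2 → ℤ) → (Fin J → ℤ) := fun a k =>
    ((A a).comp (X + C x0)).coeff k % ((p:ℤ) ^ (J - (k:ℕ)))
  let tgt : Finset (Fin J → ℤ) := Fintype.piFinset fun k => Finset.Ico (0:ℤ) ((p:ℤ) ^ (J - (k:ℕ)))
  have hmaps : ∀ a ∈ dom, im a ∈ tgt := by
    intro a _
    simp only [tgt, Fintype.mem_piFinset, Finset.mem_Ico, im]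
    intro k
    have : (0:ℤ) < (p:ℤ) ^ (J - (k:ℕ)) := by positivity
    exact ⟨Int.emod_nonneg _ this.ne', Int.emod_lt_of_pos _ this⟩
  have htgt : tgt.card = p ^ ((μ+1) * (2 * μ + 3)) := by
    simp only [tgt, Fintype.card_piFinset, Int.card_Ico, sub_zero]
    have : ∀ k : Fin J, ((p:ℤ) ^ (J - (k:ℕ))).toNat = p ^ (J - (k:ℕ)) := by
      intro k
      rw [← Nat.cast_pow, Int.toNat_natCast]
    simp only [this]
    rw [Finset.prod_pow_eq_pow_sum]
    congr 1
    have := sum_reflect_aux J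
    have h2 : J * (J+1) = ((μ+1) * (2 * μ + 3)) * 2 := by rw [hJ]; ring
    omega
  have hdom : dom.card = ∏ q, (Z / W q + 1) := by
    simp only [dom, Fintype.card_piFinset, Int.card_Icc, sub_zero]
    apply Finset.prod_congr rfl
    intro q _
    rw [← Nat.cast_succ, Int.toNat_natCast]
  have hprodW : ∏ q, W q = (N ^ μ * T) ^ (μ+1) := by
    rw [Fintype.prod_prod_type]
    have : ∀ i : Fin (μ+1), ∏ t : Fin 2, W (i, t) = (N ^ 2) ^ (i:ℕ) * T := by
      intro i
      rw [Fin.prod_univ_two]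
      show N ^ (i:ℕ) * (if (0:Fin 2) = 0 then 1 else T) * (N ^ (i:ℕ) * (if (1:Fin 2) = 0 then 1 else T)) = _
      rw [if_pos rfl, if_neg (by decide)]
      ring
    rw [Finset.prod_congr rfl (fun i _ => this i)]
    rw [Finset.prod_mul_distrib, Finset.prod_pow_eq_pow_sum, Fin.sum_univ_eq_sum_range (fun k => k) (μ+1)]
    simp only [Finset.prod_const, Finset.card_univ, Fintype.card_fin]
    rw [mul_pow, ← pow_mul, ← pow_mul]
    congr 2
    have := Finset.sum_range_id_mul_two (μ+1)
    simp at this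
    rw [mul_comm 2, this]; ring
  have hcard : tgt.card < dom.card := by
    have h1 : Z ^ (2 * (μ+1)) < (∏ q, (Z / W q + 1)) * ∏ q, W q := by
      rw [← Finset.prod_mul_distrib]
      calc Z ^ (2 * (μ+1)) = ∏ q : Fin (μ+1) × Fin 2, Z := by
            simp; ring_nf
        _ < _ := by
          have hZ0 : 0 < Z := by
            rcases Nat.eq_zero_or_pos Z with h0 | h0
            · have hpos : 0 < p ^ (2 * μ + 3) * N ^ μ * T := by positivity
              rw [h0] at hZ1; simp at hZ1; omega
            · exact h0
          apply Finset.prod_lt_prod_of_nonempty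
          · intro q _; exact hZ0
          · intro q _
            have := Nat.lt_div_mul_add (a := Z) (hW q)
            rw [add_mul, one_mul]; exact this
          · exact Finset.univ_nonempty
    rw [htgt, hdom]
    rw [hprodW] at h1
    have h2 : p ^ ((μ+1) * (2*μ+3)) * (N ^ μ * T) ^ (μ+1) ≤ Z ^ (2 * (μ+1)) := by
      rw [pow_mul Z, mul_comm (μ+1), pow_mul p, ← mul_pow]
      apply Nat.pow_le_pow_left
      calc _ = p ^ (2 * μ + 3) * N ^ μ * T := by ring
        _ ≤ _ := hZ1
    exact lt_of_mul_lt_mul_right (h2.trans_lt h1) (Nat.zero_le _)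
  obtain ⟨a, ha, b, hb, hab, himab⟩ := Finset.exists_ne_map_eq_of_card_lt_of_maps_to hcard hmaps
  have hcoef : ∀ k : Fin J, (p:ℤ) ^ (J - (k:ℕ)) ∣ ((A (a - b)).comp (X + C x0)).coeff k := by
    intro k
    have := congrFun himab k
    simp only [im] at this
    rw [hAsub, sub_comp, coeff_sub]
    exact Int.ModEq.dvd (Int.ModEq.symm this)
  have hbd : ∀ q, |(a - b) q| * (W q) ≤ Z := by
    intro q
    have h1 := Fintype.mem_piFinset.mp ha q
    have h2 := Fintype.mem_piFinset.mp hb q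
    simp only [Finset.mem_Icc] at h1 h2
    have h3 : |(a - b) q| ≤ ((Z / W q : ℕ) : ℤ) := by
      rw [Pi.sub_apply, abs_le]; constructor <;> linarith
    calc |(a - b) q| * (W q) ≤ ((Z / W q : ℕ) : ℤ) * W q := by gcongr
      _ ≤ Z := by exact_mod_cast Nat.div_mul_le_self Z (W q)
  set c := a - b with hc
  have hc0 : c ≠ 0 := sub_ne_zero.mpr hab
  have hpc : ∀ (u : Fin (μ+1) → ℤ) (i : Fin (μ+1)), (poly u).coeff i = u i := by
    intro u i
    simp only [poly, finsetSum_coeff, coeff_C_mul, coeff_X_pow]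
    rw [Finset.sum_eq_single i]
    · simp
    · intro j _ hj
      have : (i:ℕ) ≠ j := fun h => hj (Fin.ext h.symm)
      simp [this]
    · simp
  have hpd : ∀ (u : Fin (μ+1) → ℤ), (poly u).natDegree ≤ μ := by
    intro u
    apply natDegree_sum_le_of_forall_le
    intro i _
    refine (natDegree_C_mul_X_pow_le _ _).trans ?_
    omega
  have hpe : ∀ (u : Fin (μ+1) → ℤ) (x : ℤ), (poly u).eval x = ∑ i, u i * x ^ (i:ℕ) := by
    intro u x
    simp [poly, eval_finsetSum]
  refine ⟨poly (fun i => c (i,0)), poly (fun i => c (i,1)), hpd _, hpd _, ?_, ?_⟩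
  · by_contra hcon
    push Not at hcon
    apply hc0
    ext ⟨i, t⟩
    have h0 := hpc (fun i => c (i,0)) i
    have h1 := hpc (fun i => c (i,1)) i
    rw [hcon.1] at h0
    rw [hcon.2] at h1
    simp only [coeff_zero] at h0 h1
    fin_cases t
    · exact h0.symm
    · exact h1.symm
  · intro x y hx hy hxx hyg
    obtain ⟨z, hz⟩ := hxx
    have hdv : (p:ℤ)^J ∣ (A c).eval x := by
      have e : (A c).eval x = ((A c).comp (X + C x0)).eval (p * z) := by
        rw [eval_comp]; simp [← hz]
      rw [e, eval_eq_sum_range]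
      apply Finset.dvd_sum
      intro k _
      by_cases hk : k < J
      · rw [mul_pow, ← mul_assoc]
        apply Dvd.dvd.mul_right
        have := mul_dvd_mul (hcoef ⟨k, hk⟩) (dvd_refl ((p:ℤ)^k))
        rwa [← pow_add, Nat.sub_add_cancel hk.le] at this
      · rw [mul_pow]
        apply Dvd.dvd.mul_left
        apply Dvd.dvd.mul_right
        exact pow_dvd_pow _ (by omega)
    have hdv2 : (p:ℤ)^J ∣ (poly (fun i => c (i,0))).eval x + (poly (fun i => c (i,1))).eval x * y := by
      have e : (poly (fun i => c (i,0))).eval x + (poly (fun i => c (i,1))).eval x * y =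
        (A c).eval x + (poly (fun i => c (i,1))).eval x * (y - g.eval x) := by
        simp only [A, eval_add, eval_mul]; ring
      rw [e]
      exact dvd_add hdv (Dvd.dvd.mul_left hyg _)
    apply Int.eq_zero_of_abs_lt_dvd hdv2
    rw [hpe, hpe, Finset.sum_mul, ← Finset.sum_add_distrib]
    calc |∑ i : Fin (μ+1), (c (i,0) * x ^ (i:ℕ) + c (i,1) * x ^ (i:ℕ) * y)|
        ≤ ∑ i : Fin (μ+1), |c (i,0) * x ^ (i:ℕ) + c (i,1) * x ^ (i:ℕ) * y| := Finset.abs_sum_le_sum_abs _ _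
      _ ≤ ∑ i : Fin (μ+1), (2 * Z : ℤ) := by
          apply Finset.sum_le_sum
          intro i _
          have h0 := hbd (i,0)
          have h1 := hbd (i,1)
          simp only [W] at h0 h1
          simp at h0 h1
          have hxp : |x| ^ (i:ℕ) ≤ (N:ℤ) ^ (i:ℕ) := by gcongr
          refine (abs_add_le _ _).trans ?_
          rw [abs_mul, abs_mul, abs_mul, abs_pow]
          have e0 : |c (i,0)| * |x| ^ (i:ℕ) ≤ |c (i,0)| * (N:ℤ) ^ (i:ℕ) := by gcongr
          have e1 : |c (i,1)| * |x| ^ (i:ℕ) * |y| ≤ |c (i,1)| * (N:ℤ) ^ (i:ℕ) * T := by gcongr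
          have e2 : |c (i,1)| * (N:ℤ) ^ (i:ℕ) * T = |c (i,1)| * ((N:ℤ) ^ (i:ℕ) * T) := by ring
          rw [e2] at e1
          linarith [e0.trans h0, e1.trans h1]
      _ = (((2 * μ + 2) * Z : ℕ) : ℤ) := by simp; ring
      _ < _ := by rw [hJ]; exact_mod_cast hZ2


lemma root_bound {g : ℤ[X]} (hg : g.Monic) (M : ℝ) (hM : 1 ≤ M) (h : ∀ k, |((g.coeff k : ℤ) : ℝ)| ≤ M)
    {y : ℤ} (hy : g.eval y = 0) : |(y:ℝ)| ≤ 2 * M := by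
  have hG : (g.map (Int.castRingHom ℝ)).Monic := hg.map _
  have hr : (g.map (Int.castRingHom ℝ)).IsRoot (y:ℝ) := by
    rw [IsRoot.def, eval_intCast_map]; simp [hy]
  have h1 := IsRoot.norm_lt_cauchyBound hG.ne_zero hr
  have h2 : cauchyBound (g.map (Int.castRingHom ℝ)) ≤ Real.toNNReal M + 1 := by
    unfold cauchyBound
    rw [hG.leadingCoeff]
    simp only [nnnorm_one, div_one]
    gcongr
    apply Finset.sup_le
    intro k _
    rw [← NNReal.coe_le_coe, Real.coe_toNNReal _ (by linarith)]
    simpa using h k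
  have h3 : ((cauchyBound (g.map (Int.castRingHom ℝ)) : NNReal):ℝ) ≤ M + 1 := by
    rw [← NNReal.coe_le_coe] at h2
    rw [NNReal.coe_add, Real.coe_toNNReal _ (by linarith)] at h2
    simpa using h2
  rw [← NNReal.coe_lt_coe, coe_nnnorm, Real.norm_eq_abs] at h1
  linarith

lemma class_count (f : ℤ[X][X]) (hf : f.Monic) (δ : ℕ) (hd : f.natDegree ≤ δ) (hc : ∀ k, (f.coeff k).natDegree ≤ δ)
    (p N T μ : ℕ) (hp : 2 ≤ p) (hN : 1 ≤ N) (hT : 1 ≤ T) (h16 : 16 * N ≤ p ^ 2)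
    (hμ : 16 * T ≤ 4 ^ μ) (x0 y0 v : ℤ) (hv : (p:ℤ) ∣ 1 - v * ((derivative f).map (evalRingHom x0)).eval y0)
    (S : Finset ℤ) (hS : ∀ x ∈ S, |x| ≤ N ∧ (p:ℤ) ∣ x - x0 ∧ ∃ y : ℤ, |y| ≤ T ∧ (p:ℤ) ∣ y - y0 ∧
      (f.map (evalRingHom x)).eval y = 0 ∧ ∀ q : ℤ[X], f.eval q = 0 → q.eval x ≠ y) :
    S.card ≤ δ + δ * μ + μ := by
  obtain ⟨g, hg⟩ := hensel_poly (p:ℤ) f x0 y0 v hv (2 * μ + 1)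
  obtain ⟨A0, A1, hA0, hA1, hne, hA⟩ := siegel p N T μ hp hN hT h16 hμ g x0
  have key : ∀ x ∈ S, ∃ y : ℤ, A0.eval x + A1.eval x * y = 0 ∧ (f.map (evalRingHom x)).eval y = 0 ∧
      ∀ q : ℤ[X], f.eval q = 0 → q.eval x ≠ y := by
    intro x hx
    obtain ⟨h1, h2, y, h3, h4, h5, h6⟩ := hS x hx
    exact ⟨y, hA x y h1 h3 h2 (hg x y h2 h4 h5), h5, h6⟩
  set d := f.natDegree with hdd
  set W : ℤ[X] := ∑ k ∈ Finset.range (d + 1), f.coeff k * (-A0) ^ k * A1 ^ (d - k) with hW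
  have hWd : W.natDegree ≤ δ + δ * μ := by
    apply natDegree_sum_le_of_forall_le
    intro k hk
    have hk' : k ≤ d := by simpa [Nat.lt_succ_iff] using hk
    have e1 : ((-A0) ^ k).natDegree ≤ k * μ := by
      refine natDegree_pow_le.trans ?_
      rw [natDegree_neg]; gcongr
    have e2 : (A1 ^ (d - k)).natDegree ≤ (d - k) * μ := natDegree_pow_le.trans (by gcongr)
    have e3 : k * μ + (d - k) * μ = d * μ := by rw [← add_mul]; congr 1; omega
    have e4 : d * μ ≤ δ * μ := by gcongr
    have := hc k
    refine natDegree_mul_le.trans ?_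
    have := natDegree_mul_le (p := f.coeff k) (q := (-A0)^k)
    omega
  have hWx : ∀ x ∈ S, W.eval x = 0 := by
    intro x hx
    obtain ⟨y, h1, h2, -⟩ := key x hx
    have hA0x : A0.eval x = - (A1.eval x * y) := by linarith
    have : W.eval x = (A1.eval x) ^ d * (f.map (evalRingHom x)).eval y := by
      rw [eval_eq_sum_range (x := y), hf.natDegree_map, hW, eval_finsetSum, Finset.mul_sum]
      apply Finset.sum_congr rfl
      intro k hk
      have hk' : k ≤ d := by simpa [Nat.lt_succ_iff] using hk
      simp only [eval_mul, eval_pow, eval_neg, hA0x, neg_neg, coeff_map, coe_evalRingHom, mul_pow]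
      have : eval x A1 ^ d = eval x A1 ^ k * eval x A1 ^ (d - k) := by rw [← pow_add]; congr 1; omega
      rw [this]; ring
    rw [this, h2, mul_zero]
  have hcard : ∀ Q : ℤ[X], Q ≠ 0 → (∀ x ∈ S, Q.eval x = 0) → S.card ≤ Q.natDegree := by
    intro Q hQ hx
    by_contra hlt
    push Not at hlt
    exact hQ (eq_zero_of_natDegree_lt_card_of_eval_eq_zero' Q S hx hlt)
  by_cases hW0 : W = 0
  · have hA1 : A1 ≠ 0 := by
      rintro rfl
      have : W = (-A0) ^ d := by
        rw [hW, Finset.sum_range_succ, Finset.sum_eq_zero]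
        · simp [hdd, hf.coeff_natDegree]
        · intro k hk
          have hk' : k < d := by simpa using hk
          rw [zero_pow (by omega), mul_zero]
      rw [this] at hW0
      rcases hne with h | h
      · have := pow_ne_zero d (neg_ne_zero.mpr h)
        exact this hW0
      · exact h rfl
    set ψ := algebraMap ℤ[X] (FractionRing ℤ[X])
    have hinj : Function.Injective ψ := IsFractionRing.injective _ _
    have hA1' : ψ A1 ≠ 0 := (map_ne_zero_iff ψ hinj).mpr hA1
    obtain ⟨r, -, hr, hAr⟩ := int_closed_root ψ hinj f hf (ψ (-A0) / ψ A1) (by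
      have h0 : ψ A1 ^ d * (f.map ψ).eval (ψ (-A0) / ψ A1) = ψ W := by
        rw [eval_eq_sum_range, hf.natDegree_map, hW, map_sum, Finset.mul_sum]
        apply Finset.sum_congr rfl
        intro k hk
        have hk' : k ≤ d := by simpa [Nat.lt_succ_iff] using hk
        have : ψ A1 ^ d = ψ A1 ^ k * ψ A1 ^ (d - k) := by rw [← pow_add]; congr 1; omega
        rw [this]
        simp only [map_mul, map_pow, coeff_map]
        rw [div_pow]
        field_simp
      rw [hW0, map_zero] at h0
      exact (mul_eq_zero.mp h0).resolve_left (pow_ne_zero _ hA1')) (-A0) A1 hA1 (by field_simp)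
    refine (hcard A1 hA1 ?_).trans (by omega)
    intro x hx
    obtain ⟨y, h1, -, h3⟩ := key x hx
    have h4 := h3 r hr
    have h5 := congrArg (eval x) hAr
    rw [eval_mul, eval_neg] at h5
    by_contra h6
    exact h4 (mul_left_cancel₀ h6 (by linarith))
  · exact (hcard W hW0 hWx).trans (by omega)

lemma class_box (N p : ℕ) (hp : 0 < p) (x0 : ℤ) (S : Finset ℤ) (hS : ∀ x ∈ S, |x| ≤ N ∧ (p:ℤ) ∣ x - x0) :
    S.card ≤ 2 * N / p + 1 := by
  have : S.card ≤ (Finset.Icc (0:ℤ) ((2*N/p : ℕ):ℤ)).card := by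
    apply Finset.card_le_card_of_injOn (fun x : ℤ => (x + (N:ℤ)) / (p:ℤ))
    · intro x hx
      obtain ⟨h1, -⟩ := hS x hx
      rw [abs_le] at h1
      simp only [Finset.coe_Icc, Set.mem_Icc]
      refine ⟨Int.ediv_nonneg (by omega) (by omega), ?_⟩
      push_cast
      apply Int.ediv_le_ediv (by exact_mod_cast hp)
      omega
    · intro x hx y hy hxy
      obtain ⟨-, h1⟩ := hS x hx
      obtain ⟨-, h2⟩ := hS y hy
      simp only at hxy
      have hm : (x + N) % p = (y + N) % p := by
        apply Int.emod_emod_of_dvd .. |>.symm.trans _ <;> try exact dvd_rfl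
        rw [Int.emod_emod_of_dvd _ dvd_rfl]
        apply Int.ModEq.eq
        rw [Int.modEq_iff_dvd]
        have : y + N - (x + N) = (y - x0) - (x - x0) := by ring
        rw [this]; exact dvd_sub h2 h1
      have e1 := Int.mul_ediv_add_emod (x + N) p
      have e2 := Int.mul_ediv_add_emod (y + N) p
      rw [hxy, hm] at e1
      linarith
  rw [Int.card_Icc] at this
  generalize 2 * N / p = k at this ⊢
  omega

lemma log_ge_one {H : ℝ} (hH : 3 ≤ H) : 1 ≤ Real.log H := by
  rw [Real.le_log_iff_exp_le (by linarith)]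
  linarith [Real.exp_one_lt_d9]

/-- counting with a good prime -/
lemma count_prime (f : ℤ[X][X]) (hf : f.Monic) (δ : ℕ) (hd : f.natDegree ≤ δ) (hc : ∀ k, (f.coeff k).natDegree ≤ δ)
    (hn0 : f.natDegree ≠ 0)
    (p N T μ : ℕ) (hp : p.Prime) (hN : 1 ≤ N) (hT : 1 ≤ T) (h16 : 16 * N ≤ p ^ 2)
    (hμ : 16 * T ≤ 4 ^ μ) (a : ℕ) (ha : (Dsc f).natDegree ≤ a) (xs : ℤ) (hxs : ¬ (p:ℤ) ∣ (Dsc f).eval xs)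
    (S : Finset ℤ) (hS : ∀ x ∈ S, |x| ≤ N ∧ ∃ y : ℤ, |y| ≤ T ∧
      (f.map (evalRingHom x)).eval y = 0 ∧ ∀ q : ℤ[X], f.eval q = 0 → q.eval x ≠ y) :
    S.card ≤ (2 * N / p + 1) * a + (δ + δ * μ + μ) * (p * δ) := by
  classical
  have : Fact p.Prime := ⟨hp⟩
  have hdvd : ∀ x y : ℤ, (x : ZMod p) = y ↔ (p:ℤ) ∣ x - y := by
    intro x y
    rw [← ZMod.intCast_zmod_eq_zero_iff_dvd]; simp [sub_eq_zero]
  choose! y hy using fun x hx => (hS x hx).2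
  rw [← Finset.card_filter_add_card_filter_not (s := S) (fun x => (p:ℤ) ∣ (Dsc f).eval x)]
  apply Nat.add_le_add
  · set Δ : (ZMod p)[X] := (Dsc f).map (Int.castRingHom (ZMod p)) with hΔ
    have hev : ∀ x : ℤ, Δ.eval (x : ZMod p) = (((Dsc f).eval x : ℤ) : ZMod p) := by
      intro x; rw [hΔ, eval_intCast_map]; simp
    have hΔ0 : Δ ≠ 0 := by
      intro h0
      apply hxs
      rw [← ZMod.intCast_zmod_eq_zero_iff_dvd, ← hev, h0]; simp
    refine (Finset.card_le_mul_card_image_of_maps_to (t := Δ.roots.toFinset) (f := fun x : ℤ => (x : ZMod p)) ?_ (2 * N / p + 1) ?_).trans ?_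
    · intro x hx
      rw [Finset.mem_filter] at hx
      rw [Multiset.mem_toFinset, mem_roots hΔ0, IsRoot.def, hev, ZMod.intCast_zmod_eq_zero_iff_dvd]
      exact hx.2
    · intro r _
      obtain ⟨x0, rfl⟩ := ZMod.intCast_surjective r
      apply class_box N p hp.pos x0
      intro x hx
      simp only [Finset.mem_filter] at hx
      exact ⟨(hS x hx.1.1).1, (hdvd _ _).1 hx.2⟩
    · gcongr
      calc _ ≤ Multiset.card Δ.roots := Multiset.toFinset_card_le _
        _ ≤ Δ.natDegree := card_roots' _
        _ ≤ _ := natDegree_map_le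
        _ ≤ a := ha
  · let φ : ZMod p → (ℤ[X] →+* ZMod p) := fun r => eval₂RingHom (Int.castRingHom (ZMod p)) r
    have hφ : ∀ x : ℤ, φ x = (Int.castRingHom (ZMod p)).comp (evalRingHom x) := by
      intro x
      apply Polynomial.ringHom_ext
      · intro n; simp [φ]
      · simp [φ]
    set t : Finset (ZMod p × ZMod p) := Finset.univ.biUnion (fun r => (f.map (φ r)).roots.toFinset.image (fun s => (r, s))) with ht
    refine (Finset.card_le_mul_card_image_of_maps_to (t := t) (f := fun x : ℤ => ((x : ZMod p), (y x : ZMod p))) ?_ (δ + δ * μ + μ) ?_).trans ?_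
    · intro x hx
      rw [Finset.mem_filter] at hx
      rw [ht, Finset.mem_biUnion]
      refine ⟨(x : ZMod p), Finset.mem_univ _, ?_⟩
      rw [Finset.mem_image]
      refine ⟨(y x : ZMod p), ?_, rfl⟩
      rw [Multiset.mem_toFinset, mem_roots (hf.map _).ne_zero, IsRoot.def, hφ, ← Polynomial.map_map, eval_intCast_map]
      have := (hy x hx.1).2.1
      simp [this]
    · rintro ⟨r, s⟩ _
      rcases Finset.eq_empty_or_nonempty (Finset.filter (fun a : ℤ => ((a : ZMod p), (y a : ZMod p)) = (r, s)) (Finset.filter (fun x : ℤ => ¬(p:ℤ) ∣ eval x (Dsc f)) S)) with h0 | ⟨x1, hx1⟩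
      · rw [h0]; simp
      simp only [Finset.mem_filter, Prod.mk.injEq] at hx1
      obtain ⟨⟨hx1S, hx1D⟩, hr, hs⟩ := hx1
      obtain ⟨u, w, huw⟩ := Dsc_bezout f hn0
      have h1 := congrArg (fun P : ℤ[X][X] => (P.map (evalRingHom x1)).eval (y x1)) huw
      simp only [Polynomial.map_add, Polynomial.map_mul, eval_add, eval_mul, map_C, eval_C, (hy x1 hx1S).2.1, zero_mul, zero_add, coe_evalRingHom] at h1
      have hcop : IsCoprime (p:ℤ) ((Dsc f).eval x1) := by
        rw [Prime.coprime_iff_not_dvd (Nat.prime_iff_prime_int.mp hp)]; exact hx1D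
      obtain ⟨b, c, hbc⟩ := hcop
      apply class_count f hf δ hd hc p N T μ hp.two_le hN hT h16 hμ x1 (y x1)
        (c * ((w.map (evalRingHom x1)).eval (y x1)))
      · refine ⟨b, ?_⟩
        rw [← hbc, ← h1]; ring
      · intro x hx
        simp only [Finset.mem_filter, Prod.mk.injEq] at hx
        obtain ⟨⟨hxS, hxD⟩, hr', hs'⟩ := hx
        exact ⟨(hS x hxS).1, (hdvd _ _).1 (hr'.trans hr.symm), y x, (hy x hxS).1, (hdvd _ _).1 (hs'.trans hs.symm), (hy x hxS).2⟩
    · gcongr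
      calc t.card ≤ (Finset.univ : Finset (ZMod p)).card * δ := by
            apply Finset.card_biUnion_le_card_mul
            intro r _
            refine Finset.card_image_le.trans ?_
            calc _ ≤ Multiset.card (f.map (φ r)).roots := Multiset.toFinset_card_le _
              _ ≤ _ := card_roots' _
              _ ≤ _ := natDegree_map_le
              _ ≤ δ := hd
        _ = p * δ := by simp [ZMod.card]

set_option maxHeartbeats 1000000 in
theorem P4 (δ : ℕ) : ∃ C : ℝ, 0 < C ∧ ∀ f : ℤ[X][X], f.Monic → f.natDegree ≤ δ → Dsc f ≠ 0 →
    ∀ H : ℝ, 3 ≤ H → (∀ k (x : ℤ), |(((f.coeff k).eval x : ℤ) : ℝ)| ≤ H * (1 + |(x:ℝ)|) ^ δ) →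
    ∀ N : ℕ, 1 ≤ N → (N:ℝ) ≤ H → ∀ S : Finset ℤ, (∀ x ∈ S, |x| ≤ N ∧ ∃ y : ℤ,
      (f.map (evalRingHom x)).eval y = 0 ∧ ∀ q : ℤ[X], f.eval q = 0 → q.eval x ≠ y) →
    (S.card : ℝ) ≤ C * Real.log H ^ 2 * √N := by
  set a := δ * (2 * δ) with ha
  set K : ℝ := (2 * δ).factorial * ((δ + 1) * (1 + a) ^ δ) ^ (2 * δ) with hK
  set C1 : ℝ := |Real.log K| + 2 * δ with hC1
  set C2 : ℝ := 50 ^ 4 * (4 + C1) with hC2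
  refine ⟨2 * a + (δ + (δ + 1) * (2 * δ + 7)) * (C2 * δ) + 1, by positivity, ?_⟩
  intro f hf hd hD H hH hgr N hN hNH S hS
  have hL := log_ge_one hH
  set L := Real.log H with hLdef
  have hsq : 1 ≤ √(N:ℝ) := by rw [Real.one_le_sqrt]; exact_mod_cast hN
  have hLsq : 1 ≤ L ^ 2 := one_le_pow₀ hL
  by_cases hn0 : f.natDegree = 0
  · have : S = ∅ := by
      rw [Finset.eq_empty_iff_forall_notMem]
      intro x hx
      obtain ⟨-, y, h1, -⟩ := hS x hx
      rw [hf.natDegree_eq_zero.mp hn0] at h1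
      simp at h1
    rw [this]; simp; positivity
  have hc : ∀ k, (f.coeff k).natDegree ≤ δ := fun k => uni_growth _ H δ (hgr k)
  have hone : ∀ x : ℤ, 1 ≤ H * (1 + |(x:ℝ)|) ^ δ := by
    intro x
    have : 1 ≤ (1 + |(x:ℝ)|) ^ δ := one_le_pow₀ (by linarith [abs_nonneg (x:ℝ)])
    nlinarith
  have hDb : ∀ x : ℤ, |(((Dsc f).eval x : ℤ) : ℝ)| ≤ (2 * δ).factorial * ((δ + 1) * (H * (1 + |(x:ℝ)|) ^ δ)) ^ (2 * δ) := by
    intro x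
    have h1 := Dsc_map (evalRingHom x) f hf
    rw [coe_evalRingHom] at h1
    rw [← h1]
    apply Dsc_bound
    · exact natDegree_map_le.trans hd
    · exact hone x
    · intro k; rw [coeff_map]; exact hgr k x
  have hDd : (Dsc f).natDegree ≤ a := by
    apply uni_growth _ ((2 * δ).factorial * ((δ + 1) * H) ^ (2 * δ)) a
    intro s
    refine (hDb s).trans (le_of_eq ?_)
    rw [ha, pow_mul (1 + |(s:ℝ)|), mul_assoc _ (_ ^ _), ← mul_pow, mul_assoc]
  obtain ⟨xs, hxs0, hxsa, hxs⟩ : ∃ xs : ℤ, 0 ≤ xs ∧ xs ≤ a ∧ (Dsc f).eval xs ≠ 0 := by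
    by_contra hcon
    push Not at hcon
    apply hD
    apply eq_zero_of_natDegree_lt_card_of_eval_eq_zero' (Dsc f) (Finset.Icc (0:ℤ) a)
    · intro x hx; rw [Finset.mem_Icc] at hx; exact hcon x hx.1 hx.2
    · simp; omega
  obtain ⟨p, hp, hp1, hp2, hp3⟩ := exists_prime (4 * √N) (by linarith) _ hxs
  have hK0 : 0 < K := by positivity
  have hlogc : Real.log |(((Dsc f).eval xs : ℤ) : ℝ)| ≤ C1 * L := by
    have h1 : |(((Dsc f).eval xs : ℤ) : ℝ)| ≤ K * H ^ (2 * δ) := by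
      refine (hDb xs).trans ?_
      have : |(xs:ℝ)| ≤ a := by rw [abs_of_nonneg (by exact_mod_cast hxs0)]; exact_mod_cast hxsa
      calc _ ≤ (2 * δ).factorial * ((δ + 1) * (H * (1 + (a:ℝ)) ^ δ)) ^ (2 * δ) := by gcongr
        _ = _ := by rw [hK, mul_assoc, ← mul_pow]; ring_nf
    have h2 : 0 < |(((Dsc f).eval xs : ℤ) : ℝ)| := by
      rw [abs_pos]; exact_mod_cast hxs
    have h3 := Real.log_le_log h2 h1
    rw [Real.log_mul hK0.ne' (by positivity), Real.log_pow] at h3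
    push_cast at h3
    have h4 := le_abs_self (Real.log K)
    have h5 := abs_nonneg (Real.log K)
    rw [hC1]
    nlinarith
  have hC10 : 0 ≤ C1 := by positivity
  have hpb : (p:ℝ) ≤ C2 * √N * L := by
    refine hp2.trans ?_
    rw [hC2]
    have e1 : 4 * √(N:ℝ) ≤ 4 * (√N * L) := by nlinarith
    have e2 : C1 * L ≤ C1 * (√N * L) := by gcongr; nlinarith
    nlinarith
  have h16 : 16 * N ≤ p ^ 2 := by
    have : (16:ℝ) * N ≤ (p:ℝ) ^ 2 := by
      calc (16:ℝ) * N = (4 * √N) ^ 2 := by rw [mul_pow, Real.sq_sqrt (by positivity)]; norm_num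
        _ ≤ _ := by gcongr
    exact_mod_cast this
  set M : ℝ := H * (1 + (N:ℝ)) ^ δ with hM
  have hM1 : 1 ≤ M := by simpa using hone (N:ℤ)
  set T := ⌈2 * M⌉₊ with hT
  set μ := ⌈(2 * δ + 6) * L⌉₊ with hμ
  have hNH2 : 1 + (N:ℝ) ≤ H ^ 2 := by nlinarith
  have hMH : M ≤ H ^ (2 * δ + 1) := by
    rw [hM, pow_succ, pow_mul, mul_comm]; gcongr
  have hTH : (16:ℝ) * T ≤ H ^ (2 * δ + 6) := by
    have h1 := Nat.ceil_lt_add_one (show 0 ≤ 2 * M by linarith)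
    rw [← hT] at h1
    have h3 : (H:ℝ) ^ (2 * δ + 6) = H ^ 5 * H ^ (2 * δ + 1) := by rw [← pow_add]; congr 1; omega
    have h4 : (3:ℝ) ^ 5 ≤ H ^ 5 := by gcongr
    rw [h3]
    nlinarith
  have hTμ : 16 * T ≤ 4 ^ μ := by
    have h1 : (16:ℝ) * T ≤ 4 ^ μ := by
      refine hTH.trans ?_
      have h2 : H ^ (2 * δ + 6) = Real.exp ((2 * δ + 6) * L) := by
        have h2' : ((2:ℝ) * δ + 6) * L = ((2 * δ + 6 : ℕ) : ℝ) * L := by push_cast; ring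
        rw [h2', Real.exp_nat_mul, hLdef, Real.exp_log (by linarith)]
      rw [h2]
      calc _ ≤ Real.exp μ := by
            apply Real.exp_le_exp.mpr; exact Nat.le_ceil _
        _ = Real.exp 1 ^ μ := by rw [← Real.exp_nat_mul, mul_one]
        _ ≤ 4 ^ μ := by
            gcongr
            linarith [Real.exp_one_lt_d9]
    exact_mod_cast h1
  have hμL : (μ:ℝ) ≤ (2 * δ + 7) * L := by
    have := Nat.ceil_lt_add_one (show 0 ≤ (2 * (δ:ℝ) + 6) * L by positivity)
    rw [← hμ] at this
    nlinarith
  have hT1 : 1 ≤ T := by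
    rw [hT, Nat.one_le_ceil_iff]; linarith
  have hmain := count_prime f hf δ hd hc hn0 p N T μ hp hN hT1 h16 hTμ a hDd xs hp3 S (by
    intro x hx
    obtain ⟨h1, y, h2, h3⟩ := hS x hx
    refine ⟨h1, y, ?_, h2, h3⟩
    have hxN : |(x:ℝ)| ≤ N := by exact_mod_cast h1
    have h4 := root_bound (hf.map (evalRingHom x)) M hM1 (by
      intro k
      rw [coeff_map]
      refine (hgr k x).trans ?_
      rw [hM]; gcongr) h2
    have h5 : |(y:ℝ)| ≤ T := h4.trans (Nat.le_ceil _)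
    exact_mod_cast h5)
  have hr : (S.card:ℝ) ≤ (((2 * N / p : ℕ):ℝ) + 1) * a + (δ + δ * μ + μ) * (p * δ) := by exact_mod_cast hmain
  refine hr.trans ?_
  have hp0 : (0:ℝ) < p := by exact_mod_cast hp.pos
  have f1 : ((2 * N / p : ℕ):ℝ) + 1 ≤ 2 * √N := by
    have : ((2 * N / p : ℕ):ℝ) ≤ (2 * N : ℕ) / p := Nat.cast_div_le
    have h2 : ((2 * N : ℕ):ℝ) / p ≤ √N := by
      rw [div_le_iff₀ hp0]
      push_cast
      have h3 := Real.mul_self_sqrt (show (0:ℝ) ≤ N by positivity)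
      have h4 : √(N:ℝ) * (4 * √N) ≤ √N * p := by gcongr
      have h5 : (0:ℝ) ≤ N := by positivity
      linarith
    linarith
  have f2 : ((δ:ℝ) + δ * μ + μ) ≤ (δ + (δ + 1) * (2 * δ + 7)) * L := by
    have : ((δ:ℝ) + 1) * μ ≤ (δ + 1) * ((2 * δ + 7) * L) := by gcongr
    have hδ : (0:ℝ) ≤ δ := by positivity
    nlinarith
  have hLs : 2 * √(N:ℝ) * a ≤ 2 * a * L ^ 2 * √N := by
    have : 0 ≤ 2 * (a:ℝ) * √N := by positivity
    nlinarith
  calc _ ≤ 2 * √N * a + ((δ + (δ + 1) * (2 * δ + 7)) * L) * ((C2 * √N * L) * δ) := by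
        gcongr
    _ ≤ 2 * a * L ^ 2 * √N + ((δ + (δ + 1) * (2 * δ + 7)) * (C2 * δ)) * L ^ 2 * √N := by
        have : ((δ + (δ + 1) * (2 * δ + 7)) * L) * ((C2 * √N * L) * δ) = ((δ + (δ + 1) * (2 * δ + 7)) * (C2 * δ)) * L ^ 2 * √N := by ring
        linarith
    _ ≤ _ := by
        have : 0 ≤ L ^ 2 * √(N:ℝ) := by positivity
        nlinarith


/-- specialise all variables but the `i`-th -/
def spec {m : ℕ} (i : Fin (m+1)) (x : Fin m → ℤ) : MvPolynomial (Fin (m+1)) ℤ →+* ℤ[X] :=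
  MvPolynomial.eval₂Hom C (i.insertNth X (fun j => C (x j)))

/-- specialise the `i`-th variable -/
def sp {m : ℕ} (i : Fin (m+1)) (a : ℤ) : MvPolynomial (Fin (m+1)) ℤ →+* MvPolynomial (Fin m) ℤ :=
  MvPolynomial.eval₂Hom MvPolynomial.C (i.insertNth (MvPolynomial.C a) MvPolynomial.X)

lemma spec_comp {m : ℕ} (i : Fin (m+1)) (x : Fin m → ℤ) (s : ℤ) :
    (evalRingHom s).comp (spec i x) = MvPolynomial.eval (i.insertNth s x) := by
  apply MvPolynomial.ringHom_ext
  · intro r; simp [spec]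
  · intro j
    refine Fin.succAboveCases i ?_ ?_ j
    · simp [spec]
    · intro k; simp [spec]

lemma sp_comp {m : ℕ} (i : Fin (m+1)) (x : Fin m → ℤ) (a : ℤ) :
    (MvPolynomial.eval x).comp (sp i a) = MvPolynomial.eval (i.insertNth a x) := by
  apply MvPolynomial.ringHom_ext
  · intro r; simp [sp]
  · intro j
    refine Fin.succAboveCases i ?_ ?_ j
    · simp [sp]
    · intro k; simp [sp]

lemma spec_eval {m : ℕ} (i : Fin (m+1)) (x : Fin m → ℤ) (s : ℤ) (p : MvPolynomial (Fin (m+1)) ℤ) :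
    (spec i x p).eval s = MvPolynomial.eval (i.insertNth s x) p := by
  rw [← spec_comp]; rfl

lemma sp_eval {m : ℕ} (i : Fin (m+1)) (x : Fin m → ℤ) (a : ℤ) (p : MvPolynomial (Fin (m+1)) ℤ) :
    MvPolynomial.eval x (sp i a p) = MvPolynomial.eval (i.insertNth a x) p := by
  rw [← sp_comp]; rfl

lemma spec_rename {m : ℕ} (i : Fin (m+1)) (x : Fin m → ℤ) (p : MvPolynomial (Fin m) ℤ) :
    spec i x (MvPolynomial.rename i.succAbove p) = C (MvPolynomial.eval x p) := by
  have : (spec i x).comp (MvPolynomial.rename i.succAbove : MvPolynomial (Fin m) ℤ →ₐ[ℤ] _).toRingHom = C.comp (MvPolynomial.eval x) := by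
    apply MvPolynomial.ringHom_ext
    · intro r; simp [spec]
    · intro j; simp [spec]
  exact DFunLike.congr_fun this p

lemma spec_aeval {m : ℕ} (i : Fin (m+1)) (x : Fin m → ℤ) (g : ℤ[X]) :
    spec i x (aeval (MvPolynomial.X i) g) = g := by
  have : (spec i x).comp (aeval (MvPolynomial.X i : MvPolynomial (Fin (m+1)) ℤ)).toRingHom = RingHom.id ℤ[X] := by
    apply Polynomial.ringHom_ext
    · intro r; simp [spec]
    · simp [spec]
  exact DFunLike.congr_fun this g

lemma insertNth_removeNth {m : ℕ} (i : Fin (m+1)) (x : Fin (m+1) → ℤ) :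
    (i.insertNth (x i) (i.removeNth x) : Fin (m+1) → ℤ) = x := by
  simp

lemma Grw.spec {m : ℕ} {p : MvPolynomial (Fin (m+1)) ℤ} {A : ℝ} {a : ℕ} (h : Grw p A a) (i : Fin (m+1))
    (x : Fin m → ℤ) (s : ℤ) :
    |(((spec i x p).eval s : ℤ) : ℝ)| ≤ A * wt x ^ a * (1 + |(s:ℝ)|) ^ a := by
  rw [spec_eval]
  refine (h _).trans (le_of_eq ?_)
  rw [wt_insertNth, mul_pow]; ring

lemma Grw.sp {m : ℕ} {p : MvPolynomial (Fin (m+1)) ℤ} {A : ℝ} {a : ℕ} (h : Grw p A a) (i : Fin (m+1))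
    (c : ℤ) : Grw (sp i c p) (A * (1 + |(c:ℝ)|) ^ a) a := by
  intro x
  rw [sp_eval]
  refine (h _).trans (le_of_eq ?_)
  rw [wt_insertNth, mul_pow]; ring

/-- polynomial growth without control of the constant -/
def GE {n : ℕ} (p : MvPolynomial (Fin n) ℤ) (a : ℕ) : Prop := ∃ A, Grw p A a

lemma Grw.mono {n : ℕ} {p : MvPolynomial (Fin n) ℤ} {A A' : ℝ} {a b : ℕ} (h : Grw p A a) (hA : A ≤ A') (hab : a ≤ b) :
    Grw p A' b := by
  intro x
  have := h.nonneg
  have h1 := one_le_wt x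
  have h2 : wt x ^ a ≤ wt x ^ b := pow_le_pow_right₀ h1 hab
  refine (h x).trans ?_
  have h3 : 0 ≤ A' := this.trans hA
  gcongr

lemma GE.mono {n : ℕ} {p : MvPolynomial (Fin n) ℤ} {a b : ℕ} (h : GE p a) (hab : a ≤ b) : GE p b := by
  obtain ⟨A, hA⟩ := h
  exact ⟨A, hA.mono le_rfl hab⟩

lemma GE.add {n : ℕ} {p q : MvPolynomial (Fin n) ℤ} {a : ℕ} (h : GE p a) (h' : GE q a) : GE (p + q) a := by
  obtain ⟨A, hA⟩ := h
  obtain ⟨B, hB⟩ := h'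
  refine ⟨A + B, fun x => ?_⟩
  rw [map_add, Int.cast_add, add_mul]
  exact (abs_add_le _ _).trans (add_le_add (hA x) (hB x))

lemma GE.mul {n : ℕ} {p q : MvPolynomial (Fin n) ℤ} {a b : ℕ} (h : GE p a) (h' : GE q b) : GE (p * q) (a + b) := by
  obtain ⟨A, hA⟩ := h
  obtain ⟨B, hB⟩ := h'
  refine ⟨A * B, fun x => ?_⟩
  rw [map_mul, Int.cast_mul, abs_mul, pow_add]
  calc _ ≤ (A * wt x ^ a) * (B * wt x ^ b) := mul_le_mul (hA x) (hB x) (abs_nonneg _) ((abs_nonneg _).trans (hA x))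
    _ = _ := by ring

lemma GE.const {n : ℕ} (c : ℤ) (a : ℕ) : GE (MvPolynomial.C c : MvPolynomial (Fin n) ℤ) a := by
  refine ⟨|c|, fun x => ?_⟩
  simp only [MvPolynomial.eval_C]
  have : 1 ≤ wt x ^ a := one_le_pow₀ (one_le_wt x)
  rw [← Int.cast_abs]
  have h2 : (0:ℝ) ≤ (|c| : ℤ) := by positivity
  nlinarith

lemma GE.pow {n : ℕ} {p : MvPolynomial (Fin n) ℤ} {a : ℕ} (h : GE p a) (k : ℕ) : GE (p ^ k) (a * k) := by
  induction k with
  | zero => simpa using GE.const (n := n) 1 0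
  | succ k ih => rw [pow_succ, mul_add, mul_one]; exact ih.mul h

lemma GE.sum {n : ℕ} {ι : Type*} (s : Finset ι) (p : ι → MvPolynomial (Fin n) ℤ) {a : ℕ} (h : ∀ i ∈ s, GE (p i) a) :
    GE (∑ i ∈ s, p i) a := by
  classical
  induction s using Finset.induction_on with
  | empty => simpa using GE.const (n := n) 0 a
  | insert i s hi ih =>
    rw [Finset.sum_insert hi]
    exact (h i (Finset.mem_insert_self i s)).add (ih fun j hj => h j (Finset.mem_insert_of_mem hj))

lemma wt_removeNth {m : ℕ} (i : Fin (m+1)) (x : Fin (m+1) → ℤ) : wt (i.removeNth x) ≤ wt x := by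
  conv_rhs => rw [← insertNth_removeNth i x, wt_insertNth]
  have := one_le_wt (i.removeNth x)
  nlinarith [abs_nonneg (x i : ℝ)]

lemma coord_le_wt {n : ℕ} (i : Fin n) (x : Fin n → ℤ) : |(x i : ℝ)| ≤ wt x := by
  unfold wt
  rw [← Finset.mul_prod_erase _ _ (Finset.mem_univ i)]
  have h : ∏ j ∈ Finset.univ.erase i, (1:ℝ) ≤ ∏ j ∈ Finset.univ.erase i, (1 + |(x j : ℝ)|) := by
    apply Finset.prod_le_prod
    · intro j _; positivity
    · intro j _; linarith [abs_nonneg (x j : ℝ)]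
  rw [Finset.prod_const_one] at h
  nlinarith [abs_nonneg (x i : ℝ)]

lemma GE.X {n : ℕ} (i : Fin n) : GE (MvPolynomial.X i : MvPolynomial (Fin n) ℤ) 1 := by
  refine ⟨1, fun x => ?_⟩
  simpa using coord_le_wt i x

lemma GE.rename {m : ℕ} {p : MvPolynomial (Fin m) ℤ} {a : ℕ} (h : GE p a) (i : Fin (m+1)) :
    GE (MvPolynomial.rename i.succAbove p) a := by
  obtain ⟨A, hA⟩ := h
  refine ⟨A, fun x => ?_⟩
  rw [MvPolynomial.eval_rename]
  refine (hA _).trans ?_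
  have := hA.nonneg
  have h2 := wt_removeNth i x
  have h3 := one_le_wt (i.removeNth x)
  gcongr
  exact h2

lemma GE.aeval {n : ℕ} (i : Fin n) (g : ℤ[X]) (a : ℕ) (hg : g.natDegree ≤ a) :
    GE (aeval (MvPolynomial.X i : MvPolynomial (Fin n) ℤ) g) a := by
  rw [aeval_eq_sum_range]
  apply GE.sum
  intro k hk
  rw [MvPolynomial.smul_eq_C_mul]
  have hk' : k ≤ g.natDegree := by simpa [Nat.lt_succ_iff] using hk
  exact (((GE.const _ 0).mul ((GE.X i).pow k))).mono (by omega)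

lemma GE.degLE {n : ℕ} {p : MvPolynomial (Fin n) ℤ} {a : ℕ} (h : GE p a) : DegLE p a := by
  obtain ⟨A, hA⟩ := h
  exact hA.degLE

/-- growth of discriminants -/
lemma Dsc_growth {n : ℕ} {E : Polynomial (MvPolynomial (Fin n) ℤ)} (hE : E.Monic) {δ : ℕ} (hd : E.natDegree ≤ δ)
    {H : ℝ} (hH : 1 ≤ H) (h : ∀ k, Grw (E.coeff k) H δ) :
    Grw (Dsc E) ((2 * δ).factorial * ((δ + 1) * H) ^ (2 * δ)) (δ * (2 * δ)) := by
  intro x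
  have h1 := Dsc_map (MvPolynomial.eval x) E hE
  rw [← h1]
  have hw : 1 ≤ wt x ^ δ := one_le_pow₀ (one_le_wt x)
  refine (Dsc_bound (δ := δ) (natDegree_map_le.trans hd) (H * wt x ^ δ) (by nlinarith) (fun k => ?_)).trans (le_of_eq ?_)
  · rw [coeff_map]; exact h k x
  · rw [pow_mul (wt x), mul_assoc _ (_ ^ _), ← mul_pow, mul_assoc]

/-- Lagrange interpolation with cleared denominators -/
def lagL {k : ℕ} (a : Fin k → ℤ) (i : Fin k) : ℤ[X] :=
  C (∏ l ∈ Finset.univ.erase i, ∏ j ∈ Finset.univ.erase l, (a l - a j)) * ∏ j ∈ Finset.univ.erase i, (X - C (a j))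

def lagC {k : ℕ} (a : Fin k → ℤ) : ℤ := ∏ l, ∏ j ∈ Finset.univ.erase l, (a l - a j)

lemma lagC_ne {k : ℕ} {a : Fin k → ℤ} (ha : Function.Injective a) : lagC a ≠ 0 := by
  unfold lagC
  rw [Finset.prod_ne_zero_iff]
  intro l _
  rw [Finset.prod_ne_zero_iff]
  intro j hj
  rw [sub_ne_zero]
  exact fun h => (Finset.ne_of_mem_erase hj) (ha h).symm

lemma lagL_natDegree {k : ℕ} (a : Fin k → ℤ) (i : Fin k) : (lagL a i).natDegree ≤ k - 1 := by
  unfold lagL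
  refine natDegree_C_mul_le _ _ |>.trans ?_
  rw [natDegree_finsetProd_X_sub_C_eq_card]
  simp

lemma lagL_eval {k : ℕ} (a : Fin k → ℤ) (i j : Fin k) : (lagL a i).eval (a j) = if i = j then lagC a else 0 := by
  unfold lagL lagC
  rw [eval_mul, eval_C, eval_prod]
  split_ifs with h
  · subst h
    rw [← Finset.mul_prod_erase _ _ (Finset.mem_univ i), mul_comm]
    simp
  · rw [Finset.prod_eq_zero (i := j) (s := Finset.univ.erase i) (f := fun l => eval (a j) (X - C (a l))), mul_zero]
    · simp; exact fun h' => h h'.symm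
    · simp

lemma lagrange {R : Type*} [CommRing R] [IsDomain R] [CharZero R] {k : ℕ} {a : Fin k → ℤ} (ha : Function.Injective a)
    (q : R[X]) (hq : q.natDegree < k) :
    C ((lagC a : ℤ) : R) * q = ∑ i, C (q.eval (a i : R)) * (lagL a i).map (Int.castRingHom R) := by
  have hinj : Function.Injective (fun i => ((a i : ℤ) : R)) := fun i j h => ha (Int.cast_injective h)
  rw [← sub_eq_zero]
  apply eq_zero_of_natDegree_lt_card_of_eval_eq_zero _ hinj
  · intro j
    rw [eval_sub, eval_mul, eval_C, eval_finsetSum, sub_eq_zero]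
    rw [Finset.sum_eq_single j]
    · rw [eval_mul, eval_C, eval_intCast_map, Int.cast_id, lagL_eval]; simp [mul_comm]
    · intro b _ hb
      rw [eval_mul, eval_C, eval_intCast_map, Int.cast_id, lagL_eval]; simp [hb]
    · simp
  · rw [Fintype.card_fin]
    refine lt_of_le_of_lt (natDegree_sub_le _ _) (max_lt ?_ ?_)
    · exact lt_of_le_of_lt (natDegree_C_mul_le _ _) hq
    · refine lt_of_le_of_lt (natDegree_sum_le_of_forall_le (n := k - 1) _ _ ?_) (by omega)
      intro i _
      exact (natDegree_C_mul_le _ _).trans (natDegree_map_le.trans (lagL_natDegree a i))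

/-- choosing good specialisation values -/
lemma exists_good {m : ℕ} (i : Fin (m+1)) (p : MvPolynomial (Fin (m+1)) ℤ) (hp : p ≠ 0) (a : ℕ) (h : GE p a) (k : ℕ) :
    ∃ c : Fin k → ℤ, Function.Injective c ∧ (∀ l, 0 ≤ c l ∧ c l ≤ ((a + k : ℕ) : ℤ)) ∧ ∀ l, sp i (c l) p ≠ 0 := by
  classical
  obtain ⟨A, hA⟩ := h
  obtain ⟨z, hz⟩ : ∃ z, MvPolynomial.eval z p ≠ 0 := by
    by_contra hcon
    push Not at hcon
    exact hp (MvPolynomial.funext fun x => by rw [hcon x, map_zero])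
  set g := spec i (i.removeNth z) p
  have hg0 : g ≠ 0 := by
    intro h0
    apply hz
    rw [← insertNth_removeNth i z, ← spec_eval]
    change g.eval _ = 0
    rw [h0]; simp
  have hgd : g.natDegree ≤ a := uni_growth _ _ _ (fun s => hA.spec i _ s)
  set T := (Finset.Icc (0:ℤ) ((a + k : ℕ) : ℤ)) \ g.roots.toFinset
  have hT : k ≤ T.card := by
    have h1 := Finset.le_card_sdiff g.roots.toFinset (Finset.Icc (0:ℤ) ((a + k : ℕ) : ℤ))
    have h2 : g.roots.toFinset.card ≤ a := (Multiset.toFinset_card_le _).trans ((card_roots' _).trans hgd)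
    rw [Int.card_Icc] at h1
    change _ ≤ T.card at h1
    omega
  obtain ⟨T', hT', hc⟩ := Finset.exists_subset_card_eq hT
  refine ⟨fun l => (T'.orderEmbOfFin hc l : ℤ), (T'.orderEmbOfFin hc).injective, ?_, ?_⟩
  · intro l
    have := hT' (Finset.orderEmbOfFin_mem T' hc l)
    rw [Finset.mem_sdiff, Finset.mem_Icc] at this
    exact this.1
  · intro l h0
    have := hT' (Finset.orderEmbOfFin_mem T' hc l)
    rw [Finset.mem_sdiff] at this
    apply this.2
    rw [Multiset.mem_toFinset, mem_roots hg0, IsRoot.def, spec_eval, ← sp_eval, h0, map_zero]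

lemma log_mul_pow_le {K H : ℝ} (hK : 0 < K) (hH : 3 ≤ H) (b : ℕ) :
    Real.log (K * H ^ b) ≤ (|Real.log K| + b) * Real.log H := by
  have hL := log_ge_one hH
  rw [Real.log_mul hK.ne' (by positivity), Real.log_pow]
  have h4 := le_abs_self (Real.log K)
  have h5 := abs_nonneg (Real.log K)
  nlinarith


lemma tuple_bound (m δ : ℕ) : ∃ C : ℝ, 0 < C ∧ ∀ E : Polynomial (MvPolynomial (Fin (m+1)) ℤ), E.Monic →
    E.natDegree ≤ δ → (∀ k, GE (E.coeff k) δ) → ∀ c : Fin (δ+1) → ℤ, Function.Injective c →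
    ∀ ρ : Fin (δ+1) → MvPolynomial (Fin m) ℤ, (∀ l, GE (ρ l) δ) → ∀ N : ℕ, 1 ≤ N → ∀ V : Finset (Fin m → ℤ),
    (∀ x ∈ V, x ∈ box m N ∧ ∃ q : ℤ[X], q.natDegree ≤ δ ∧ (E.map (spec 0 x)).eval q = 0 ∧
      (∀ r, E.eval r = 0 → spec 0 x r ≠ q) ∧ ∀ l, MvPolynomial.eval x (ρ l) = q.eval (c l)) →
    (V.card : ℝ) * N ≤ C * N ^ m := by
  obtain ⟨C, hC, hZ⟩ := zeros_box (m+1) (δ + (δ + δ) * δ)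
  refine ⟨C, hC, ?_⟩
  intro E hE hd hG c hc ρ hρ N hN V hV
  set Q : MvPolynomial (Fin (m+1)) ℤ := ∑ l, MvPolynomial.rename (Fin.succAbove 0) (ρ l) * aeval (MvPolynomial.X 0) (lagL c l) with hQ
  have hQG : GE Q (δ + δ) := by
    apply GE.sum
    intro l _
    exact ((hρ l).rename 0).mul (GE.aeval 0 _ δ (lagL_natDegree c l))
  have hQs : ∀ x ∈ V, ∀ q : ℤ[X], q.natDegree ≤ δ → (∀ l, MvPolynomial.eval x (ρ l) = q.eval (c l)) → spec 0 x Q = Polynomial.C (lagC c) * q := by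
    intro x hx q hq hl
    have := lagrange hc q (by omega)
    simp only [Int.cast_id] at this
    rw [this, hQ, map_sum]
    apply Finset.sum_congr rfl
    intro l _
    rw [map_mul, spec_rename, spec_aeval, hl]
    congr 1
    ext; simp
  set cc : MvPolynomial (Fin (m+1)) ℤ := MvPolynomial.C (lagC c) with hcc
  have hcc0 : cc ≠ 0 := by rw [hcc, Ne, MvPolynomial.C_eq_zero]; exact lagC_ne hc
  have hspc : ∀ x, spec 0 x cc = Polynomial.C (lagC c) := by intro x; simp [spec, hcc]
  set W := (E.scaleRoots cc).eval Q with hW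
  have hWG : GE W (δ + (δ + δ) * δ) := by
    rw [hW, eval_eq_sum_range, natDegree_scaleRoots]
    apply GE.sum
    intro k hk
    have hk' : k ≤ E.natDegree := by simpa [Nat.lt_succ_iff] using hk
    rw [coeff_scaleRoots]
    refine (((hG k).mul ((GE.const (lagC c) 0).pow (E.natDegree - k))).mul (hQG.pow k)).mono ?_
    have : (δ + δ) * k ≤ (δ + δ) * δ := by gcongr; omega
    omega
  by_cases hW0 : W = 0
  · have : V = ∅ := by
      rw [Finset.eq_empty_iff_forall_notMem]
      intro x hx
      obtain ⟨-, q, hq1, hq2, hq3, hq4⟩ := hV x hx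
      set ψ := algebraMap (MvPolynomial (Fin (m+1)) ℤ) (FractionRing (MvPolynomial (Fin (m+1)) ℤ))
      have hinj : Function.Injective ψ := IsFractionRing.injective _ _
      have hc' : ψ cc ≠ 0 := (map_ne_zero_iff ψ hinj).mpr hcc0
      obtain ⟨r, -, hr, hAr⟩ := int_closed_root ψ hinj E hE (ψ Q / ψ cc) (by
        have h1 := scaleRoots_eval₂_mul (p := E) ψ (ψ Q / ψ cc) cc
        rw [mul_div_cancel₀ _ hc', eval₂_at_apply] at h1
        change ψ W = _ at h1
        rw [hW0, map_zero] at h1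
        rw [eval_map]
        exact (mul_eq_zero.mp h1.symm).resolve_left (pow_ne_zero _ hc')) Q cc hcc0 (by field_simp)
      apply hq3 r hr
      have h2 := congrArg (spec 0 x) hAr
      rw [map_mul, hspc, hQs x hx q hq1 hq4] at h2
      exact mul_left_cancel₀ (by rw [Ne, C_eq_zero]; exact lagC_ne hc) h2
    rw [this]; simp; positivity
  · classical
    set S : Finset (Fin (m+1) → ℤ) := (V ×ˢ Finset.Icc (-(N:ℤ)) N).image (fun xs => Fin.insertNth 0 xs.2 xs.1) with hS
    have hSc : S.card = V.card * (2 * N + 1) := by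
      rw [hS, Finset.card_image_of_injective, Finset.card_product, Int.card_Icc]
      · congr 1; omega
      · rintro ⟨x, s⟩ ⟨y, t⟩ h
        simp only [Fin.insertNth_zero', Fin.cons_inj] at h
        simp [h.1, h.2]
    have := hZ W hW0 hWG.degLE N hN S (by
      intro z hz
      rw [hS, Finset.mem_image] at hz
      obtain ⟨⟨x, s⟩, hxs, rfl⟩ := hz
      rw [Finset.mem_product, Finset.mem_Icc] at hxs
      obtain ⟨hb, q, hq1, hq2, hq3, hq4⟩ := hV x hxs.1
      constructor
      · rw [mem_box] at hb ⊢
        intro j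
        refine Fin.succAboveCases 0 ?_ ?_ j
        · simpa [abs_le] using hxs.2
        · intro k; simpa using hb k
      · rw [← spec_eval]
        have : spec 0 x W = 0 := by
          rw [hW]
          rw [← eval₂_at_apply, hQs x hxs.1 q hq1 hq4, ← hspc x, scaleRoots_eval₂_mul, ← eval_map, hq2, mul_zero]
        rw [this]; simp)
    rw [hSc] at this
    push_cast at this
    have hN' : (1:ℝ) ≤ N := by exact_mod_cast hN
    rw [pow_succ, ← mul_assoc] at this
    have h2 : (V.card : ℝ) * N * N ≤ C * N ^ m * N := by
      refine le_trans ?_ this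
      have : (0:ℝ) ≤ V.card := by positivity
      have h3 : (N:ℝ) ≤ 2 * N + 1 := by linarith
      gcongr
    exact le_of_mul_le_mul_right h2 (by linarith)

def P5S (m δ : ℕ) : Prop := ∃ C : ℝ, 0 < C ∧ ∀ E : Polynomial (MvPolynomial (Fin m) ℤ), E.Monic →
    E.natDegree ≤ δ → Dsc E ≠ 0 → ∀ H : ℝ, 3 ≤ H → (∀ k, Grw (E.coeff k) H δ) →
    ∀ N : ℕ, 1 ≤ N → (N:ℝ) ≤ H → ∀ S : Finset (Fin m → ℤ), (∀ x ∈ S, x ∈ box m N ∧ ∃ t : ℤ,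
      (E.map (MvPolynomial.eval x)).eval t = 0 ∧ ∀ r, E.eval r = 0 → MvPolynomial.eval x r ≠ t) →
    (S.card : ℝ) * √N ≤ C * Real.log H ^ 2 * N ^ m

lemma root_GE {m δ : ℕ} {E : Polynomial (MvPolynomial (Fin m) ℤ)} (hE : E.Monic) {H : ℝ} (hH : 1 ≤ H)
    (hG : ∀ k, Grw (E.coeff k) H δ) {r : MvPolynomial (Fin m) ℤ} (hr : E.eval r = 0) : Grw r (2 * H) δ := by
  intro x
  have hw : 1 ≤ wt x ^ δ := one_le_pow₀ (one_le_wt x)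
  rw [mul_assoc]
  apply root_bound (hE.map (MvPolynomial.eval x)) (H * wt x ^ δ) (by nlinarith)
  · intro k; rw [coeff_map]; exact hG k x
  · rw [eval_map, eval₂_at_apply, hr, map_zero]

lemma sqrt_le_self_nat {N : ℕ} (hN : 1 ≤ N) : √(N:ℝ) ≤ N := by
  have hN' : (1:ℝ) ≤ N := by exact_mod_cast hN
  rw [Real.sqrt_le_left (by linarith)]
  nlinarith

lemma spec_growth {m δ : ℕ} {E : Polynomial (MvPolynomial (Fin (m+1)) ℤ)} {H : ℝ} (hH : 3 ≤ H)
    (hG : ∀ k, Grw (E.coeff k) H δ) {N : ℕ} (hNH : (N:ℝ) ≤ H) (i : Fin (m+1)) {x : Fin m → ℤ} (hx : x ∈ box m N) (k : ℕ) (s : ℤ) :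
    |((((E.map (spec i x)).coeff k).eval s : ℤ) : ℝ)| ≤ H ^ (1 + 2 * m * δ) * (1 + |(s:ℝ)|) ^ δ := by
  rw [coeff_map]
  refine ((hG k).spec i x s).trans ?_
  gcongr
  have h1 := wt_box hx
  have h2 : 1 + (N:ℝ) ≤ H ^ 2 := by nlinarith
  have h0 := one_le_wt x
  calc H * wt x ^ δ ≤ H * ((H ^ 2) ^ m) ^ δ := by
        gcongr
        exact h1.trans (by gcongr)
    _ = _ := by rw [← pow_mul, ← pow_mul, pow_add, pow_one, mul_assoc]

lemma root_natDegree {m δ : ℕ} {E : Polynomial (MvPolynomial (Fin (m+1)) ℤ)} (hE : E.Monic) {H : ℝ} (hH : 1 ≤ H)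
    (hG : ∀ k, Grw (E.coeff k) H δ) (i : Fin (m+1)) {x : Fin m → ℤ} {q : ℤ[X]}
    (hq : (E.map (spec i x)).eval q = 0) : q.natDegree ≤ δ := by
  apply uni_growth q (2 * (H * wt x ^ δ)) δ
  intro s
  have hw : 1 ≤ wt x ^ δ := one_le_pow₀ (one_le_wt x)
  have hw2 : 1 ≤ (1 + |(s:ℝ)|) ^ δ := one_le_pow₀ (by linarith [abs_nonneg (s:ℝ)])
  have h1 : 1 ≤ H * wt x ^ δ := by nlinarith
  rw [mul_assoc 2]
  apply root_bound ((hE.map (spec i x)).map (evalRingHom s)) (H * wt x ^ δ * (1 + |(s:ℝ)|) ^ δ) (by nlinarith)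
  · intro k
    rw [coeff_map, coeff_map]
    exact (hG k).spec i x s
  · rw [← ev2_eval, hq, eval_zero]

set_option maxHeartbeats 400000 in
lemma bad_bound (m δ : ℕ) (IH : P5S m δ) : ∃ C : ℝ, 0 < C ∧ ∀ E : Polynomial (MvPolynomial (Fin (m+1)) ℤ), E.Monic →
    E.natDegree ≤ δ → Dsc E ≠ 0 → ∀ H : ℝ, 3 ≤ H → (∀ k, Grw (E.coeff k) H δ) →
    ∀ N : ℕ, 1 ≤ N → (N:ℝ) ≤ H → ∀ B : Finset (Fin m → ℤ), (∀ x ∈ B, x ∈ box m N ∧ ∃ q : ℤ[X],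
      (E.map (spec 0 x)).eval q = 0 ∧ ∀ r, E.eval r = 0 → spec 0 x r ≠ q) →
    (B.card : ℝ) * √N ≤ C * Real.log H ^ 2 * N ^ m := by
  classical
  obtain ⟨C0, hC0, hI⟩ := IH
  obtain ⟨C1, hC1, hV⟩ := tuple_bound m δ
  set A : ℝ := ((δ * (2 * δ) + (δ + 1) : ℕ) : ℝ) with hA
  have hA0 : 0 ≤ A := by positivity
  set K : ℝ := (1 + A) ^ δ with hK
  have hK1 : 1 ≤ K := one_le_pow₀ (by linarith)
  refine ⟨(δ + 1) * (C0 * (|Real.log K| + 1) ^ 2) + δ ^ (δ + 1) * C1, by positivity, ?_⟩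
  intro E hE hd hD H hH hG N hN hNH B hB
  have hL := log_ge_one hH
  have hN' : (1:ℝ) ≤ N := by exact_mod_cast hN
  choose! q hq using fun x hx => (hB x hx).2
  obtain ⟨c, hc, hcb, hcD⟩ := exists_good 0 (Dsc E) hD (δ * (2 * δ)) ⟨_, Dsc_growth hE hd (by linarith) hG⟩ (δ + 1)
  have hcA : ∀ l, |(c l : ℝ)| ≤ A := by
    intro l
    rw [abs_of_nonneg (by exact_mod_cast (hcb l).1), hA]
    exact_mod_cast (hcb l).2
  set El := fun l => E.map (sp 0 (c l)) with hEl
  have hElm : ∀ l, (El l).Monic := fun l => hE.map _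
  have hElG : ∀ l k, Grw ((El l).coeff k) (K * H) δ := by
    intro l k
    rw [hEl, coeff_map]
    refine ((hG k).sp 0 (c l)).mono ?_ le_rfl
    rw [mul_comm, hK]
    have := hcA l
    gcongr
  have hKH : 3 ≤ K * H := by nlinarith
  have hlog : Real.log (K * H) ≤ (|Real.log K| + 1) * Real.log H := by
    simpa using log_mul_pow_le (by linarith) hH 1 (K := K)
  set T := fun l => B.filter (fun x => ∀ r, (El l).eval r = 0 → MvPolynomial.eval x r ≠ (q x).eval (c l)) with hT
  have hTb : ∀ l, ((T l).card : ℝ) * √N ≤ C0 * (|Real.log K| + 1) ^ 2 * Real.log H ^ 2 * N ^ m := by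
    intro l
    refine (hI (El l) (hElm l) (natDegree_map_le.trans hd) (by rw [hEl, Dsc_map _ _ hE]; exact hcD l) (K * H) hKH (hElG l) N hN
      (by nlinarith) (T l) ?_).trans ?_
    · intro x hx
      rw [hT, Finset.mem_filter] at hx
      refine ⟨(hB x hx.1).1, (q x).eval (c l), ?_, hx.2⟩
      rw [hEl, Polynomial.map_map, sp_comp, ← spec_comp, ← Polynomial.map_map, ← ev2_eval, (hq x hx.1).1, eval_zero]
    · have h0 : 0 ≤ Real.log (K * H) := (log_ge_one hKH).trans' zero_le_one
      have : Real.log (K * H) ^ 2 ≤ (|Real.log K| + 1) ^ 2 * Real.log H ^ 2 := by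
        rw [← mul_pow]; gcongr
      rw [mul_assoc C0 (_ ^ 2) (_ ^ 2)]
      exact mul_le_mul_of_nonneg_right (mul_le_mul_of_nonneg_left this hC0.le) (by positivity)
  set R := Fintype.piFinset (fun l => (El l).roots.toFinset) with hR
  have hRc : (R.card : ℝ) ≤ δ ^ (δ + 1) := by
    have : R.card ≤ δ ^ (δ + 1) := by
      rw [hR, Fintype.card_piFinset]
      calc _ ≤ ∏ l : Fin (δ+1), δ := by
            apply Finset.prod_le_prod'
            intro l _
            exact (Multiset.toFinset_card_le _).trans ((card_roots' _).trans (natDegree_map_le.trans hd))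
        _ = _ := by simp
    exact_mod_cast this
  set V := fun ρ : Fin (δ+1) → MvPolynomial (Fin m) ℤ => B.filter (fun x => ∀ l, MvPolynomial.eval x (ρ l) = (q x).eval (c l)) with hVd
  have hVb : ∀ ρ ∈ R, ((V ρ).card : ℝ) * √N ≤ C1 * N ^ m := by
    intro ρ hρ
    refine le_trans ?_ (hV E hE hd (fun k => ⟨H, hG k⟩) c hc ρ ?_ N hN (V ρ) ?_)
    · gcongr; exact sqrt_le_self_nat hN
    · intro l
      rw [hR, Fintype.mem_piFinset] at hρ
      have := hρ l
      rw [Multiset.mem_toFinset, mem_roots (hElm l).ne_zero] at this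
      exact ⟨_, root_GE (hElm l) (by nlinarith) (hElG l) this⟩
    · intro x hx
      rw [hVd, Finset.mem_filter] at hx
      exact ⟨(hB x hx.1).1, q x, root_natDegree hE (by linarith) hG 0 (hq x hx.1).1, (hq x hx.1).1, (hq x hx.1).2, hx.2⟩
  have hcov : B ⊆ Finset.univ.biUnion T ∪ R.biUnion V := by
    intro x hx
    rw [Finset.mem_union]
    by_cases h : x ∈ Finset.univ.biUnion T
    · exact Or.inl h
    · right
      rw [Finset.mem_biUnion] at h
      have h' : ∀ l, ∃ r, (El l).eval r = 0 ∧ MvPolynomial.eval x r = (q x).eval (c l) := by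
        intro l
        by_contra hcon
        push Not at hcon
        exact h ⟨l, Finset.mem_univ _, by rw [hT, Finset.mem_filter]; exact ⟨hx, hcon⟩⟩
      choose ρ hρ1 hρ2 using h'
      rw [Finset.mem_biUnion]
      refine ⟨ρ, ?_, ?_⟩
      · rw [hR, Fintype.mem_piFinset]
        intro l
        rw [Multiset.mem_toFinset, mem_roots (hElm l).ne_zero]
        exact hρ1 l
      · rw [hVd, Finset.mem_filter]; exact ⟨hx, hρ2⟩
  have hcard : B.card ≤ ∑ l, (T l).card + ∑ ρ ∈ R, (V ρ).card :=
    (Finset.card_le_card hcov).trans ((Finset.card_union_le _ _).trans (add_le_add Finset.card_biUnion_le Finset.card_biUnion_le))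
  have hcard' : (B.card : ℝ) ≤ ∑ l, ((T l).card : ℝ) + ∑ ρ ∈ R, ((V ρ).card : ℝ) := by exact_mod_cast hcard
  have e1 : (∑ l, ((T l).card : ℝ)) * √N ≤ (δ + 1) * (C0 * (|Real.log K| + 1) ^ 2 * Real.log H ^ 2 * N ^ m) := by
    rw [Finset.sum_mul]
    refine (Finset.sum_le_card_nsmul _ _ _ (fun l _ => hTb l)).trans (le_of_eq ?_)
    simp
  have e2 : (∑ ρ ∈ R, ((V ρ).card : ℝ)) * √N ≤ δ ^ (δ + 1) * (C1 * N ^ m) := by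
    rw [Finset.sum_mul]
    refine (Finset.sum_le_card_nsmul _ _ _ hVb).trans ?_
    rw [nsmul_eq_mul]
    gcongr
  have e3 : (δ:ℝ) ^ (δ + 1) * (C1 * N ^ m) ≤ δ ^ (δ + 1) * C1 * Real.log H ^ 2 * N ^ m := by
    have h1 : 1 ≤ Real.log H ^ 2 := one_le_pow₀ hL
    have : 0 ≤ (δ:ℝ) ^ (δ + 1) * (C1 * N ^ m) := by positivity
    nlinarith
  calc _ ≤ (∑ l, ((T l).card : ℝ) + ∑ ρ ∈ R, ((V ρ).card : ℝ)) * √N := by gcongr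
    _ ≤ _ := by rw [add_mul]; linarith


lemma fiber_count {m : ℕ} (i : Fin (m+1)) (S : Finset (Fin (m+1) → ℤ)) (X : Finset (Fin m → ℤ)) (B : ℝ)
    (hX : ∀ x ∈ S, i.removeNth x ∈ X)
    (hB : ∀ x ∈ X, ∀ F : Finset ℤ, (∀ s ∈ F, (i.insertNth s x : Fin (m+1) → ℤ) ∈ S) → (F.card : ℝ) ≤ B) :
    (S.card : ℝ) ≤ X.card * B := by
  classical
  rw [Finset.card_eq_sum_card_fiberwise (f := fun x : Fin (m+1) → ℤ => i.removeNth x) (t := X) (fun x hx => hX x hx)]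
  push_cast
  rw [← nsmul_eq_mul]
  apply Finset.sum_le_card_nsmul
  intro x hx
  have h1 : ({a ∈ S | i.removeNth a = x}).card = (({a ∈ S | i.removeNth a = x}).image (fun a => a i)).card := by
    rw [Finset.card_image_of_injOn]
    intro a ha b hb hab
    simp only [Finset.coe_filter, Set.mem_setOf_eq] at ha hb
    rw [← insertNth_removeNth i a, ← insertNth_removeNth i b, ha.2, hb.2]
    simp only at hab
    rw [hab]
  rw [h1]
  apply hB x hx
  intro s hs
  rw [Finset.mem_image] at hs
  obtain ⟨a, ha, rfl⟩ := hs
  rw [Finset.mem_filter] at ha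
  rw [← ha.2, insertNth_removeNth]; exact ha.1

lemma removeNth_box {m N : ℕ} (i : Fin (m+1)) {x : Fin (m+1) → ℤ} (hx : x ∈ box (m+1) N) : i.removeNth x ∈ box m N := by
  rw [mem_box] at hx ⊢
  intro j; exact hx _

lemma fiber_card_le {m N : ℕ} (i : Fin (m+1)) (x : Fin m → ℤ) (F : Finset ℤ)
    (h : ∀ s ∈ F, (i.insertNth s x : Fin (m+1) → ℤ) ∈ box (m+1) N) : (F.card : ℝ) ≤ 2 * N + 1 := by
  have : F ⊆ Finset.Icc (-(N:ℤ)) N := by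
    intro s hs
    have := mem_box.mp (h s hs) i
    rw [Fin.insertNth_apply_same, abs_le] at this
    exact Finset.mem_Icc.mpr this
  have := Finset.card_le_card this
  rw [Int.card_Icc] at this
  have h2 : F.card ≤ 2 * N + 1 := by omega
  exact_mod_cast h2

set_option maxHeartbeats 400000 in
theorem P5 (m δ : ℕ) : P5S m δ := by
  classical
  induction m with
  | zero =>
    refine ⟨1, one_pos, ?_⟩
    intro E hE hd hD H hH hG N hN hNH S hS
    have : S = ∅ := by
      rw [Finset.eq_empty_iff_forall_notMem]
      intro x hx
      obtain ⟨-, t, h1, h2⟩ := hS x hx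
      apply h2 (MvPolynomial.C t) _ (by simp)
      have hinj : Function.Injective (MvPolynomial.eval x) := by
        intro p q hpq
        apply MvPolynomial.funext
        intro y
        rw [Subsingleton.elim y x]; exact hpq
      apply hinj
      rw [map_zero, ← eval₂_at_apply, ← eval_map]
      simpa using h1
    rw [this]; simp; positivity
  | succ m IH =>
    obtain ⟨C1, hC1, hbad⟩ := bad_bound m δ IH
    obtain ⟨C2, hC2, hP4⟩ := P4 δ
    obtain ⟨C3, hC3, hZ⟩ := zeros_box (m+1) (δ * (2 * δ))
    set b : ℕ := 1 + 2 * m * δ with hb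
    refine ⟨C3 + 3 * C1 + 3 ^ m * (C2 * b ^ 2), by positivity, ?_⟩
    intro E hE hd hD H hH hG N hN hNH S hS
    have hL := log_ge_one hH
    have hL2 : 1 ≤ Real.log H ^ 2 := one_le_pow₀ hL
    have hN' : (1:ℝ) ≤ N := by exact_mod_cast hN
    have hsq := sqrt_le_self_nat hN
    have hsqm := Real.mul_self_sqrt (show (0:ℝ) ≤ N by positivity)
    set Sa := S.filter (fun x => MvPolynomial.eval x (Dsc E) = 0) with hSa
    set Sr := S.filter (fun x => ¬ MvPolynomial.eval x (Dsc E) = 0) with hSr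
    set Bad := (box m N).filter (fun x => ∃ q : ℤ[X],
      (E.map (spec 0 x)).eval q = 0 ∧ ∀ r, E.eval r = 0 → spec 0 x r ≠ q) with hBad
    set Sb := Sr.filter (fun x => ((0 : Fin (m+1)).removeNth x : Fin m → ℤ) ∈ Bad) with hSb
    set Sc := Sr.filter (fun x => ¬ ((0 : Fin (m+1)).removeNth x : Fin m → ℤ) ∈ Bad) with hSc
    have hcard : (S.card : ℝ) = Sa.card + (Sb.card + Sc.card) := by
      have e1 : Sa.card + Sr.card = S.card := Finset.card_filter_add_card_filter_not _
      have e2 : Sb.card + Sc.card = Sr.card := Finset.card_filter_add_card_filter_not _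
      rw [← e1, ← e2]; push_cast; ring
    have ha : (Sa.card : ℝ) * √N ≤ C3 * Real.log H ^ 2 * N ^ (m+1) := by
      have := hZ (Dsc E) hD (Dsc_growth hE hd (by linarith) hG).degLE N hN Sa (by
        intro x hx
        rw [hSa, Finset.mem_filter] at hx
        exact ⟨(hS x hx.1).1, hx.2⟩)
      have h2 : (Sa.card : ℝ) * √N ≤ Sa.card * N := by gcongr
      have h3 : 0 ≤ C3 * (N:ℝ) ^ (m+1) := by positivity
      nlinarith
    have hbb : (Sb.card : ℝ) * √N ≤ 3 * C1 * Real.log H ^ 2 * N ^ (m+1) := by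
      have h1 := fiber_count 0 Sb Bad (2 * N + 1) (fun x hx => (Finset.mem_filter.mp hx).2) (by
        intro x _ F hF
        apply fiber_card_le 0 x F
        intro s hs
        exact (hS _ (Finset.mem_filter.mp (Finset.mem_filter.mp (hF s hs)).1).1).1)
      have h2 := hbad E hE hd hD H hH hG N hN hNH Bad (by
        intro x hx
        exact Finset.mem_filter.mp hx)
      calc (Sb.card : ℝ) * √N ≤ (Bad.card * (2 * N + 1)) * √N := by gcongr
        _ = (Bad.card * √N) * (2 * N + 1) := by ring
        _ ≤ (C1 * Real.log H ^ 2 * N ^ m) * (3 * N) := by gcongr; linarith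
        _ = _ := by ring
    have hcc : (Sc.card : ℝ) * √N ≤ 3 ^ m * (C2 * b ^ 2) * Real.log H ^ 2 * N ^ (m+1) := by
      have h1 := fiber_count 0 Sc (box m N) (C2 * Real.log (H ^ b) ^ 2 * √N) (by
        intro x hx
        exact removeNth_box 0 (hS _ (Finset.mem_filter.mp (Finset.mem_filter.mp hx).1).1).1) (by
        intro x hx F hF
        rcases F.eq_empty_or_nonempty with rfl | ⟨s0, hs0⟩
        · simp; positivity
        have hF' : ∀ s ∈ F, (Fin.insertNth 0 s x : Fin (m+1) → ℤ) ∈ S ∧ MvPolynomial.eval (Fin.insertNth 0 s x : Fin (m+1) → ℤ) (Dsc E) ≠ 0 ∧ x ∉ Bad := by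
          intro s hs
          have := hF s hs
          rw [hSc, hSr, Finset.mem_filter, Finset.mem_filter, Fin.removeNth_insertNth] at this
          exact ⟨this.1.1, this.1.2, this.2⟩
        have hHb : H ≤ H ^ b := le_self_pow₀ (by linarith) (by omega)
        apply hP4 (E.map (spec 0 x)) (hE.map _) (natDegree_map_le.trans hd) ?_ (H ^ b) (hH.trans hHb)
          (spec_growth hH hG hNH 0 hx) N hN (hNH.trans hHb) F
        · intro s hs
          obtain ⟨h1, h2, h3⟩ := hF' s hs
          obtain ⟨h4, t, h5, h6⟩ := hS _ h1
          refine ⟨?_, t, ?_, ?_⟩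
          · have := mem_box.mp h4 0
            rwa [Fin.insertNth_apply_same] at this
          · rw [Polynomial.map_map, spec_comp]; exact h5
          · intro q hq hqt
            apply h3
            rw [hBad, Finset.mem_filter]
            refine ⟨hx, q, hq, ?_⟩
            intro r hr hrq
            apply h6 r hr
            rw [← spec_eval, hrq, hqt]
        · rw [Dsc_map _ _ hE]
          intro h0
          apply (hF' s0 hs0).2.1
          rw [← spec_eval, h0, eval_zero])
      rw [Real.log_pow, card_box] at h1
      push_cast at h1
      calc (Sc.card : ℝ) * √N ≤ ((2 * N + 1) ^ m * (C2 * (b * Real.log H) ^ 2 * √N)) * √N := by gcongr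
        _ = (2 * N + 1) ^ m * (C2 * b ^ 2 * Real.log H ^ 2) * (√N * √N) := by ring
        _ ≤ (3 * N) ^ m * (C2 * b ^ 2 * Real.log H ^ 2) * N := by rw [hsqm]; gcongr; linarith
        _ = _ := by ring
    rw [hcard]
    nlinarith


section Galois
variable {K Ω : Type} [Field K] [Field Ω] [Algebra K Ω] [IsGalois K Ω]

lemma gal_fixed (z : Ω) (h : ∀ σ : Ω ≃ₐ[K] Ω, σ z = z) : ∃ k : K, algebraMap K Ω k = z := by
  have := (InfiniteGalois.mem_range_algebraMap_iff_fixed (k := K) z).2 h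
  exact this

lemma gal_adjoin (y w : Ω) (h : ∀ σ : Ω ≃ₐ[K] Ω, σ y = y → σ w = w) :
    w ∈ IntermediateField.adjoin K {y} := by
  rw [← InfiniteGalois.fixedField_fixingSubgroup (IntermediateField.adjoin K {y})]
  rw [IntermediateField.mem_fixedField_iff]
  intro σ hσ
  apply h
  rw [IntermediateField.mem_fixingSubgroup_iff] at hσ
  exact hσ y (IntermediateField.mem_adjoin_simple_self K y)

lemma adjoin_fixed (y w : Ω) (h : w ∈ IntermediateField.adjoin K {y}) (σ : Ω ≃ₐ[K] Ω) (hσ : σ y = y) :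
    σ w = w := by
  have h1 : IntermediateField.adjoin K {y} ≤ IntermediateField.fixedField (Subgroup.zpowers σ) := by
    rw [IntermediateField.adjoin_le_iff]
    intro t ht
    rw [Set.mem_singleton_iff] at ht
    rw [ht, SetLike.mem_coe, IntermediateField.mem_fixedField_iff]
    intro f hf
    obtain ⟨k, rfl⟩ := hf
    exact MulAction.mem_stabilizer_iff.1 ((MulAction.stabilizer (Ω ≃ₐ[K] Ω) y).zpow_mem (x := σ) (MulAction.mem_stabilizer_iff.2 hσ) k)
  have := h1 h
  rw [IntermediateField.mem_fixedField_iff] at this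
  exact this σ (Subgroup.mem_zpowers σ)

lemma gal_conj (f : K[X]) (hf : Irreducible f) (y z : Ω) (hy : aeval y f = 0) (hz : aeval z f = 0) :
    ∃ σ : Ω ≃ₐ[K] Ω, σ y = z := by
  have hya : IsAlgebraic K y := ⟨f, hf.ne_zero, hy⟩
  have h1 : aeval z (minpoly K y) = 0 := by
    have h2 : Associated (minpoly K y) f :=
      (minpoly.irreducible hya.isIntegral).associated_of_dvd hf (minpoly.dvd K y hy)
    obtain ⟨u, hu⟩ := h2.symm.dvd
    rw [hu, map_mul, hz, zero_mul]
  obtain ⟨σ, hσ⟩ := minpoly.exists_algEquiv_of_root (K := K) hya h1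
  exact ⟨σ.symm, by rw [← hσ, AlgEquiv.symm_apply_apply]⟩

end Galois

section Bd
variable {n : ℕ} {Ω : Type} [Field Ω] [Algebra (MvPolynomial (Fin n) ℤ) Ω]

/-- `φ` lies over the point `x`. -/
def Over (x : Fin n → ℤ) (φ : integralClosure (MvPolynomial (Fin n) ℤ) Ω →+* ℂ) : Prop :=
  ∀ r : MvPolynomial (Fin n) ℤ, φ (algebraMap _ _ r) = ((MvPolynomial.eval x r : ℤ) : ℂ)

def Bd (z : Ω) (A : ℝ) (a : ℕ) : Prop :=
  ∃ h : z ∈ integralClosure (MvPolynomial (Fin n) ℤ) Ω, ∀ (x : Fin n → ℤ)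
    (φ : integralClosure (MvPolynomial (Fin n) ℤ) Ω →+* ℂ), Over x φ → ‖φ ⟨z, h⟩‖ ≤ A * wt x ^ a

lemma exists_over (hinj : Function.Injective (algebraMap (MvPolynomial (Fin n) ℤ) Ω)) (x : Fin n → ℤ) :
    ∃ φ : integralClosure (MvPolynomial (Fin n) ℤ) Ω →+* ℂ, Over x φ := by
  let R := MvPolynomial (Fin n) ℤ
  let O := integralClosure R Ω
  let e : R →+* ℂ := (Int.castRingHom ℂ).comp (MvPolynomial.eval x)
  have hp : (RingHom.ker e).IsPrime := RingHom.ker_isPrime e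
  have hk : RingHom.ker (algebraMap R O) ≤ RingHom.ker e := by
    intro r hr
    rw [RingHom.mem_ker] at hr
    have : algebraMap R Ω r = 0 := by
      rw [IsScalarTower.algebraMap_apply R O Ω, hr, map_zero]
    rw [← map_zero (algebraMap R Ω)] at this
    rw [hinj this]; exact Ideal.zero_mem _
  obtain ⟨Q, hQ, hQ'⟩ := Ideal.exists_ideal_over_prime_of_isIntegral_of_isDomain (R := R) (S := O) (RingHom.ker e) hk
  -- residue rings
  let A := R ⧸ RingHom.ker e
  letI : Algebra A ℂ := (RingHom.kerLift e).toAlgebra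
  have hinjA : Function.Injective (algebraMap A ℂ) := RingHom.kerLift_injective e
  haveI : Q.LiesOver (RingHom.ker e) := ⟨by rw [Ideal.under_def]; exact hQ'.symm⟩
  haveI : IsDomain (O ⧸ Q) := Ideal.Quotient.isDomain Q
  haveI : IsDomain A := Ideal.Quotient.isDomain _
  haveI : Module.IsTorsionFree A ℂ := Module.isTorsionFree_iff_algebraMap_injective.2 hinjA
  have hinj2 : Function.Injective (algebraMap A (O ⧸ Q)) := by
    rw [injective_iff_map_eq_zero]
    intro a
    obtain ⟨r, rfl⟩ := Ideal.Quotient.mk_surjective a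
    intro hr
    have h1 : (Ideal.Quotient.mk Q) (algebraMap R O r) = 0 := hr
    rw [Ideal.Quotient.eq_zero_iff_mem] at h1 ⊢
    rw [← hQ']
    exact h1
  haveI : Module.IsTorsionFree A (O ⧸ Q) := Module.isTorsionFree_iff_algebraMap_injective.2 hinj2
  haveI : Algebra.IsIntegral A (O ⧸ Q) := inferInstance
  haveI : Algebra.IsAlgebraic A (O ⧸ Q) := inferInstance
  let ψ : (O ⧸ Q) →ₐ[A] ℂ := IsAlgClosed.lift
  refine ⟨ψ.toRingHom.comp (Ideal.Quotient.mk Q), ?_⟩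
  intro r
  have h1 : (Ideal.Quotient.mk Q) (algebraMap R O r) = algebraMap A (O ⧸ Q) (Ideal.Quotient.mk _ r) := rfl
  simp only [RingHom.comp_apply]
  rw [h1]
  have h2 := ψ.commutes (Ideal.Quotient.mk (RingHom.ker e) r)
  refine Eq.trans h2 ?_
  rfl


lemma Bd.isIntegral {z : Ω} {A : ℝ} {a : ℕ} (h : Bd (n := n) z A a) : IsIntegral (MvPolynomial (Fin n) ℤ) z := h.1

lemma over_root {x : Fin n → ℤ} {φ : integralClosure (MvPolynomial (Fin n) ℤ) Ω →+* ℂ} (hφ : Over x φ)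
    (f : (MvPolynomial (Fin n) ℤ)[X]) (z : integralClosure (MvPolynomial (Fin n) ℤ) Ω) :
    φ (aeval z f) = ((f.map (MvPolynomial.eval x)).map (Int.castRingHom ℂ)).eval (φ z) := by
  rw [Polynomial.map_map, eval_map, aeval_def, hom_eval₂]
  congr 1
  ext r <;> simp [hφ _]

lemma Bd_root {f : (MvPolynomial (Fin n) ℤ)[X]} (hf : f.Monic) {H : ℝ} {δ : ℕ} (hH : 1 ≤ H)
    (h : ∀ k, Grw (f.coeff k) H δ) {z : Ω} (hz : aeval z f = 0) : Bd (n := n) z (2 * H) δ := by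
  have hi : IsIntegral (MvPolynomial (Fin n) ℤ) z := ⟨f, hf, hz⟩
  refine ⟨hi, fun x φ hφ => ?_⟩
  have h0 : aeval (⟨z, hi⟩ : integralClosure (MvPolynomial (Fin n) ℤ) Ω) f = 0 := by
    apply Subtype.ext
    have h5 := Polynomial.aeval_algebraMap_apply Ω (⟨z, hi⟩ : integralClosure (MvPolynomial (Fin n) ℤ) Ω) f
    exact h5.symm.trans hz
  have h1 := over_root hφ f ⟨z, hi⟩
  rw [h0, map_zero] at h1
  have hG : ((f.map (MvPolynomial.eval x)).map (Int.castRingHom ℂ)).Monic := (hf.map _).map _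
  set g := (f.map (MvPolynomial.eval x)).map (Int.castRingHom ℂ) with hg
  have hM : 1 ≤ H * wt x ^ δ := by
    have := one_le_pow₀ (one_le_wt x) (n := δ)
    nlinarith
  set M := H * wt x ^ δ with hMdef
  have h1 := IsRoot.norm_lt_cauchyBound hG.ne_zero (show g.IsRoot _ from h1.symm)
  have h2 : cauchyBound g ≤ Real.toNNReal M + 1 := by
    unfold cauchyBound
    rw [hG.leadingCoeff]
    simp only [nnnorm_one, div_one]
    gcongr
    apply Finset.sup_le
    intro k _
    rw [← NNReal.coe_le_coe, Real.coe_toNNReal _ (by linarith)]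
    have := h k x
    rw [hMdef, hg, coeff_map, coeff_map, coe_nnnorm]
    simpa using this
  have h3 : ((cauchyBound g : NNReal):ℝ) ≤ M + 1 := by
    rw [← NNReal.coe_le_coe] at h2
    rw [NNReal.coe_add, Real.coe_toNNReal _ (by linarith)] at h2
    simpa using h2
  rw [← NNReal.coe_lt_coe, coe_nnnorm] at h1
  rw [mul_assoc]
  linarith

lemma Bd_coe (hinj : Function.Injective (algebraMap (MvPolynomial (Fin n) ℤ) Ω))
    {p : MvPolynomial (Fin n) ℤ} {A : ℝ} {a : ℕ} (h : Bd (n := n) (algebraMap _ Ω p) A a) : Grw p A a := by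
  obtain ⟨hi, h⟩ := h
  intro x
  obtain ⟨φ, hφ⟩ := exists_over hinj x
  have h1 := h x φ hφ
  have h2 : (⟨algebraMap _ Ω p, hi⟩ : integralClosure (MvPolynomial (Fin n) ℤ) Ω) = algebraMap _ _ p := rfl
  rw [h2, hφ] at h1
  simpa using h1

lemma Bd.of_Grw {p : MvPolynomial (Fin n) ℤ} {A : ℝ} {a : ℕ} (h : Grw p A a) :
    Bd (n := n) (algebraMap _ Ω p) A a := by
  refine ⟨isIntegral_algebraMap, fun x φ hφ => ?_⟩
  have h2 : (⟨algebraMap _ Ω p, isIntegral_algebraMap⟩ : integralClosure (MvPolynomial (Fin n) ℤ) Ω) = algebraMap _ _ p := rfl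
  rw [h2, hφ]
  simpa using h x

lemma Bd.mono {z : Ω} {A B : ℝ} {a b : ℕ} (h : Bd (n := n) z A a) (hB : 0 ≤ B) (hAB : A ≤ B) (hab : a ≤ b) :
    Bd (n := n) z B b := by
  refine ⟨h.1, fun x φ hφ => (h.2 x φ hφ).trans ?_⟩
  have := pow_le_pow_right₀ (one_le_wt x) hab
  have h0 : 0 ≤ wt x ^ a := pow_nonneg (by linarith [one_le_wt x]) _
  nlinarith

lemma Bd.mul {z w : Ω} {A B : ℝ} {a b : ℕ} (h : Bd (n := n) z A a) (h' : Bd (n := n) w B b) :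
    Bd (n := n) (z * w) (A * B) (a + b) := by
  refine ⟨mul_mem h.1 h'.1, fun x φ hφ => ?_⟩
  have e : (⟨z * w, mul_mem h.1 h'.1⟩ : integralClosure (MvPolynomial (Fin n) ℤ) Ω) = ⟨z, h.1⟩ * ⟨w, h'.1⟩ := rfl
  rw [e, map_mul, norm_mul]
  have h1 := h.2 x φ hφ
  have h2 := h'.2 x φ hφ
  calc _ ≤ (A * wt x ^ a) * (B * wt x ^ b) := mul_le_mul h1 h2 (norm_nonneg _) ((norm_nonneg _).trans h1)
    _ = _ := by ring

lemma Bd.add {z w : Ω} {A B : ℝ} {a : ℕ} (h : Bd (n := n) z A a) (h' : Bd (n := n) w B a) :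
    Bd (n := n) (z + w) (A + B) a := by
  refine ⟨add_mem h.1 h'.1, fun x φ hφ => ?_⟩
  have e : (⟨z + w, add_mem h.1 h'.1⟩ : integralClosure (MvPolynomial (Fin n) ℤ) Ω) = ⟨z, h.1⟩ + ⟨w, h'.1⟩ := rfl
  rw [e, map_add]
  have h1 := h.2 x φ hφ
  have h2 := h'.2 x φ hφ
  calc _ ≤ _ := norm_add_le _ _
    _ ≤ _ := by linarith

lemma Bd.neg {z : Ω} {A : ℝ} {a : ℕ} (h : Bd (n := n) z A a) : Bd (n := n) (-z) A a := by
  refine ⟨neg_mem h.1, fun x φ hφ => ?_⟩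
  have e : (⟨-z, neg_mem h.1⟩ : integralClosure (MvPolynomial (Fin n) ℤ) Ω) = -⟨z, h.1⟩ := rfl
  rw [e, map_neg, norm_neg]
  exact h.2 x φ hφ

lemma Bd.sub {z w : Ω} {A B : ℝ} {a : ℕ} (h : Bd (n := n) z A a) (h' : Bd (n := n) w B a) :
    Bd (n := n) (z - w) (A + B) a := by
  rw [sub_eq_add_neg]; exact h.add h'.neg

lemma Bd_intCast (c : ℤ) (a : ℕ) : Bd (n := n) (c : Ω) |(c:ℝ)| a := by
  have : (c : Ω) = algebraMap (MvPolynomial (Fin n) ℤ) Ω (c : MvPolynomial (Fin n) ℤ) := by simp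
  rw [this]
  apply Bd.of_Grw
  intro x
  have := one_le_pow₀ (one_le_wt x) (n := a)
  simp only [map_intCast, Int.cast_id]
  nlinarith [abs_nonneg (c:ℝ)]

lemma Bd_one (a : ℕ) : Bd (n := n) (1 : Ω) 1 a := by
  simpa using Bd_intCast (n := n) (Ω := Ω) 1 a

lemma Bd_zero {A : ℝ} (hA : 0 ≤ A) (a : ℕ) : Bd (n := n) (0 : Ω) A a := by
  have := Bd_intCast (n := n) (Ω := Ω) 0 a
  simp only [Int.cast_zero, abs_zero] at this
  exact this.mono hA hA le_rfl

lemma Bd_coeff_prod (s : Multiset Ω) {A : ℝ} {a : ℕ} (hA : 0 ≤ A) (h : ∀ z ∈ s, Bd (n := n) z A a) (k : ℕ) :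
    Bd (n := n) ((s.map fun z => X - C z).prod.coeff k) ((1 + A) ^ s.card) (a * s.card) := by
  induction s using Multiset.induction_on generalizing k with
  | empty =>
    simp only [Multiset.map_zero, Multiset.prod_zero, coeff_one, Multiset.card_zero, pow_zero]
    split_ifs
    · exact Bd_one _
    · exact Bd_zero zero_le_one _
  | cons z s ih =>
    have ih' := ih (fun w hw => h w (Multiset.mem_cons_of_mem hw))
    have hz := h z (Multiset.mem_cons_self z s)
    rw [Multiset.map_cons, Multiset.prod_cons, sub_mul, coeff_sub, coeff_C_mul, Multiset.card_cons]
    have h1 : Bd (n := n) ((X * (s.map fun z => X - C z).prod).coeff k) ((1 + A) ^ s.card) (a * (s.card + 1)) := by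
      rcases k with _ | k
      · rw [coeff_X_mul_zero]; exact Bd_zero (by positivity) _
      · rw [coeff_X_mul]; exact (ih' k).mono (by positivity) le_rfl (by gcongr; omega)
    have h2 := hz.mul (ih' k)
    have h3 := h1.sub (h2.mono (b := a * (s.card + 1)) (by positivity) le_rfl (by ring_nf; rfl))
    convert h3 using 1
    ring

lemma Bd_sum {ι : Type*} (s : Finset ι) (f : ι → Ω) (a : ℕ) (h : ∀ i ∈ s, ∃ A, Bd (n := n) (f i) A a) :
    ∃ A, Bd (n := n) (∑ i ∈ s, f i) A a := by
  classical
  induction s using Finset.induction_on with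
  | empty => exact ⟨0, by simpa using Bd_zero le_rfl a⟩
  | insert i s hi ih =>
    obtain ⟨A, hA⟩ := ih (fun j hj => h j (Finset.mem_insert_of_mem hj))
    obtain ⟨B, hB⟩ := h i (Finset.mem_insert_self i s)
    rw [Finset.sum_insert hi]
    exact ⟨_, hB.add hA⟩

lemma Bd_prod {ι : Type*} (s : Finset ι) (f : ι → Ω) (a : ℕ) (h : ∀ i ∈ s, ∃ A, Bd (n := n) (f i) A a) :
    ∃ A, Bd (n := n) (∏ i ∈ s, f i) A (a * s.card) := by
  classical
  induction s using Finset.induction_on with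
  | empty => exact ⟨1, by simpa using Bd_one 0⟩
  | insert i s hi ih =>
    obtain ⟨A, hA⟩ := ih (fun j hj => h j (Finset.mem_insert_of_mem hj))
    obtain ⟨B, hB⟩ := h i (Finset.mem_insert_self i s)
    rw [Finset.prod_insert hi, Finset.card_insert_of_notMem hi]
    exact ⟨_, by simpa [mul_add, add_comm] using hB.mul hA⟩

lemma Bd_pow {z : Ω} {A : ℝ} {a : ℕ} (h : Bd (n := n) z A a) (k : ℕ) : Bd (n := n) (z ^ k) (A ^ k) (a * k) := by
  induction k with
  | zero => simpa using Bd_one 0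
  | succ k ih => simpa [pow_succ, mul_add] using ih.mul h

end Bd


abbrev RZ (n : ℕ) := MvPolynomial (Fin n) ℤ

/-- substitute `X_i ↦ a` -/
def tau {m : ℕ} (i : Fin (m+1)) (a : ℤ) : RZ (m+1) →+* RZ (m+1) :=
  ((MvPolynomial.rename i.succAbove : RZ m →ₐ[ℤ] RZ (m+1)).toRingHom).comp (sp i a)

/-- view `X_i` as the polynomial variable -/
def ios {m : ℕ} (W : Type) [Field W] [Algebra (RZ (m+1)) W] (i : Fin (m+1)) : RZ (m+1) →+* W[X] :=
  MvPolynomial.eval₂Hom (Int.castRingHom W[X])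
    (i.insertNth X (fun j => C (algebraMap (RZ (m+1)) W (MvPolynomial.X (i.succAbove j)))))

section hom
variable {m : ℕ} {K W : Type} [Field K] [Field W] [Algebra (RZ (m+1)) K]
  [Algebra K W] [Algebra (RZ (m+1)) W] [IsScalarTower (RZ (m+1)) K W]

lemma ios_eval_int (i : Fin (m+1)) (a : ℤ) :
    (evalRingHom (a : W)).comp (ios W i) = (algebraMap (RZ (m+1)) W).comp (tau i a) := by
  apply MvPolynomial.ringHom_ext
  · intro r; simp [ios, tau, sp]
  · intro j
    refine Fin.succAboveCases i ?_ ?_ j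
    · simp [ios, tau, sp]
    · intro k; simp [ios, tau, sp]

lemma ios_eval_xi (i : Fin (m+1)) :
    (evalRingHom (algebraMap (RZ (m+1)) W (MvPolynomial.X i))).comp (ios W i) = algebraMap (RZ (m+1)) W := by
  apply MvPolynomial.ringHom_ext
  · intro r; simp [ios]
  · intro j
    refine Fin.succAboveCases i ?_ ?_ j
    · simp [ios]
    · intro k; simp [ios]

lemma ios_sigma (i : Fin (m+1)) (σ : W ≃ₐ[K] W) :
    (mapRingHom (σ : W →+* W)).comp (ios W i) = ios W i := by
  have hs : ∀ r : RZ (m+1), σ (algebraMap (RZ (m+1)) W r) = algebraMap (RZ (m+1)) W r := by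
    intro r
    rw [IsScalarTower.algebraMap_apply (RZ (m+1)) K W, AlgEquiv.commutes]
  apply MvPolynomial.ringHom_ext
  · intro r; simp [ios]
  · intro j
    refine Fin.succAboveCases i ?_ ?_ j
    · simp [ios]
    · intro k; simp [ios, hs]

lemma sigma_coe (σ : W ≃ₐ[K] W) (r : RZ (m+1)) : σ (algebraMap (RZ (m+1)) W r) = algebraMap (RZ (m+1)) W r := by
  rw [IsScalarTower.algebraMap_apply (RZ (m+1)) K W, AlgEquiv.commutes]

lemma sigma_root (σ : W ≃ₐ[K] W) (f : (RZ (m+1))[X]) (z : W) : aeval (σ z) f = σ (aeval z f) := by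
  rw [aeval_def, aeval_def, ← AlgEquiv.coe_ringEquiv σ, ← RingEquiv.coe_toRingHom, hom_eval₂]
  congr 1
  ext r
  · simp
  · simpa using (sigma_coe σ _).symm
end hom

lemma Dsc_zero_of_collapse {A W : Type} [CommRing A] [IsDomain A] [Field W] (h : A →+* W) (f : A[X]) (hf : f.Monic)
    (r r' : A) (hne : r ≠ r') (hr : f.eval r = 0) (hr' : f.eval r' = 0) (heq : h r = h r') : h (Dsc f) = 0 := by
  have h1 : (X - C r) ∣ f := dvd_iff_isRoot.2 hr
  obtain ⟨g, hg⟩ := h1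
  have h2 : (X - C r') ∣ g := by
    rw [dvd_iff_isRoot, IsRoot.def]
    rw [hg, eval_mul, eval_sub, eval_X, eval_C] at hr'
    exact (mul_eq_zero.1 hr').resolve_left (sub_ne_zero.2 hne.symm)
  obtain ⟨g', hg'⟩ := h2
  have hd : f.natDegree ≠ 0 := by
    intro h0
    rw [hf.natDegree_eq_zero] at h0
    rw [h0] at hr; simp at hr
  obtain ⟨u, v, huv⟩ := Dsc_bezout f hd
  have h3 : (C (Dsc f)).eval₂ h (h r) = 0 := by
    rw [← huv, hg, hg']
    simp [eval₂_add, eval₂_mul, derivative_mul, heq]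
  simpa using h3

section sep
variable {m : ℕ} {K W : Type} [Field K] [Field W] [Algebra (RZ (m+1)) K] [IsFractionRing (RZ (m+1)) K]
  [Algebra K W] [Algebra (RZ (m+1)) W] [IsScalarTower (RZ (m+1)) K W] [IsGalois K W] [CharZero W]

lemma inj_RO (K : Type) {W : Type} [Field K] [Field W] [Algebra (RZ (m+1)) K] [IsFractionRing (RZ (m+1)) K]
    [Algebra K W] [Algebra (RZ (m+1)) W] [IsScalarTower (RZ (m+1)) K W] : Function.Injective (algebraMap (RZ (m+1)) W) := by
  rw [IsScalarTower.algebraMap_eq (RZ (m+1)) K W]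
  exact (algebraMap K W).injective.comp (IsFractionRing.injective (RZ (m+1)) K)

lemma tau_Dsc (i : Fin (m+1)) (a : ℤ) {G : (RZ (m+1))[X]} (hG : G.Monic) (ha : sp i a (Dsc G) ≠ 0) :
    Dsc (G.map (tau i a)) ≠ 0 := by
  rw [Dsc_map _ _ hG]
  intro h
  apply ha
  have : Function.Injective (MvPolynomial.rename i.succAbove : RZ m →ₐ[ℤ] RZ (m+1)) :=
    MvPolynomial.rename_injective _ Fin.succAbove_right_injective
  apply this
  rw [map_zero]
  exact h

theorem sep (i : Fin (m+1)) (G : (RZ (m+1))[X]) (hG : G.Monic) (hirr : Irreducible (G.map (algebraMap (RZ (m+1)) K)))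
    (b : W[X]) (hb : (G.map (ios W i)).eval b = 0) (a : ℤ) (ha : sp i a (Dsc G) ≠ 0) :
    Irreducible ((G.map (tau i a)).map (algebraMap (RZ (m+1)) K)) ∧
    IntermediateField.adjoin K {b.eval (a : W)} =
      IntermediateField.adjoin K {b.eval (algebraMap (RZ (m+1)) W (MvPolynomial.X i))} ∧
    aeval (b.eval (a : W)) (G.map (tau i a)) = 0 ∧
    aeval (b.eval (algebraMap (RZ (m+1)) W (MvPolynomial.X i))) G = 0 := by
  set ξ := algebraMap (RZ (m+1)) W (MvPolynomial.X i) with hξ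
  have e1 : aeval (b.eval (a : W)) (G.map (tau i a)) = 0 := by
    rw [aeval_def, eval₂_map, ← ios_eval_int]
    have := congrArg (evalRingHom (a:W)) hb
    rw [eval_map, hom_eval₂, map_zero] at this
    exact this
  have e2 : aeval (b.eval ξ) G = 0 := by
    rw [aeval_def, ← ios_eval_xi i]
    have := congrArg (evalRingHom ξ) hb
    rw [eval_map, hom_eval₂, map_zero] at this
    exact this
  have hKinj := inj_RO (m := m) (W := W) K
  have hle : IntermediateField.adjoin K {b.eval ξ} ≤ IntermediateField.adjoin K {b.eval (a : W)} := by
    rw [IntermediateField.adjoin_simple_le_iff]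
    apply gal_adjoin
    intro σ hσ
    have hbs : b.map (σ : W →+* W) = b := by
      by_contra hne
      have hr : (G.map (ios W i)).eval (b.map (σ : W →+* W)) = 0 := by
        have := congrArg (mapRingHom (σ : W →+* W)) hb
        rw [eval_map, hom_eval₂, map_zero, ios_sigma] at this
        rw [eval_map]; exact this
      have h0 := Dsc_zero_of_collapse (evalRingHom (a : W)) (G.map (ios W i)) (hG.map _) _ _ hne hr hb (by
        simp only [coe_evalRingHom]
        have := eval_intCast_map (σ : W →+* W) b a
        rw [this]; exact hσ)
      rw [Dsc_map _ _ hG] at h0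
      have h1 : algebraMap (RZ (m+1)) W (tau i a (Dsc G)) = 0 := by
        rw [← h0, ← RingHom.comp_apply, ← RingHom.comp_apply, ios_eval_int]
      rw [← Dsc_map _ _ hG, map_eq_zero_iff _ hKinj] at h1
      exact tau_Dsc i a hG ha h1
    have h2 := eval_map_apply (f := (σ : W →+* W)) (p := b) ξ
    rw [hbs] at h2
    have h3 : (σ : W →+* W) ξ = ξ := sigma_coe (K := K) σ _
    rw [h3] at h2
    exact h2.symm
  have hai : IsIntegral K (b.eval (a:W)) := by
    refine ⟨(G.map (tau i a)).map (algebraMap (RZ (m+1)) K), (hG.map _).map _, ?_⟩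
    rw [eval₂_map, ← IsScalarTower.algebraMap_eq]; exact e1
  have hxi : IsIntegral K (b.eval ξ) := by
    refine ⟨G.map (algebraMap (RZ (m+1)) K), hG.map _, ?_⟩
    rw [eval₂_map, ← IsScalarTower.algebraMap_eq]; exact e2
  have m1 : G.map (algebraMap (RZ (m+1)) K) = minpoly K (b.eval ξ) :=
    minpoly.eq_of_irreducible_of_monic hirr (by rw [aeval_map_algebraMap]; exact e2) (hG.map _)
  have d1 : minpoly K (b.eval (a:W)) ∣ (G.map (tau i a)).map (algebraMap (RZ (m+1)) K) :=
    minpoly.dvd _ _ (by rw [aeval_map_algebraMap]; exact e1)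
  have f1 : Module.finrank K (IntermediateField.adjoin K {b.eval ξ}) = G.natDegree := by
    rw [IntermediateField.adjoin.finrank hxi, ← m1, hG.natDegree_map]
  have f2 := IntermediateField.adjoin.finrank hai
  have n2 : ((G.map (tau i a)).map (algebraMap (RZ (m+1)) K)).natDegree = G.natDegree := by
    rw [(hG.map _).natDegree_map, hG.natDegree_map]
  haveI : FiniteDimensional K (IntermediateField.adjoin K {b.eval (a:W)}) := IntermediateField.adjoin.finiteDimensional hai
  have f3 := IntermediateField.finrank_le_of_le_right hle
  have f4 := natDegree_le_of_dvd d1 ((hG.map _).map _).ne_zero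
  refine ⟨?_, ?_, e1, e2⟩
  · have : (G.map (tau i a)).map (algebraMap (RZ (m+1)) K) = minpoly K (b.eval (a:W)) :=
      eq_of_monic_of_dvd_of_natDegree_le (minpoly.monic hai) ((hG.map _).map _) d1 (by omega)
    rw [this]; exact minpoly.irreducible hai
  · exact (IntermediateField.eq_of_le_of_finrank_le hle (by omega)).symm
end sep


lemma mem_aroots_monic {R W : Type} [CommRing R] [Field W] [Algebra R W] {f : R[X]} (hf : f.Monic) (z : W) :
    z ∈ f.aroots W ↔ aeval z f = 0 := by
  rw [aroots_def, mem_roots (hf.map _).ne_zero, IsRoot.def, eval_map, aeval_def]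

lemma over_split {n : ℕ} {W : Type} [Field W] [IsAlgClosed W] [Algebra (RZ n) W]
    {x : Fin n → ℤ} {φ : integralClosure (RZ n) W →+* ℂ} (hφ : Over x φ)
    (f : (RZ n)[X]) (hf : f.Monic) (t : ℂ)
    (ht : ((f.map (MvPolynomial.eval x)).map (Int.castRingHom ℂ)).eval t = 0) :
    ∃ z : integralClosure (RZ n) W, aeval (z : W) f = 0 ∧ φ z = t := by
  classical
  have hsp : (f.map (algebraMap (RZ n) W)) = ((f.aroots W).map (fun z => X - C z)).prod := by
    have := (IsAlgClosed.splits (f.map (algebraMap (RZ n) W))).eq_prod_roots_of_monic (hf.map _)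
    exact this
  obtain ⟨s, hs⟩ : ∃ s : Multiset (integralClosure (RZ n) W), s.map (algebraMap (integralClosure (RZ n) W) W) = f.aroots W := by
    have hall : ∀ z ∈ f.aroots W, z ∈ integralClosure (RZ n) W := fun z hz => by
      have h := (mem_aroots_monic hf z).1 hz
      exact ⟨f, hf, h⟩
    generalize f.aroots W = t at hall
    induction t using Multiset.induction_on with
    | empty => exact ⟨0, by simp⟩
    | cons z t ih =>
      obtain ⟨s, hs⟩ := ih (fun w hw => hall w (Multiset.mem_cons_of_mem hw))
      refine ⟨⟨z, hall z (Multiset.mem_cons_self z t)⟩ ::ₘ s, ?_⟩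
      rw [Multiset.map_cons, hs]
      rfl
  have hO : f.map (algebraMap (RZ n) (integralClosure (RZ n) W)) = (s.map (fun z => X - C z)).prod := by
    apply Polynomial.map_injective (algebraMap (integralClosure (RZ n) W) W) Subtype.val_injective
    rw [Polynomial.map_map, ← IsScalarTower.algebraMap_eq, hsp, Polynomial.map_multiset_prod, ← hs, Multiset.map_map, Multiset.map_map]
    congr 1
    apply Multiset.map_congr rfl
    intro z _
    simp
  have h1 : (f.map (MvPolynomial.eval x)).map (Int.castRingHom ℂ) = (s.map (fun z => X - C (φ z))).prod := by
    have h2 := congrArg (Polynomial.map φ) hO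
    rw [Polynomial.map_map, Polynomial.map_multiset_prod, Multiset.map_map] at h2
    rw [Polynomial.map_map]
    have e1 : φ.comp (algebraMap (RZ n) (integralClosure (RZ n) W)) = (Int.castRingHom ℂ).comp (MvPolynomial.eval x) := by
      ext r <;> simp [hφ _]
    rw [e1] at h2
    have e2 : s.map (Polynomial.map φ ∘ fun z => X - C z) = s.map (fun z => X - C (φ z)) := by
      refine Multiset.map_congr rfl (fun z _ => ?_)
      simp
    rw [e2] at h2
    exact h2
  rw [h1, eval_multiset_prod, Multiset.map_map, Multiset.prod_eq_zero_iff, Multiset.mem_map] at ht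
  obtain ⟨z, hz, hz0⟩ := ht
  refine ⟨z, ?_, ?_⟩
  · have : (z : W) ∈ f.aroots W := by rw [← hs]; exact Multiset.mem_map_of_mem _ hz
    exact (mem_aroots_monic hf _).1 this
  · simp only [Function.comp, eval_sub, eval_X, eval_C] at hz0
    exact (sub_eq_zero.1 hz0).symm

lemma GE_tau {m : ℕ} (i : Fin (m+1)) (a : ℤ) {p : RZ (m+1)} {δ : ℕ} {H : ℝ} (h : Grw p H δ) : GE (tau i a p) δ := by
  have h1 := h.sp i a
  exact GE.rename (p := sp i a p) ⟨_, h1⟩ i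

lemma GE_bound {n : ℕ} (f : (RZ n)[X]) (δ : ℕ) (h : ∀ k, GE (f.coeff k) δ) :
    ∃ H : ℝ, 1 ≤ H ∧ ∀ k, Grw (f.coeff k) H δ := by
  choose A hA using h
  refine ⟨1 + ∑ k ∈ Finset.range (f.natDegree + 1), A k, ?_, ?_⟩
  · have : 0 ≤ ∑ k ∈ Finset.range (f.natDegree + 1), A k := Finset.sum_nonneg (fun k _ => (hA k).nonneg)
    linarith
  · intro k
    by_cases hk : k ≤ f.natDegree
    · refine (hA k).mono ?_ le_rfl
      have := Finset.single_le_sum (f := A) (fun k _ => (hA k).nonneg) (Finset.mem_range.2 (Nat.lt_succ_of_le hk))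
      linarith
    · rw [coeff_eq_zero_of_natDegree_lt (by omega)]
      intro x
      simp only [map_zero, Int.cast_zero, abs_zero]
      have : 0 ≤ ∑ k ∈ Finset.range (f.natDegree + 1), A k := Finset.sum_nonneg (fun k _ => (hA k).nonneg)
      have h2 : 0 ≤ wt x := by linarith [one_le_wt x]
      positivity

lemma tau_eval {m : ℕ} (i : Fin (m+1)) (a : ℤ) (x : Fin (m+1) → ℤ) :
    (MvPolynomial.eval x).comp (tau i a) = MvPolynomial.eval (i.insertNth a (i.removeNth x) : Fin (m+1) → ℤ) := by
  apply MvPolynomial.ringHom_ext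
  · intro r; simp [tau, sp]
  · intro j
    refine Fin.succAboveCases i ?_ ?_ j
    · simp [tau, sp]
    · intro k; simp [tau, sp, Fin.removeNth]

lemma exists_int_ne {W : Type} [Field W] [CharZero W] (P : W[X]) (hP : P ≠ 0) : ∃ a : ℤ, P.eval (a : W) ≠ 0 := by
  by_contra h
  push Not at h
  apply hP
  apply eq_zero_of_infinite_isRoot
  apply Set.Infinite.mono (s := Set.range (fun a : ℤ => (a : W)))
  · rintro _ ⟨a, rfl⟩; exact h a
  · exact Set.infinite_range_of_injective Int.cast_injective

def bPhi (δ : ℕ) : ℕ := (δ + δ * δ) * δ ^ (δ + 1)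

theorem Phi_exists {m : ℕ} {K W : Type} [Field K] [Field W] [Algebra (RZ (m+1)) K] [IsFractionRing (RZ (m+1)) K]
    [Algebra K W] [Algebra (RZ (m+1)) W] [IsScalarTower (RZ (m+1)) K W] [IsGalois K W] [CharZero W] [IsAlgClosed W]
    (i : Fin (m+1)) (F : (RZ (m+1))[X]) (hF : F.Monic) (δ : ℕ) (hδ : F.natDegree ≤ δ) (H : ℝ) (hH : 1 ≤ H)
    (hG : ∀ k, Grw (F.coeff k) H δ)
    (hno : ∀ Q : W[X], (F.map (ios W i)).eval Q ≠ 0) :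
    ∃ Φ : RZ (m+1), Φ ≠ 0 ∧ GE Φ (bPhi δ) ∧ ∀ x : Fin (m+1) → ℤ, MvPolynomial.eval x Φ ≠ 0 →
      ∀ q : ℤ[X], (F.map (spec i (i.removeNth x))).eval q ≠ 0 := by
  classical
  set av : Fin (δ+1) → ℤ := fun l => ((l : ℕ) : ℤ) with hav
  have havi : Function.Injective av := by
    intro a b hab
    simp only [hav] at hab
    exact Fin.ext (by exact_mod_cast hab)
  set c : ℤ := lagC av with hc
  have hc0 : c ≠ 0 := lagC_ne havi
  have hinj := inj_RO (m := m) (W := W) K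
  set Fc := F.scaleRoots (c : RZ (m+1)) with hFc
  set Qp : (Fin (δ+1) → W) → W[X] := fun ρ => ∑ l, C (ρ l) * (lagL av l).map (Int.castRingHom W) with hQp
  have hU : ∀ ρ, Fc.eval₂ (ios W i) (Qp ρ) ≠ 0 := by
    intro ρ h0
    have h1 : Qp ρ = ios W i (c : RZ (m+1)) * (C ((c : W)⁻¹) * Qp ρ) := by
      rw [map_intCast, ← mul_assoc, ← C_eq_intCast, ← C_mul, mul_inv_cancel₀ (by exact_mod_cast hc0), C_1, one_mul]
    rw [h1, scaleRoots_eval₂_mul] at h0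
    have h2 : ios W i (c : RZ (m+1)) ≠ 0 := by
      rw [map_intCast]; exact_mod_cast hc0
    have h3 := (mul_eq_zero.1 h0).resolve_left (pow_ne_zero _ h2)
    apply hno (C ((c : W)⁻¹) * Qp ρ)
    rw [eval_map]; exact h3
  set Z : Fin (δ+1) → Finset W := fun l => ((F.map (tau i (av l))).aroots W).toFinset with hZ
  have memZ : ∀ l z, z ∈ Z l ↔ aeval z (F.map (tau i (av l))) = 0 := by
    intro l z
    simp only [hZ, Multiset.mem_toFinset]
    exact mem_aroots_monic (hF.map _) z
  have hcardZ : ∀ l, (Z l).card ≤ δ := by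
    intro l
    calc _ ≤ Multiset.card ((F.map (tau i (av l))).aroots W) := Multiset.toFinset_card_le _
      _ ≤ ((F.map (tau i (av l))).map (algebraMap _ W)).natDegree := card_roots' _
      _ ≤ δ := by rw [(hF.map _).natDegree_map, hF.natDegree_map]; exact hδ
  set S := Fintype.piFinset Z with hS
  have hP0 : (∏ ρ ∈ S, Fc.eval₂ (ios W i) (Qp ρ)) ≠ 0 := Finset.prod_ne_zero_iff.2 (fun ρ _ => hU ρ)
  obtain ⟨a0, ha0⟩ := exists_int_ne _ hP0
  rw [eval_prod] at ha0
  set v : (Fin (δ+1) → W) → W := fun ρ => ∑ l, ρ l * (((lagL av l).eval a0 : ℤ) : W) with hv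
  set w : (Fin (δ+1) → W) → W := fun ρ => Fc.eval₂ ((algebraMap (RZ (m+1)) W).comp (tau i a0)) (v ρ) with hw
  have hwU : ∀ ρ, (Fc.eval₂ (ios W i) (Qp ρ)).eval (a0 : W) = w ρ := by
    intro ρ
    rw [← coe_evalRingHom, hom_eval₂, ios_eval_int]
    simp only [hw]
    congr 1
    simp only [hQp, hv, coe_evalRingHom, eval_finsetSum, eval_mul, eval_C]
    refine Finset.sum_congr rfl (fun l _ => ?_)
    rw [eval_intCast_map]; simp
  simp only [hwU] at ha0
  -- boundedness
  have hBρ : ∀ ρ ∈ S, ∀ l, ∃ A, Bd (n := m+1) (ρ l) A δ := by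
    intro ρ hρ l
    obtain ⟨A, hA1, hA⟩ := GE_bound (F.map (tau i (av l))) δ (fun k => by
      rw [coeff_map]; exact GE_tau i _ (hG k))
    have := (memZ l (ρ l)).1 (Fintype.mem_piFinset.1 hρ l)
    exact ⟨_, Bd_root (hF.map _) hA1 hA this⟩
  have hBv : ∀ ρ ∈ S, ∃ A, Bd (n := m+1) (v ρ) A δ := by
    intro ρ hρ
    apply Bd_sum
    intro l _
    obtain ⟨A, hA⟩ := hBρ ρ hρ l
    exact ⟨_, by simpa using hA.mul (Bd_intCast (n := m+1) (Ω := W) ((lagL av l).eval a0) 0)⟩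
  have hBw : ∀ ρ ∈ S, ∃ A, Bd (n := m+1) (w ρ) A (δ + δ * δ) := by
    intro ρ hρ
    simp only [hw, eval₂_eq_sum_range]
    apply Bd_sum
    intro j hj
    obtain ⟨A, hA⟩ := hBv ρ hρ
    have hj' : j ≤ δ := by
      have := Finset.mem_range.1 hj
      rw [hFc, natDegree_scaleRoots] at this; omega
    obtain ⟨A1, h1⟩ := GE_tau i a0 (hG j)
    have h2 := ((Bd.of_Grw (Ω := W) h1).mul (Bd_intCast (n := m+1) (Ω := W) (c ^ (F.natDegree - j)) 0)).mul (Bd_pow hA j)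
    have e : (algebraMap (RZ (m+1)) W) (tau i a0 (F.coeff j)) * ((c ^ (F.natDegree - j) : ℤ) : W) * v ρ ^ j
        = ((algebraMap (RZ (m+1)) W).comp (tau i a0)) (Fc.coeff j) * v ρ ^ j := by
      rw [hFc, coeff_scaleRoots, RingHom.comp_apply, map_mul, map_mul]
      simp
    rw [e] at h2
    obtain ⟨φ0, hφ0⟩ := exists_over hinj (0 : Fin (m+1) → ℤ)
    refine ⟨_, h2.mono ?_ le_rfl (by gcongr; omega)⟩
    have := h2.2 0 φ0 hφ0
    have h3 : (0:ℝ) ≤ _ := (norm_nonneg _).trans this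
    have h4 : 0 < wt (0 : Fin (m+1) → ℤ) := by linarith [one_le_wt (0 : Fin (m+1) → ℤ)]
    exact nonneg_of_mul_nonneg_left h3 (pow_pos h4 _)
  obtain ⟨A, hA⟩ := Bd_prod (n := m+1) S w _ hBw
  -- invariance
  have hfix : ∀ σ : W ≃ₐ[K] W, σ (∏ ρ ∈ S, w ρ) = ∏ ρ ∈ S, w ρ := by
    intro σ
    rw [map_prod]
    have hσw : ∀ ρ, σ (w ρ) = w (fun l => σ (ρ l)) := by
      intro ρ
      simp only [hw]
      have e1 : v (fun l => σ (ρ l)) = σ (v ρ) := by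
        simp only [hv, map_sum, map_mul, map_intCast]
      rw [e1, ← AlgEquiv.coe_ringEquiv σ, ← RingEquiv.coe_toRingHom, hom_eval₂]
      congr 1
      apply RingHom.ext
      intro r
      exact sigma_coe (K := K) σ _
    have hσS : ∀ τ : W ≃ₐ[K] W, ∀ ρ ∈ S, (fun l => τ (ρ l)) ∈ S := by
      intro τ ρ hρ
      rw [hS, Fintype.mem_piFinset] at hρ ⊢
      intro l
      rw [memZ, sigma_root, (memZ l _).1 (hρ l), map_zero]
    refine Finset.prod_bij' (fun ρ _ l => σ (ρ l)) (fun ρ _ l => σ.symm (ρ l)) (fun ρ hρ => hσS σ ρ hρ)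
      (fun ρ hρ => hσS σ.symm ρ hρ) ?_ ?_ ?_
    · intro ρ _; simp
    · intro ρ _; simp
    · intro ρ _; exact hσw ρ
  obtain ⟨κ, hκ⟩ := gal_fixed (K := K) _ hfix
  have hintg : IsIntegral (RZ (m+1)) κ := by
    rw [← isIntegral_algebraMap_iff (algebraMap K W).injective (A := K) (B := W), hκ]
    exact hA.1
  obtain ⟨Φ, hΦ⟩ := IsIntegrallyClosed.isIntegral_iff.1 hintg
  have hΦW : algebraMap (RZ (m+1)) W Φ = ∏ ρ ∈ S, w ρ := by
    rw [IsScalarTower.algebraMap_apply (RZ (m+1)) K W, hΦ, hκ]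
  have hcard : S.card ≤ δ ^ (δ+1) := by
    rw [hS, Fintype.card_piFinset]
    calc _ ≤ ∏ l : Fin (δ+1), δ := Finset.prod_le_prod' (fun l _ => hcardZ l)
      _ = _ := by simp
  refine ⟨Φ, ?_, ?_, ?_⟩
  · rintro rfl
    rw [map_zero] at hΦW
    exact ha0 hΦW.symm
  · rw [← hΦW] at hA
    exact GE.mono ⟨_, Bd_coe hinj hA⟩ (by unfold bPhi; gcongr)
  · intro x hx q hq
    apply hx
    obtain ⟨φ, hφ⟩ := exists_over hinj x
    set x' : Fin m → ℤ := i.removeNth x with hx'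
    have hqd : q.natDegree ≤ δ := root_natDegree hF hH hG i hq
    have hqe : ∀ s : ℤ, (F.map (MvPolynomial.eval (i.insertNth s x' : Fin (m+1) → ℤ))).eval (q.eval s) = 0 := by
      intro s
      have := congrArg (evalRingHom s) hq
      rw [eval_map, hom_eval₂, spec_comp, map_zero] at this
      rw [eval_map]; exact this
    have hz : ∀ l, ∃ z : integralClosure (RZ (m+1)) W, aeval (z : W) (F.map (tau i (av l))) = 0 ∧ φ z = ((q.eval (av l) : ℤ) : ℂ) := by
      intro l
      apply over_split hφ _ (hF.map _)
      rw [Polynomial.map_map (tau i (av l)) (MvPolynomial.eval x), tau_eval, eval_intCast_map, Int.cast_id, hqe]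
      simp
    choose z hz0 hzφ using hz
    set ρ : Fin (δ+1) → W := fun l => z l with hρ
    have hρS : ρ ∈ S := by
      rw [hS, Fintype.mem_piFinset]
      intro l
      rw [memZ]; exact hz0 l
    set vO : integralClosure (RZ (m+1)) W := ∑ l, z l * (((lagL av l).eval a0 : ℤ) : integralClosure (RZ (m+1)) W) with hvO
    set wO : integralClosure (RZ (m+1)) W :=
      Fc.eval₂ ((algebraMap (RZ (m+1)) (integralClosure (RZ (m+1)) W)).comp (tau i a0)) vO with hwO
    have hvv : algebraMap (integralClosure (RZ (m+1)) W) W vO = v ρ := by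
      simp only [hvO, hv, hρ, map_sum, map_mul, map_intCast]
      rfl
    have hww : algebraMap (integralClosure (RZ (m+1)) W) W wO = w ρ := by
      rw [hwO, hom_eval₂, hvv, ← RingHom.comp_assoc, ← IsScalarTower.algebraMap_eq]
    have hvφ : φ vO = (c : ℂ) * ((q.eval a0 : ℤ) : ℂ) := by
      have hl := congrArg (eval a0) (lagrange havi q (by omega))
      rw [eval_mul, eval_C, eval_finsetSum] at hl
      simp only [Int.cast_id, eval_mul, eval_C] at hl
      rw [← hc] at hl
      rw [← Int.cast_mul, hl]
      rw [hvO, map_sum, Int.cast_sum]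
      refine Finset.sum_congr rfl (fun l _ => ?_)
      have e : (lagL av l).map (Int.castRingHom ℤ) = lagL av l := by
        rw [show Int.castRingHom ℤ = RingHom.id ℤ from RingHom.ext_int _ _, Polynomial.map_id]
      rw [map_mul, map_intCast, hzφ, e, Int.cast_mul]
    have hφw : φ wO = 0 := by
      rw [hwO, hom_eval₂, hvφ]
      have e : φ.comp ((algebraMap (RZ (m+1)) (integralClosure (RZ (m+1)) W)).comp (tau i a0))
          = (Int.castRingHom ℂ).comp (MvPolynomial.eval (i.insertNth a0 x' : Fin (m+1) → ℤ)) := by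
        rw [← tau_eval]
        apply RingHom.ext
        intro r
        exact hφ _
      rw [e]
      have e2 : (c : ℂ) = ((Int.castRingHom ℂ).comp (MvPolynomial.eval (i.insertNth a0 x' : Fin (m+1) → ℤ))) (c : RZ (m+1)) := by simp
      rw [e2, hFc, scaleRoots_eval₂_mul]
      have e3 := congrArg (Int.castRingHom ℂ) (hqe a0)
      rw [eval_map, hom_eval₂, map_zero] at e3
      have e4 : ((q.eval a0 : ℤ) : ℂ) = (Int.castRingHom ℂ) (q.eval a0) := rfl
      rw [e4, e3, mul_zero]
    have hrest : IsIntegral (RZ (m+1)) (∏ ρ' ∈ S.erase ρ, w ρ') := by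
      apply IsIntegral.prod
      intro ρ' h'
      obtain ⟨A', hA'⟩ := hBw ρ' (Finset.mem_of_mem_erase h')
      exact hA'.1
    have hfac : algebraMap (RZ (m+1)) (integralClosure (RZ (m+1)) W) Φ = wO * ⟨_, hrest⟩ := by
      apply Subtype.ext
      refine Eq.trans hΦW ?_
      rw [← Finset.mul_prod_erase S w hρS, ← hww]
      rfl
    have h5 := hφ Φ
    rw [hfac, map_mul, hφw, zero_mul] at h5
    exact_mod_cast h5.symm


lemma frac_lift {A K L : Type} [CommRing A] [Field K] [Field L] [Algebra A K] [IsFractionRing A K]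
    (ψ : A →+* L) (h : Function.Injective ψ) : ∃ κ : K →+* L, κ.comp (algebraMap A K) = ψ :=
  ⟨IsFractionRing.lift h, RingHom.ext (fun r => IsFractionRing.lift_algebraMap h r)⟩

lemma inj_comp' {A B D : Type} [CommRing A] [CommRing B] [CommRing D] (f : A →+* B) (g : B →+* D)
    (hf : Function.Injective f) (hg : Function.Injective g) : Function.Injective (g.comp f) := by
  intro x y h
  exact hf (hg h)

lemma inj_of_comp' {A B D : Type} [CommRing A] [CommRing B] [CommRing D] (f : A →+* B) (g : B →+* D)
    (h : Function.Injective (g.comp f)) : Function.Injective f := by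
  intro x y hxy
  apply h
  simp [hxy]

section beta
variable {m : ℕ} {K W : Type} [Field K] [Field W] [Algebra (RZ (m+1)) K] [IsFractionRing (RZ (m+1)) K]
    [Algebra K W] [Algebra (RZ (m+1)) W] [IsScalarTower (RZ (m+1)) K W] [IsGalois K W] [CharZero W] [IsAlgClosed W]

lemma Bd_sigma (σ : W ≃ₐ[K] W) {z : W} {A : ℝ} {a : ℕ} (h : Bd (n := m+1) z A a) : Bd (n := m+1) (σ z) A a := by
  let σR : W →ₐ[RZ (m+1)] W := (σ.toAlgHom).restrictScalars (RZ (m+1))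
  let σO := σR.mapIntegralClosure
  have hi : IsIntegral (RZ (m+1)) (σ z) := h.isIntegral.map σR
  refine ⟨hi, fun x φ hφ => ?_⟩
  have := h.2 x (φ.comp σO.toRingHom) (by
    intro r
    rw [RingHom.comp_apply]
    have : σO.toRingHom (algebraMap (RZ (m+1)) _ r) = algebraMap (RZ (m+1)) _ r := σO.commutes r
    rw [this]; exact hφ r)
  exact this

theorem beta_exists (F : (RZ (m+1))[X]) (hF : F.Monic) (hirr : Irreducible (F.map (algebraMap (RZ (m+1)) K)))
    (δ : ℕ) (hδ : F.natDegree ≤ δ) (H : ℝ) (hH : 1 ≤ H)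
    (hG : ∀ k, Grw (F.coeff k) H δ) (y α0 : W) (hy : aeval y F = 0)
    (hα0 : α0 ∈ IntermediateField.adjoin K {y}) (hαnK : ∀ k : K, algebraMap K W k ≠ α0) :
    ∃ β : W, β ∈ IntermediateField.adjoin K {α0} ∧ IsIntegral (RZ (m+1)) β ∧ (minpoly (RZ (m+1)) β).Monic ∧
      Irreducible ((minpoly (RZ (m+1)) β).map (algebraMap (RZ (m+1)) K)) ∧
      2 ≤ (minpoly (RZ (m+1)) β).natDegree ∧ (minpoly (RZ (m+1)) β).natDegree ≤ δ ∧
      ∀ k, Grw ((minpoly (RZ (m+1)) β).coeff k) ((1 + (1 + 2 * H) ^ δ) ^ δ) (δ * δ * δ) := by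
  classical
  set rts := (F.aroots W).toFinset with hrts
  have memr : ∀ z, z ∈ rts ↔ aeval z F = 0 := by
    intro z; rw [hrts, Multiset.mem_toFinset]; exact mem_aroots_monic hF z
  set s := rts.filter (fun z => ∃ η : W ≃ₐ[K] W, η α0 = α0 ∧ η y = z) with hs
  have mems : ∀ z, z ∈ s ↔ ∃ η : W ≃ₐ[K] W, η α0 = α0 ∧ η y = z := by
    intro z
    rw [hs, Finset.mem_filter, memr]
    constructor
    · exact fun h => h.2
    · rintro ⟨η, h1, rfl⟩
      exact ⟨by rw [sigma_root, hy, map_zero], η, h1, rfl⟩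
  have hcards : s.card ≤ δ := by
    calc _ ≤ rts.card := Finset.card_filter_le _ _
      _ ≤ Multiset.card (F.aroots W) := Multiset.toFinset_card_le _
      _ ≤ (F.map (algebraMap _ W)).natDegree := card_roots' _
      _ ≤ δ := by rw [hF.natDegree_map]; exact hδ
  set h : W[X] := ∏ z ∈ s, (X - C z) with hh
  have hfix : ∀ σ : W ≃ₐ[K] W, σ α0 = α0 → h.map (σ : W →+* W) = h := by
    intro σ hσ
    rw [hh, Polynomial.map_prod]
    have hσs : ∀ τ : W ≃ₐ[K] W, τ α0 = α0 → ∀ z ∈ s, τ z ∈ s := by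
      intro τ hτ z hz
      obtain ⟨η, h1, rfl⟩ := (mems z).1 hz
      exact (mems _).2 ⟨η.trans τ, by simp [h1, hτ], by simp⟩
    refine Finset.prod_bij' (fun z _ => σ z) (fun z _ => σ.symm z) (hσs σ hσ) (hσs σ.symm ?_) ?_ ?_ ?_
    · rw [AlgEquiv.symm_apply_eq, hσ]
    · intro z _; simp
    · intro z _; simp
    · intro z _; simp
  have hcoef : ∀ k, h.coeff k ∈ IntermediateField.adjoin K {α0} := by
    intro k
    apply gal_adjoin
    intro σ hσ
    have := congrArg (fun p => coeff p k) (hfix σ hσ)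
    simpa [coeff_map] using this
  have hex : ∃ k, ∀ κ : K, algebraMap K W κ ≠ h.coeff k := by
    by_contra hcon
    push Not at hcon
    obtain ⟨κ, hκ⟩ := gal_fixed (K := K) α0 (by
      intro σ
      have h1 : h.map (σ : W →+* W) = h := by
        ext k
        obtain ⟨κ, hκ⟩ := hcon k
        rw [coeff_map, ← hκ]
        exact σ.commutes κ
      have hyr : h.eval y = 0 := by
        rw [hh, eval_prod, Finset.prod_eq_zero (i := y) ((mems y).2 ⟨AlgEquiv.refl, rfl, rfl⟩)]
        simp
      have h2 := eval_map_apply (f := (σ : W →+* W)) (p := h) y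
      rw [h1, hyr, map_zero] at h2
      rw [hh, eval_prod, Finset.prod_eq_zero_iff] at h2
      obtain ⟨z, hz, hz0⟩ := h2
      rw [eval_sub, eval_X, eval_C, sub_eq_zero] at hz0
      obtain ⟨η, e1, e2⟩ := (mems z).1 hz
      have e3 : (σ.trans η.symm) y = y := by
        rw [AlgEquiv.trans_apply, AlgEquiv.symm_apply_eq, e2]
        exact hz0
      have e4 := adjoin_fixed (K := K) y α0 hα0 _ e3
      rw [AlgEquiv.trans_apply, AlgEquiv.symm_apply_eq, e1] at e4
      exact e4)
    exact hαnK κ hκ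
  obtain ⟨k, hk⟩ := hex
  set β := h.coeff k with hβ
  have hBz : ∀ z ∈ s.val, Bd (n := m+1) z (2 * H) δ := by
    intro z hz
    exact Bd_root hF hH hG ((memr z).1 (Finset.mem_filter.1 hz).1)
  have hBβ : Bd (n := m+1) β ((1 + 2 * H) ^ δ) (δ * δ) := by
    have h1 := Bd_coeff_prod (n := m+1) s.val (by linarith) hBz k
    refine Bd.mono h1 (by positivity) ?_ ?_
    · exact pow_le_pow_right₀ (by linarith) hcards
    · exact Nat.mul_le_mul_left _ hcards
  have hintg : IsIntegral (RZ (m+1)) β := hBβ.1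
  have hmm := minpoly.monic hintg
  have hmK : minpoly K β = (minpoly (RZ (m+1)) β).map (algebraMap (RZ (m+1)) K) :=
    minpoly.isIntegrallyClosed_eq_field_fractions' K hintg
  have hintK : IsIntegral K β := hintg.tower_top
  have hirrβ := minpoly.irreducible hintK
  have hyK : IsIntegral K y := by
    refine ⟨F.map (algebraMap (RZ (m+1)) K), hF.map _, ?_⟩
    rw [eval₂_map, ← IsScalarTower.algebraMap_eq]; exact hy
  have hdeg : (minpoly (RZ (m+1)) β).natDegree = (minpoly K β).natDegree := by
    rw [hmK, hmm.natDegree_map]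
  have hle : IntermediateField.adjoin K {β} ≤ IntermediateField.adjoin K {y} := by
    rw [IntermediateField.adjoin_simple_le_iff]
    have : IntermediateField.adjoin K {α0} ≤ IntermediateField.adjoin K {y} := by
      rw [IntermediateField.adjoin_simple_le_iff]; exact hα0
    exact this (hcoef k)
  haveI : FiniteDimensional K (IntermediateField.adjoin K {y}) := IntermediateField.adjoin.finiteDimensional hyK
  have hdegle : (minpoly K β).natDegree ≤ δ := by
    have h1 := IntermediateField.finrank_le_of_le_right hle
    rw [IntermediateField.adjoin.finrank hintK, IntermediateField.adjoin.finrank hyK] at h1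
    have h2 : minpoly K y ∣ F.map (algebraMap (RZ (m+1)) K) :=
      minpoly.dvd _ _ (by rw [aeval_map_algebraMap]; exact hy)
    have h3 := natDegree_le_of_dvd h2 (hF.map _).ne_zero
    rw [hF.natDegree_map] at h3
    omega
  refine ⟨β, hcoef k, hintg, hmm, hmK ▸ hirrβ, ?_, hdeg ▸ hdegle, ?_⟩
  · rw [hdeg]
    by_contra hlt
    have h1 : (minpoly K β).natDegree = 1 := by
      have := minpoly.natDegree_pos hintK
      omega
    rw [minpoly.natDegree_eq_one_iff] at h1
    obtain ⟨κ, hκ⟩ := h1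
    exact hk κ hκ
  · intro j
    apply Bd_coe (inj_RO (m := m) (W := W) K)
    have hsp : ((minpoly (RZ (m+1)) β).map (algebraMap (RZ (m+1)) W)) =
        (((minpoly (RZ (m+1)) β).aroots W).map (fun z => X - C z)).prod :=
      (IsAlgClosed.splits ((minpoly (RZ (m+1)) β).map (algebraMap (RZ (m+1)) W))).eq_prod_roots_of_monic (hmm.map _)
    rw [← coeff_map, hsp]
    have hcard : Multiset.card ((minpoly (RZ (m+1)) β).aroots W) ≤ δ := by
      calc _ ≤ ((minpoly (RZ (m+1)) β).map (algebraMap _ W)).natDegree := card_roots' _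
        _ ≤ δ := by rw [hmm.natDegree_map, hdeg]; exact hdegle
    have h1 := Bd_coeff_prod (n := m+1) ((minpoly (RZ (m+1)) β).aroots W) (A := (1 + 2 * H) ^ δ) (a := δ * δ)
      (by positivity) (by
        intro z hz
        have hz0 := (mem_aroots_monic hmm z).1 hz
        obtain ⟨σ, rfl⟩ := gal_conj (K := K) (minpoly K β) hirrβ β z (minpoly.aeval K β) (by
          rw [hmK, aeval_map_algebraMap]; exact hz0)
        exact Bd_sigma σ hBβ) j
    refine h1.mono (by positivity) ?_ ?_
    · exact pow_le_pow_right₀ (by have : 0 ≤ (1 + 2 * H) ^ δ := by positivity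
                                  linarith) hcard
    · exact Nat.mul_le_mul_left _ hcard

lemma ios_const (i : Fin (m+1)) (p : RZ (m+1)) (hp : p.degreeOf i = 0) :
    ios W i p = C (algebraMap (RZ (m+1)) W p) := by
  obtain ⟨q, rfl⟩ := MvPolynomial.exists_rename_eq_of_vars_subset_range p i.succAbove Fin.succAbove_right_injective (by
    intro j hj
    rw [Fin.range_succAbove]
    rintro rfl
    exact (MvPolynomial.mem_vars_iff_degreeOf_ne_zero.1 hj) hp)
  have : (ios W i).comp (MvPolynomial.rename i.succAbove : RZ m →ₐ[ℤ] RZ (m+1)).toRingHom =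
      (C.comp (algebraMap (RZ (m+1)) W)).comp (MvPolynomial.rename i.succAbove : RZ m →ₐ[ℤ] RZ (m+1)).toRingHom := by
    apply MvPolynomial.ringHom_ext
    · intro r; simp [ios]
    · intro j; simp [ios]
  exact DFunLike.congr_fun this q

set_option maxHeartbeats 400000 in
theorem b_exists_aux (L : Type) [Field L] [Algebra W[X] L] [IsFractionRing W[X] L] (i : Fin (m+1)) (G0 : (RZ (m+1))[X]) (hirr0 : Irreducible (G0.map (algebraMap (RZ (m+1)) K)))
    (hdeg : ∀ k, (G0.coeff k).degreeOf i = 0) (α0 : W) (hα0 : aeval α0 G0 = 0)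
    (β : W) (hβ : β ∈ IntermediateField.adjoin K {α0}) (G : (RZ (m+1))[X]) (hG : G.Monic) (hGβ : aeval β G = 0) :
    ∃ b : W[X], (G.map (ios W i)).eval b = 0 := by
  have hinj := inj_RO (m := m) (W := W) K
  have hiosinj : Function.Injective (ios W i) := by
    have := ios_eval_xi (W := W) i
    rw [← this] at hinj
    exact inj_of_comp' _ _ hinj
  have hψ : Function.Injective ((algebraMap W[X] L).comp (ios W i)) :=
    inj_comp' _ _ hiosinj (IsFractionRing.injective W[X] L)
  obtain ⟨κ, hκ⟩ : ∃ κ : K →+* L, κ.comp (algebraMap (RZ (m+1)) K) = (algebraMap W[X] L).comp (ios W i) :=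
    frac_lift _ hψ
  obtain ⟨α', hα'⟩ : ∃ a : L, a = algebraMap W[X] L (C α0) := ⟨_, rfl⟩
  have h1 : (G0.map (algebraMap (RZ (m+1)) K)).eval₂ κ α' = 0 := by
    rw [eval₂_map, hκ, hα', ← hom_eval₂]
    have : G0.eval₂ (ios W i) (C α0) = C (aeval α0 G0) := by
      rw [eval₂_eq_sum_range, aeval_eq_sum_range, map_sum]
      refine Finset.sum_congr rfl (fun k _ => ?_)
      rw [ios_const i _ (hdeg k), Algebra.smul_def, map_mul, map_pow]
    rw [this, hα0, map_zero, map_zero]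
  have hαi : IsIntegral K α0 := by
    have : IsAlgebraic K α0 := ⟨_, hirr0.ne_zero, by rw [aeval_map_algebraMap]; exact hα0⟩
    exact this.isIntegral
  have h2 : (minpoly K α0).eval₂ κ α' = 0 := by
    have hass : Associated (minpoly K α0) (G0.map (algebraMap (RZ (m+1)) K)) :=
      (minpoly.irreducible hαi).associated_of_dvd hirr0 (minpoly.dvd K α0 (by rw [aeval_map_algebraMap]; exact hα0))
    obtain ⟨u, hu⟩ := hass.symm.dvd
    rw [hu, eval₂_mul, h1, zero_mul]
  obtain ⟨g, hg⟩ : ∃ g : K[X], aeval α0 g = β := by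
    have h3 : β ∈ (IntermediateField.adjoin K {α0}).toSubalgebra := hβ
    rw [IntermediateField.adjoin_simple_toSubalgebra_of_isAlgebraic hαi.isAlgebraic, Algebra.adjoin_singleton_eq_range_aeval] at h3
    exact h3
  have h3 : minpoly K α0 ∣ (G.map (algebraMap (RZ (m+1)) K)).comp g := by
    apply minpoly.dvd
    rw [aeval_comp, hg, aeval_map_algebraMap]
    exact hGβ
  obtain ⟨b0, hb0⟩ : ∃ a : L, a = g.eval₂ κ α' := ⟨_, rfl⟩
  have h4 : (G.map (algebraMap (RZ (m+1)) K)).eval₂ κ b0 = 0 := by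
    obtain ⟨u, hu⟩ := h3
    have := congrArg (eval₂ κ α') hu
    rw [eval₂_comp, eval₂_mul, h2, zero_mul, ← hb0] at this
    exact this
  rw [eval₂_map, hκ, ← eval₂_map] at h4
  have h5 : IsIntegral W[X] b0 := ⟨G.map (ios W i), hG.map _, h4⟩
  obtain ⟨b, hb⟩ := IsIntegrallyClosed.isIntegral_iff.1 h5
  refine ⟨b, ?_⟩
  rw [← hb, eval₂_at_apply] at h4
  exact (map_eq_zero_iff _ (IsFractionRing.injective W[X] L)).1 h4

theorem b_exists (i : Fin (m+1)) (G0 : (RZ (m+1))[X]) (hirr0 : Irreducible (G0.map (algebraMap (RZ (m+1)) K)))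
    (hdeg : ∀ k, (G0.coeff k).degreeOf i = 0) (α0 : W) (hα0 : aeval α0 G0 = 0)
    (β : W) (hβ : β ∈ IntermediateField.adjoin K {α0}) (G : (RZ (m+1))[X]) (hG : G.Monic) (hGβ : aeval β G = 0) :
    ∃ b : W[X], (G.map (ios W i)).eval b = 0 :=
  b_exists_aux (K := K) (FractionRing W[X]) i G0 hirr0 hdeg α0 hα0 β hβ G hG hGβ
end beta


lemma disc_gen {A K L W : Type} [CommRing A] [IsDomain A] [IsIntegrallyClosed A] [Field K] [Field L] [Field W]
    [Algebra A K] [IsFractionRing A K] [Algebra K L] [Algebra A L] [IsScalarTower A K L] [Algebra K W] [Algebra A W]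
    [IsScalarTower A K W] [IsAlgClosed W] [Algebra.IsSeparable K L] (B : PowerBasis K L) (hB : IsIntegral A B.gen) :
    ∃ D : A, D ≠ 0 ∧ (∃ τ : Fin B.dim → (L →ₐ[K] W), algebraMap A W D =
      ∏ i : Fin B.dim, ∏ j ∈ Finset.Ioi i, (τ j B.gen - τ i B.gen) ^ 2) ∧
      ∀ z : L, IsIntegral A z → ∃ g : A[X], algebraMap A L D * z = aeval B.gen g := by
  haveI : FiniteDimensional K L := B.finite
  have h1 : IsIntegral A (Algebra.discr K B.basis) := by
    apply Algebra.discr_isIntegral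
    intro i
    rw [B.basis_eq_pow]
    exact hB.pow _
  obtain ⟨D, hD⟩ := IsIntegrallyClosed.isIntegral_iff.1 h1
  refine ⟨D, ?_, ?_, ?_⟩
  · rintro rfl
    rw [map_zero] at hD
    exact Algebra.discr_not_zero_of_basis K B.basis hD.symm
  · have hc : Fintype.card (L →ₐ[K] W) = B.dim := by
      rw [AlgHom.card, B.finrank]
    let e : Fin B.dim ≃ (L →ₐ[K] W) := (Fintype.equivFinOfCardEq hc).symm
    refine ⟨fun i => e i, ?_⟩
    rw [IsScalarTower.algebraMap_apply A K W, hD]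
    exact Algebra.discr_powerBasis_eq_prod K W B e
  · intro z hz
    have := Algebra.discr_mul_isIntegral_mem_adjoin K hB hz
    rw [Algebra.adjoin_singleton_eq_range_aeval] at this
    obtain ⟨g, hg⟩ := this
    refine ⟨g, ?_⟩
    rw [← hD, Algebra.smul_def, ← IsScalarTower.algebraMap_apply A K L] at hg
    exact hg.symm

section disc
variable {m : ℕ} {K W : Type} [Field K] [Field W] [Algebra (RZ (m+1)) K] [IsFractionRing (RZ (m+1)) K]
    [Algebra K W] [Algebra (RZ (m+1)) W] [IsScalarTower (RZ (m+1)) K W] [IsGalois K W] [CharZero W] [IsAlgClosed W]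

theorem D_exists (F : (RZ (m+1))[X]) (hF : F.Monic) (δ : ℕ) (hδ : F.natDegree ≤ δ) (H : ℝ) (hH : 1 ≤ H)
    (hG : ∀ k, Grw (F.coeff k) H δ) (y α : W) (hy : aeval y F = 0) (hα : IsIntegral (RZ (m+1)) α)
    (hmem : α ∈ IntermediateField.adjoin K {y}) :
    ∃ D : RZ (m+1), D ≠ 0 ∧ GE D (2 * δ * δ * δ) ∧ ∃ g : (RZ (m+1))[X], algebraMap _ W D * α = aeval y g := by
  have hyi : IsIntegral (RZ (m+1)) y := ⟨F, hF, hy⟩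
  have hyK : IsIntegral K y := hyi.tower_top
  let B := IntermediateField.adjoin.powerBasis hyK
  have hgen : B.gen = IntermediateField.AdjoinSimple.gen K y := IntermediateField.adjoin.powerBasis_gen hyK
  have hgW : algebraMap (IntermediateField.adjoin K {y}) W B.gen = y := by
    rw [hgen]; exact IntermediateField.AdjoinSimple.algebraMap_gen K y
  have hinjL : Function.Injective (algebraMap (IntermediateField.adjoin K {y}) W) := Subtype.val_injective
  haveI hST : IsScalarTower (RZ (m+1)) (IntermediateField.adjoin K {y}) W :=
    IsScalarTower.of_algebraMap_eq (fun r => rfl)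
  have hBi : IsIntegral (RZ (m+1)) B.gen := by
    rw [← isIntegral_algebraMap_iff hinjL, hgW]; exact hyi
  haveI : Algebra.IsSeparable K (IntermediateField.adjoin K {y}) := inferInstance
  obtain ⟨D, hD0, ⟨τ, hτ⟩, hD⟩ := disc_gen (A := RZ (m+1)) (K := K) (W := W) B hBi
  refine ⟨D, hD0, ?_, ?_⟩
  · have hFB : aeval B.gen F = 0 := by
      apply hinjL
      rw [map_zero, ← aeval_algebraMap_apply, hgW, hy]
    have hroot : ∀ j, aeval (τ j B.gen) F = 0 := by
      intro j
      have := (aeval_algHom_apply ((τ j).restrictScalars (RZ (m+1))) B.gen F)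
      rw [hFB, map_zero] at this
      exact this
    have hdim : B.dim ≤ δ := by
      have h1 : B.dim = (minpoly K y).natDegree := IntermediateField.adjoin.powerBasis_dim hyK
      rw [h1]
      have h2 : minpoly K y ∣ F.map (algebraMap (RZ (m+1)) K) := minpoly.dvd _ _ (by
        rw [aeval_map_algebraMap]; exact hy)
      have := natDegree_le_of_dvd h2 (hF.map _).ne_zero
      rw [hF.natDegree_map] at this
      omega
    have hb : ∀ i : Fin B.dim, ∀ j, ∃ A, Bd (n := m+1) ((τ j B.gen - τ i B.gen) ^ 2) A (δ * 2) := fun i j =>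
      ⟨_, Bd_pow ((Bd_root hF hH hG (hroot j)).sub (Bd_root hF hH hG (hroot i))) 2⟩
    have hb2 : ∀ i : Fin B.dim, ∃ A, Bd (n := m+1) (∏ j ∈ Finset.Ioi i, (τ j B.gen - τ i B.gen) ^ 2) A (δ * 2 * δ) := by
      intro i
      obtain ⟨A, hA⟩ := Bd_prod (n := m+1) (Finset.Ioi i) (fun j => (τ j B.gen - τ i B.gen) ^ 2) (δ*2) (fun j _ => hb i j)
      refine ⟨max A 0, hA.mono (le_max_right _ _) (le_max_left _ _) (Nat.mul_le_mul_left _ ?_)⟩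
      calc _ ≤ Fintype.card (Fin B.dim) := Finset.card_le_univ _
        _ ≤ δ := by rw [Fintype.card_fin]; exact hdim
    obtain ⟨A, hA⟩ := Bd_prod (n := m+1) Finset.univ (fun i => ∏ j ∈ Finset.Ioi i, (τ j B.gen - τ i B.gen) ^ 2) _ (fun i _ => hb2 i)
    rw [← hτ] at hA
    refine ⟨max A 0, Bd_coe (inj_RO (m := m) (W := W) K) (hA.mono (le_max_right _ _) (le_max_left _ _) ?_)⟩
    rw [Finset.card_univ, Fintype.card_fin]
    calc δ * 2 * δ * B.dim ≤ δ * 2 * δ * δ := Nat.mul_le_mul_left _ hdim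
      _ = _ := by ring
  · obtain ⟨g, hg⟩ := hD ⟨α, hmem⟩ (by
      rw [← isIntegral_algebraMap_iff hinjL]; exact hα)
    refine ⟨g, ?_⟩
    have := congrArg (algebraMap (IntermediateField.adjoin K {y}) W) hg
    rw [map_mul, ← aeval_algebraMap_apply, hgW, ← IsScalarTower.algebraMap_apply] at this
    exact this
end disc


section desc
variable {m : ℕ} {K W : Type} [Field K] [Field W] [Algebra (RZ (m+1)) K] [IsFractionRing (RZ (m+1)) K]
    [Algebra K W] [Algebra (RZ (m+1)) W] [IsScalarTower (RZ (m+1)) K W] [IsGalois K W] [CharZero W] [IsAlgClosed W]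

theorem descend (F : (RZ (m+1))[X]) (hF : F.Monic) (hirr : Irreducible (F.map (algebraMap (RZ (m+1)) K)))
    (y α : W) (hy : aeval y F = 0) (G : (RZ (m+1))[X]) (hG : G.Monic) (hα : aeval α G = 0)
    (D : RZ (m+1)) (g : (RZ (m+1))[X]) (hg : algebraMap _ W D * α = aeval y g)
    (x : Fin (m+1) → ℤ) (hx : MvPolynomial.eval x D ≠ 0) (y0 : ℤ) (hy0 : (F.map (MvPolynomial.eval x)).eval y0 = 0) :
    ∃ t : ℤ, (G.map (MvPolynomial.eval x)).eval t = 0 := by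
  have h1 : aeval y ((G.scaleRoots D).comp g) = 0 := by
    rw [aeval_comp, ← hg, aeval_def, scaleRoots_eval₂_mul, ← aeval_def, hα, mul_zero]
  have h2 : F ∣ (G.scaleRoots D).comp g := by
    rw [← map_dvd_map (algebraMap (RZ (m+1)) K) (IsFractionRing.injective _ _) hF,
      minpoly.eq_of_irreducible_of_monic hirr (x := y) (by rw [aeval_map_algebraMap]; exact hy) (hF.map _)]
    apply minpoly.dvd
    rw [aeval_map_algebraMap]; exact h1
  obtain ⟨q, hq⟩ := h2
  obtain ⟨ψ, hψ⟩ : ∃ ψ : RZ (m+1) →+* ℚ, ψ = (Int.castRingHom ℚ).comp (MvPolynomial.eval x) := ⟨_, rfl⟩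
  have hψi : ∀ f : (RZ (m+1))[X], ∀ z : ℤ, f.eval₂ ψ (z:ℚ) = (((f.map (MvPolynomial.eval x)).eval z : ℤ) : ℚ) := by
    intro f z
    rw [hψ, ← eval₂_map]
    exact eval₂_at_apply (Int.castRingHom ℚ) z
  have h3 := congrArg (eval₂ ψ (y0:ℚ)) hq
  rw [eval₂_mul, hψi F, hy0, Int.cast_zero, zero_mul, eval₂_comp, hψi g] at h3
  set u := (g.map (MvPolynomial.eval x)).eval y0
  have hψD : ψ D = ((MvPolynomial.eval x D : ℤ) : ℚ) := by rw [hψ]; rfl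
  have hv : ((MvPolynomial.eval x D : ℤ) : ℚ) ≠ 0 := by exact_mod_cast hx
  have h4 : ψ D * ((u:ℚ) / ((MvPolynomial.eval x D : ℤ) : ℚ)) = u := by rw [hψD]; field_simp
  rw [← h4, scaleRoots_eval₂_mul] at h3
  have h5 : G.eval₂ ψ ((u:ℚ) / ((MvPolynomial.eval x D : ℤ) : ℚ)) = 0 := by
    rcases mul_eq_zero.1 h3 with h | h
    · exact absurd (eq_zero_of_pow_eq_zero h) (by rw [hψD]; exact hv)
    · exact h
  obtain ⟨r, -, hr, -⟩ := int_closed_root (Int.castRingHom ℚ) Int.cast_injective (G.map (MvPolynomial.eval x)) (hG.map _)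
    ((u:ℚ) / ((MvPolynomial.eval x D : ℤ) : ℚ)) (by
      rw [Polynomial.map_map, ← hψ, eval_map]; exact h5) u (MvPolynomial.eval x D) hx (by
      rw [hψD] at h4; exact h4)
  exact ⟨r, hr⟩
end desc


def dG (δ : ℕ) : ℕ := δ + δ * δ * δ
def KK (δ : ℕ) : ℝ := (2 * 3 ^ δ) ^ δ * (2 + (dG δ * (2 * dG δ) : ℕ)) ^ dG δ

section comb
variable {m : ℕ} {K W : Type} [Field K] [Field W] [Algebra (RZ (m+1)) K] [IsFractionRing (RZ (m+1)) K]
    [Algebra K W] [Algebra (RZ (m+1)) W] [IsScalarTower (RZ (m+1)) K W] [IsGalois K W] [CharZero W] [IsAlgClosed W]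

theorem comb (F : (RZ (m+1))[X]) (hF : F.Monic) (hirr : Irreducible (F.map (algebraMap (RZ (m+1)) K)))
    (δ : ℕ) (hδ : F.natDegree ≤ δ) (H : ℝ) (hH : 1 ≤ H)
    (hG : ∀ k, Grw (F.coeff k) H δ) (y α0 : W) (hy : aeval y F = 0)
    (hα0 : α0 ∈ IntermediateField.adjoin K {y}) (hαnK : ∀ k : K, algebraMap K W k ≠ α0)
    (i : Fin (m+1)) (G0 : (RZ (m+1))[X]) (hirr0 : Irreducible (G0.map (algebraMap (RZ (m+1)) K)))
    (hdeg : ∀ k, (G0.coeff k).degreeOf i = 0) (hG0 : aeval α0 G0 = 0) :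
    ∃ E : (RZ m)[X], E.Monic ∧ E.natDegree ≤ δ ∧ Dsc E ≠ 0 ∧ (∀ k, Grw (E.coeff k) (KK δ * H ^ (δ * δ)) (dG δ)) ∧
      (∀ r, E.eval r ≠ 0) ∧ ∃ D : RZ (m+1), D ≠ 0 ∧ GE D (2 * δ * δ * δ) ∧
        ∀ x : Fin (m+1) → ℤ, MvPolynomial.eval x D ≠ 0 → (∃ y0 : ℤ, (F.map (MvPolynomial.eval x)).eval y0 = 0) →
          ∃ t : ℤ, (E.map (MvPolynomial.eval (i.removeNth x : Fin m → ℤ))).eval t = 0 := by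
  obtain ⟨β, hβ, hβi, hGm, hGirr, hG2, hGδ, hGg⟩ := beta_exists (K := K) F hF hirr δ hδ H hH hG y α0 hy hα0 hαnK
  have hGβ : aeval β (minpoly (RZ (m+1)) β) = 0 := minpoly.aeval _ _
  obtain ⟨G, hGdef⟩ : ∃ G, G = minpoly (RZ (m+1)) β := ⟨_, rfl⟩
  rw [← hGdef] at hGm hGirr hG2 hGδ hGg hGβ
  obtain ⟨b, hb⟩ := b_exists (K := K) i G0 hirr0 hdeg α0 hG0 β hβ G hGm hGβ
  set H1 : ℝ := (1 + (1 + 2 * H) ^ δ) ^ δ with hH1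
  have hH1' : 1 ≤ H1 := by
    apply one_le_pow₀
    have : 0 ≤ (1 + 2 * H) ^ δ := by positivity
    linarith
  have hGg' : ∀ k, Grw (G.coeff k) H1 (dG δ) := fun k => (hGg k).mono le_rfl (Nat.le_add_left _ _)
  haveI : CharZero K := charZero_of_injective_algebraMap (IsFractionRing.injective (RZ (m+1)) K)
  have hDsc0 : Dsc G ≠ 0 := Dsc_ne_zero_of_irreducible (algebraMap (RZ (m+1)) K) G hGm hGirr
  have hDg := Dsc_growth hGm (hGδ.trans (Nat.le_add_right _ _) : G.natDegree ≤ dG δ) hH1' hGg'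
  obtain ⟨c, -, hc1, hc2⟩ := exists_good i (Dsc G) hDsc0 _ ⟨_, hDg⟩ 1
  obtain ⟨a, ha⟩ : ∃ a, a = c 0 := ⟨_, rfl⟩
  have ha1 := hc1 0
  have ha2 := hc2 0
  rw [← ha] at ha1 ha2
  obtain ⟨hs1, hs2, hs3, hs4⟩ := sep (K := K) i G hGm hGirr b hb a ha2
  obtain ⟨σ, hσ⟩ := gal_conj (K := K) _ hGirr β _ (by rw [aeval_map_algebraMap]; exact hGβ) (by rw [aeval_map_algebraMap]; exact hs4)
  have htm : (G.map (tau i a)).Monic := hGm.map _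
  have hα : b.eval (a : W) ∈ IntermediateField.adjoin K {σ y} := by
    apply gal_adjoin
    intro η hη
    have h1 : b.eval (a : W) ∈ IntermediateField.adjoin K {σ β} := by
      rw [hσ, ← hs2]; exact IntermediateField.mem_adjoin_simple_self K _
    apply adjoin_fixed _ _ h1
    have h2 : (σ.trans (η.trans σ.symm)) y = y := by
      simp [hη]
    have h3 := adjoin_fixed _ _ hα0 _ h2
    have h4 := adjoin_fixed _ _ hβ _ h3
    have h5 : σ.symm (η (σ β)) = β := h4
    have h6 := congrArg σ h5
    rwa [AlgEquiv.apply_symm_apply] at h6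
  have hσy : aeval (σ y) F = 0 := by rw [sigma_root, hy, map_zero]
  obtain ⟨D, hD0, hDGE, g, hg⟩ := D_exists (K := K) F hF δ hδ H hH hG (σ y) (b.eval (a:W)) hσy ⟨_, htm, hs3⟩ hα
  have hDE : Dsc (G.map (sp i a)) ≠ 0 := by rw [Dsc_map _ _ hGm]; exact ha2
  refine ⟨G.map (sp i a), hGm.map _, natDegree_map_le.trans hGδ, hDE, ?_, ?_, D, hD0, hDGE, ?_⟩
  · intro k
    rw [coeff_map]
    refine ((hGg' k).sp i a).mono ?_ le_rfl
    have h0 : (0:ℝ) ≤ a := by exact_mod_cast ha1.1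
    have h1 : (a:ℝ) ≤ ((dG δ * (2 * dG δ) + 1 : ℕ) : ℝ) := by exact_mod_cast ha1.2
    rw [abs_of_nonneg h0, KK]
    have h2 : (1 + (a:ℝ)) ^ dG δ ≤ (2 + (dG δ * (2 * dG δ) : ℕ)) ^ dG δ := by
      apply pow_le_pow_left₀ (by positivity)
      push_cast at h1 ⊢
      linarith
    have h3 : H1 ≤ (2 * 3 ^ δ) ^ δ * H ^ (δ * δ) := by
      rw [pow_mul, ← mul_pow, hH1]
      apply pow_le_pow_left₀ (by positivity)
      have h4 : (1 + 2 * H) ^ δ ≤ (3 * H) ^ δ := pow_le_pow_left₀ (by positivity) (by linarith) _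
      have h5 : 1 ≤ (3 * H) ^ δ := one_le_pow₀ (by linarith)
      rw [mul_pow] at h4 h5
      linarith
    calc H1 * (1 + (a:ℝ)) ^ dG δ ≤ ((2 * 3 ^ δ) ^ δ * H ^ (δ * δ)) * (2 + (dG δ * (2 * dG δ) : ℕ)) ^ dG δ := by
          apply mul_le_mul h3 h2 (by positivity) (by positivity)
      _ = _ := by ring
  · intro r hr
    have h1 : (G.map (tau i a)).eval (MvPolynomial.rename i.succAbove r) = 0 := by
      have : G.map (tau i a) = (G.map (sp i a)).map (MvPolynomial.rename i.succAbove : RZ m →ₐ[ℤ] RZ (m+1)).toRingHom := by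
        rw [Polynomial.map_map]; rfl
      rw [this]
      have h2 := eval₂_at_apply (p := G.map (sp i a)) (MvPolynomial.rename i.succAbove : RZ m →ₐ[ℤ] RZ (m+1)).toRingHom r
      rw [hr, map_zero] at h2
      rw [eval_map]; exact h2
    have h2 : ((G.map (tau i a)).map (algebraMap (RZ (m+1)) K)).IsRoot (algebraMap _ K (MvPolynomial.rename i.succAbove r)) := by
      rw [IsRoot, eval_map, eval₂_at_apply, h1, map_zero]
    have h3 := degree_eq_one_of_irreducible_of_root hs1 h2
    have h4 := natDegree_eq_of_degree_eq_some h3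
    rw [htm.natDegree_map, hGm.natDegree_map] at h4
    have h5 : G.natDegree = 1 := h4
    omega
  · rintro x hx ⟨y0, hy0⟩
    obtain ⟨t, ht⟩ := descend (K := K) F hF hirr (σ y) _ hσy _ htm hs3 D g hg x hx y0 hy0
    refine ⟨t, ?_⟩
    rw [Polynomial.map_map, tau_eval] at ht
    rw [Polynomial.map_map, sp_comp]
    exact ht
end comb


lemma adjoinRoot_equiv {K W : Type} [Field K] [Field W] [Algebra K W] (f : K[X]) (hf : Irreducible f) (hm : f.Monic)
    (x : W) (hx : aeval x f = 0) : Nonempty (AdjoinRoot f ≃ₐ[K] IntermediateField.adjoin K {x}) := by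
  have h := minpoly.eq_of_irreducible_of_monic hf hx hm
  have hi : IsIntegral K x := ⟨f, hm, hx⟩
  rw [h]
  exact ⟨IntermediateField.adjoinRootEquivAdjoin K hi⟩

lemma tau_degreeOf {m : ℕ} (i : Fin (m+1)) (a : ℤ) (p : RZ (m+1)) : (tau i a p).degreeOf i = 0 := by
  by_contra h
  have h1 := MvPolynomial.mem_vars_iff_degreeOf_ne_zero.2 h
  have h2 : tau i a p = MvPolynomial.rename i.succAbove (sp i a p) := rfl
  rw [h2] at h1
  have h3 := MvPolynomial.vars_rename _ _ h1
  rw [Finset.mem_image] at h3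
  obtain ⟨j, -, hj⟩ := h3
  exact Fin.succAbove_ne i j hj

section trans
variable {m : ℕ} {K W : Type} [Field K] [Field W] [Algebra (RZ (m+1)) K] [IsFractionRing (RZ (m+1)) K]
    [Algebra K W] [Algebra (RZ (m+1)) W] [IsScalarTower (RZ (m+1)) K W] [IsGalois K W] [CharZero W] [IsAlgClosed W]

theorem genuine_no (F : (RZ (m+1))[X]) (hF : F.Monic) (hirr : Irreducible (F.map (algebraMap (RZ (m+1)) K)))
    (δ : ℕ) (hδ : F.natDegree ≤ δ) (H : ℝ) (hH : 1 ≤ H) (hG : ∀ k, Grw (F.coeff k) H δ) (i : Fin (m+1))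
    (hgen : ∀ G : (RZ (m+1))[X], Irreducible (G.map (algebraMap (RZ (m+1)) K)) →
      Nonempty (AdjoinRoot (G.map (algebraMap (RZ (m+1)) K)) ≃ₐ[K] AdjoinRoot (F.map (algebraMap (RZ (m+1)) K))) →
      ∃ k, (G.coeff k).degreeOf i ≠ 0) (Q : W[X]) : (F.map (ios W i)).eval Q ≠ 0 := by
  intro hQ
  haveI : CharZero K := charZero_of_injective_algebraMap (IsFractionRing.injective (RZ (m+1)) K)
  have hDsc0 : Dsc F ≠ 0 := Dsc_ne_zero_of_irreducible (algebraMap (RZ (m+1)) K) F hF hirr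
  obtain ⟨c, -, -, hc2⟩ := exists_good i (Dsc F) hDsc0 _ ⟨_, Dsc_growth hF hδ hH hG⟩ 1
  obtain ⟨hs1, hs2, hs3, hs4⟩ := sep (K := K) i F hF hirr Q hQ (c 0) (hc2 0)
  obtain ⟨e1⟩ := adjoinRoot_equiv _ hs1 ((hF.map _).map _) (Q.eval ((c 0 : ℤ) : W)) (by rw [aeval_map_algebraMap]; exact hs3)
  obtain ⟨e2⟩ := adjoinRoot_equiv _ hirr (hF.map _) (Q.eval (algebraMap (RZ (m+1)) W (MvPolynomial.X i))) (by rw [aeval_map_algebraMap]; exact hs4)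
  obtain ⟨k, hk⟩ := hgen (F.map (tau i (c 0))) hs1 ⟨(e1.trans (IntermediateField.equivOfEq hs2)).trans e2.symm⟩
  rw [coeff_map] at hk
  exact hk (tau_degreeOf i _ _)

theorem nonstrong (F G0 : (RZ (m+1))[X]) (hirr : Irreducible (F.map (algebraMap (RZ (m+1)) K)))
    (M : Type) [Field M] [Algebra K M] (e : AdjoinRoot (F.map (algebraMap (RZ (m+1)) K)) ≃ₐ[K] M)
    (M' : IntermediateField K M) (hM' : M' ≠ ⊥)
    (e' : AdjoinRoot (G0.map (algebraMap (RZ (m+1)) K)) ≃ₐ[K] M') :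
    ∃ y α0 : W, aeval y F = 0 ∧ α0 ∈ IntermediateField.adjoin K {y} ∧ (∀ k : K, algebraMap K W k ≠ α0) ∧
      aeval α0 G0 = 0 := by
  obtain ⟨y, hy⟩ := IsAlgClosed.exists_aeval_eq_zero W (F.map (algebraMap (RZ (m+1)) K)) (by
    intro h
    have := hirr.natDegree_pos
    rw [natDegree_eq_zero_iff_degree_le_zero.2 h.le] at this
    omega)
  obtain ⟨φ0, hφ0⟩ : ∃ φ0 : AdjoinRoot (F.map (algebraMap (RZ (m+1)) K)) →ₐ[K] W, φ0 (AdjoinRoot.root _) = y :=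
    ⟨AdjoinRoot.liftAlgHom _ (Algebra.ofId K W) y (by rw [aeval_def] at hy; exact hy), AdjoinRoot.lift_root (by rw [aeval_def] at hy; exact hy)⟩
  obtain ⟨φ, hφ⟩ : ∃ φ : M →ₐ[K] W, φ = φ0.comp e.symm.toAlgHom := ⟨_, rfl⟩
  obtain ⟨ρ, hρ⟩ : ∃ ρ : M', ρ = e' (AdjoinRoot.root _) := ⟨_, rfl⟩
  have hmem : ∀ z, φ0 z ∈ IntermediateField.adjoin K {y} := by
    intro z
    obtain ⟨p, rfl⟩ := AdjoinRoot.mk_surjective z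
    rw [← AdjoinRoot.aeval_eq, ← aeval_algHom_apply, hφ0]
    exact (IntermediateField.algebra_adjoin_le_adjoin K {y}) (aeval_mem_adjoin_singleton K y)
  refine ⟨y, φ (ρ : M), ?_, ?_, ?_, ?_⟩
  · rw [aeval_map_algebraMap] at hy; exact hy
  · rw [hφ]; exact hmem _
  · intro k hk
    apply hM'
    have h1 : algebraMap K M k = (ρ : M) := by
      apply φ.toRingHom.injective
      change φ (algebraMap K M k) = φ ρ
      rw [← hk]
      exact φ.commutes k
    rw [eq_bot_iff]
    intro z hz
    obtain ⟨w, hw⟩ := e'.surjective ⟨z, hz⟩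
    obtain ⟨p, rfl⟩ := AdjoinRoot.mk_surjective w
    rw [← AdjoinRoot.aeval_eq, ← aeval_algHom_apply] at hw
    have h2 : aeval ρ p = (⟨z, hz⟩ : M') := by rw [hρ]; exact hw
    have h3 := congrArg (algebraMap M' M) h2
    rw [← aeval_algebraMap_apply] at h3
    have h4 : algebraMap M' M ρ = algebraMap K M k := h1.symm
    rw [h4, aeval_algebraMap_apply] at h3
    rw [IntermediateField.mem_bot]
    exact ⟨_, h3⟩
  · have h1 : aeval (AdjoinRoot.root (G0.map (algebraMap (RZ (m+1)) K))) (G0.map (algebraMap (RZ (m+1)) K)) = 0 := by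
      rw [AdjoinRoot.aeval_eq, AdjoinRoot.mk_self]
    have h2 := aeval_algHom_apply ((φ.comp M'.val).comp e'.toAlgHom) (AdjoinRoot.root (G0.map (algebraMap (RZ (m+1)) K))) (G0.map (algebraMap (RZ (m+1)) K))
    rw [h1, map_zero, aeval_map_algebraMap] at h2
    rw [hρ]
    exact h2
end trans


def AlgConcl {m : ℕ} (δ : ℕ) (H : ℝ) (F : (RZ (m+1))[X]) : Prop :=
  ∃ i : Fin (m+1),
    (∃ E : (RZ m)[X], E.Monic ∧ E.natDegree ≤ δ ∧ Dsc E ≠ 0 ∧ (∀ k, Grw (E.coeff k) (KK δ * H ^ (δ * δ)) (dG δ)) ∧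
      (∀ r, E.eval r ≠ 0) ∧ ∃ D : RZ (m+1), D ≠ 0 ∧ GE D (2 * δ * δ * δ) ∧
        ∀ x : Fin (m+1) → ℤ, MvPolynomial.eval x D ≠ 0 → (∃ y0 : ℤ, (F.map (MvPolynomial.eval x)).eval y0 = 0) →
          ∃ t : ℤ, (E.map (MvPolynomial.eval (i.removeNth x : Fin m → ℤ))).eval t = 0) ∧
    (∃ Φ : RZ (m+1), Φ ≠ 0 ∧ GE Φ (bPhi δ) ∧ ∀ x : Fin (m+1) → ℤ, MvPolynomial.eval x Φ ≠ 0 →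
      ∀ q : ℤ[X], (F.map (spec i (i.removeNth x))).eval q ≠ 0)

theorem alg_generic {m : ℕ} {K W : Type} [Field K] [Field W] [Algebra (RZ (m+1)) K] [IsFractionRing (RZ (m+1)) K]
    [Algebra K W] [Algebra (RZ (m+1)) W] [IsScalarTower (RZ (m+1)) K W] [IsGalois K W] [CharZero W] [IsAlgClosed W]
    (F : (RZ (m+1))[X]) (hF : F.Monic) (hirr : Irreducible (F.map (algebraMap (RZ (m+1)) K)))
    (δ : ℕ) (hδ : F.natDegree ≤ δ) (H : ℝ) (hH : 1 ≤ H) (hG : ∀ k, Grw (F.coeff k) H δ)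
    (hgen : ∀ G : (RZ (m+1))[X], Irreducible (G.map (algebraMap (RZ (m+1)) K)) →
      Nonempty (AdjoinRoot (G.map (algebraMap (RZ (m+1)) K)) ≃ₐ[K] AdjoinRoot (F.map (algebraMap (RZ (m+1)) K))) →
      ∀ i, ∃ k, (G.coeff k).degreeOf i ≠ 0)
    (M : Type) [Field M] [Algebra K M] (e : AdjoinRoot (F.map (algebraMap (RZ (m+1)) K)) ≃ₐ[K] M)
    (M' : IntermediateField K M) (hM' : M' ≠ ⊥) (G0 : (RZ (m+1))[X])
    (hirr0 : Irreducible (G0.map (algebraMap (RZ (m+1)) K)))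
    (e' : AdjoinRoot (G0.map (algebraMap (RZ (m+1)) K)) ≃ₐ[K] M') (i : Fin (m+1))
    (hdeg : ∀ k, (G0.coeff k).degreeOf i = 0) : AlgConcl δ H F ∧ Dsc F ≠ 0 := by
  haveI : CharZero K := charZero_of_injective_algebraMap (IsFractionRing.injective (RZ (m+1)) K)
  obtain ⟨y, α0, hy, h1, h2, h3⟩ := nonstrong (W := W) F G0 hirr M e M' hM' e'
  exact ⟨⟨i, comb (K := K) F hF hirr δ hδ H hH hG y α0 hy h1 h2 i G0 hirr0 hdeg h3,
    Phi_exists (K := K) (W := W) i F hF δ hδ H hH hG (fun Q => genuine_no (K := K) F hF hirr δ hδ H hH hG i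
      (fun G hGi hGe => hgen G hGi hGe i) Q)⟩,
    Dsc_ne_zero_of_irreducible (algebraMap (RZ (m+1)) K) F hF hirr⟩

def jmap (n : ℕ) : RZ n →+* RF n :=
  (algebraMap (MvPolynomial (Fin n) ℚ) (RF n)).comp (MvPolynomial.map (Int.castRingHom ℚ))

lemma toFrac_eq {n : ℕ} (F : (RZ n)[X]) : toFrac F = F.map (jmap n) := by
  rw [toFrac, toFracQ, toQ, Polynomial.map_map]; rfl

lemma jmap_inj (n : ℕ) : Function.Injective (jmap n) :=
  inj_comp' _ _ (MvPolynomial.map_injective _ Int.cast_injective) (IsFractionRing.injective _ _)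

lemma clear_den {n : ℕ} (p : MvPolynomial (Fin n) ℚ) : ∃ c : ℤ, c ≠ 0 ∧ ∃ q : RZ n,
    (c : MvPolynomial (Fin n) ℚ) * p = MvPolynomial.map (Int.castRingHom ℚ) q := by
  induction p using MvPolynomial.induction_on with
  | C a =>
    refine ⟨a.den, by exact_mod_cast a.den_nz, MvPolynomial.C a.num, ?_⟩
    rw [MvPolynomial.map_C, ← map_intCast (MvPolynomial.C (R := ℚ) (σ := Fin n)), ← map_mul]
    congr 1
    simp [Rat.den_mul_eq_num]
  | add p q hp hq =>
    obtain ⟨c, hc, p', hp'⟩ := hp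
    obtain ⟨d, hd, q', hq'⟩ := hq
    refine ⟨c * d, mul_ne_zero hc hd, (d : RZ n) * p' + (c : RZ n) * q', ?_⟩
    rw [map_add, map_mul, map_mul, ← hp', ← hq']
    simp only [map_intCast, Int.cast_mul]
    ring
  | mul_X p i hp =>
    obtain ⟨c, hc, p', hp'⟩ := hp
    refine ⟨c, hc, p' * MvPolynomial.X i, ?_⟩
    rw [map_mul, ← hp', MvPolynomial.map_X]
    ring

lemma jmap_surj (n : ℕ) (z : RF n) : ∃ x y : RZ n, z = jmap n x / jmap n y := by
  obtain ⟨p, q, hq, rfl⟩ := IsFractionRing.div_surjective (A := MvPolynomial (Fin n) ℚ) z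
  obtain ⟨c, hc, p', hp'⟩ := clear_den p
  obtain ⟨d, hd, q', hq'⟩ := clear_den q
  have hq0 : algebraMap (MvPolynomial (Fin n) ℚ) (RF n) q ≠ 0 := by
    rw [Ne, map_eq_zero_iff _ (IsFractionRing.injective _ _)]
    exact nonZeroDivisors.ne_zero hq
  refine ⟨(d : RZ n) * p', (c : RZ n) * q', ?_⟩
  have e1 : jmap n p' = (c : RF n) * algebraMap _ _ p := by
    change algebraMap _ _ (MvPolynomial.map (Int.castRingHom ℚ) p') = _
    rw [← hp', map_mul, map_intCast]
  have e2 : jmap n q' = (d : RF n) * algebraMap _ _ q := by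
    change algebraMap _ _ (MvPolynomial.map (Int.castRingHom ℚ) q') = _
    rw [← hq', map_mul, map_intCast]
  have hz : ∀ c : ℤ, c ≠ 0 → (c : RF n) ≠ 0 := by
    intro c hc h
    have h1 : jmap n (c : RZ n) = jmap n 0 := by rw [map_intCast, h, map_zero]
    have h2 := jmap_inj n h1
    exact hc (by exact_mod_cast h2)
  have hc' := hz c hc
  have hd' := hz d hd
  rw [map_mul, map_mul, e1, e2, map_intCast, map_intCast]
  field_simp

lemma frac_of_field {A K : Type} [CommRing A] [IsDomain A] [Field K] [Algebra A K]
    (h1 : Function.Injective (algebraMap A K)) (h2 : ∀ z : K, ∃ x y : A, z = algebraMap A K x / algebraMap A K y) :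
    IsFractionRing A K := by
  haveI : FaithfulSMul A K := (faithfulSMul_iff_algebraMap_injective _ _).2 h1
  exact IsFractionRing.of_field _ _ h2

lemma degX_zero {n : ℕ} (G : (RZ n)[X]) (i : Fin n) (h : degX G i = 0) (k : ℕ) : (G.coeff k).degreeOf i = 0 := by
  by_cases hk : k ∈ G.support
  · have : (G.coeff k).degreeOf i ≤ degX G i := Finset.le_sup (f := fun k => (G.coeff k).degreeOf i) hk
    omega
  · rw [notMem_support_iff.1 hk]; simp

lemma degX_pos {n : ℕ} (G : (RZ n)[X]) (i : Fin n) (h : 0 < degX G i) : ∃ k, (G.coeff k).degreeOf i ≠ 0 := by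
  by_contra hcon
  push Not at hcon
  have : degX G i = 0 := by
    apply Nat.le_zero.1
    apply Finset.sup_le
    intro k _
    rw [hcon k]
  omega

theorem alg_main {m : ℕ} (F : (RZ (m+1))[X]) (hF : F.Monic) (δ : ℕ) (hδ : F.natDegree ≤ δ) (H : ℝ) (hH : 1 ≤ H)
    (hG : ∀ k, Grw (F.coeff k) H δ) (hgp : IsGenuinePoly F) (hns : ¬ IsStronglyGenuinePoly F) :
    AlgConcl δ H F ∧ Dsc F ≠ 0 := by
  obtain ⟨habs, hgen⟩ := hgp
  have hnse : ¬ StronglyGenuineExtOfQ (toQ F) := fun h => hns ⟨habs, h⟩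
  rw [StronglyGenuineExtOfQ] at hnse
  push Not at hnse
  obtain ⟨M, iM, iKM, ⟨e⟩, hnM⟩ := hnse
  rw [IsStronglyGenuineExt] at hnM
  push Not at hnM
  obtain ⟨M', hM', hnM'⟩ := hnM
  rw [IsGenuineExt] at hnM'
  push Not at hnM'
  obtain ⟨G0, hG0irr, ⟨e'⟩, hG0⟩ := hnM'
  letI : Algebra (RZ (m+1)) (RF (m+1)) := (jmap (m+1)).toAlgebra
  have hj : algebraMap (RZ (m+1)) (RF (m+1)) = jmap (m+1) := rfl
  have hFr : IsFractionRing (RZ (m+1)) (RF (m+1)) :=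
    frac_of_field (jmap_inj (m+1)) (jmap_surj (m+1))
  have hirrR : Irreducible F := hF.irreducible_of_irreducible_map _ F habs
  have hirr : Irreducible (F.map (algebraMap (RZ (m+1)) (RF (m+1)))) :=
    (hF.irreducible_iff_irreducible_map_fraction_map).1 hirrR
  have hpos : 0 < G0.natDegree := by
    have h1 := hG0irr.natDegree_pos
    rw [toFrac_eq] at h1
    exact h1.trans_le natDegree_map_le
  obtain ⟨i, hi⟩ : ∃ i, degX G0 i = 0 := by
    by_contra hcon
    push Not at hcon
    exact hG0 ⟨hpos, fun i => Nat.pos_of_ne_zero (hcon i)⟩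
  have hFF : toFracQ (toQ F) = F.map (algebraMap (RZ (m+1)) (RF (m+1))) := toFrac_eq F
  have hGG : ∀ G : (RZ (m+1))[X], toFrac G = G.map (algebraMap (RZ (m+1)) (RF (m+1))) := fun G => toFrac_eq G
  rw [GenuineExtOfQ] at hgen
  rw [hFF] at hgen e
  rw [hGG] at e' hG0irr
  refine alg_generic (K := RF (m+1)) (W := AlgebraicClosure (RF (m+1))) F hF hirr δ hδ H hH hG ?_ M e M' hM' G0 hG0irr e' i (degX_zero G0 i hi)
  intro G h1 h2 j
  rw [← hGG] at h1 h2
  exact degX_pos G j ((hgen G h1 h2).2 j)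


lemma one_le_KK (δ : ℕ) : 1 ≤ KK δ := by
  unfold KK
  have h1 : (1:ℝ) ≤ 3 ^ δ := one_le_pow₀ (by norm_num)
  have h2 : (1:ℝ) ≤ (2 * 3 ^ δ) ^ δ := one_le_pow₀ (by linarith)
  have h3 : (1:ℝ) ≤ (2 + (dG δ * (2 * dG δ) : ℕ)) ^ dG δ := one_le_pow₀ (by
    have : (0:ℝ) ≤ (dG δ * (2 * dG δ) : ℕ) := Nat.cast_nonneg _
    linarith)
  nlinarith

lemma zeros_box' (m a : ℕ) : ∃ c : ℝ, 0 < c ∧ ∀ p : RZ (m+1), p ≠ 0 → GE p a → ∀ N : ℕ, 1 ≤ N →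
    ∀ S : Finset (Fin (m+1) → ℤ), (∀ x ∈ S, x ∈ box (m+1) N ∧ MvPolynomial.eval x p = 0) →
    (S.card : ℝ) ≤ c * N ^ m := by
  obtain ⟨c, hc, h⟩ := zeros_box (m+1) a
  refine ⟨c, hc, fun p hp hg N hN S hS => ?_⟩
  have h1 := h p hp hg.degLE N hN S hS
  have hN' : (0:ℝ) < N := by exact_mod_cast hN
  rw [pow_succ, ← mul_assoc] at h1
  exact le_of_mul_le_mul_right h1 hN'

lemma cover_card {α : Type*} [DecidableEq α] (S : Finset α) (p q r : α → Prop) [DecidablePred p] [DecidablePred q]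
    [DecidablePred r] : (S.card : ℝ) ≤ (S.filter p).card + (S.filter q).card + (S.filter r).card +
      (S.filter (fun x => ¬ p x ∧ ¬ q x ∧ ¬ r x)).card := by
  have hcov : S ⊆ S.filter p ∪ S.filter q ∪ S.filter r ∪ S.filter (fun x => ¬ p x ∧ ¬ q x ∧ ¬ r x) := by
    intro x hx
    simp only [Finset.mem_union, Finset.mem_filter]
    tauto
  have h1 := Finset.card_le_card hcov
  have h2 := Finset.card_union_le (S.filter p ∪ S.filter q ∪ S.filter r) (S.filter (fun x => ¬ p x ∧ ¬ q x ∧ ¬ r x))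
  have h3 := Finset.card_union_le (S.filter p ∪ S.filter q) (S.filter r)
  have h4 := Finset.card_union_le (S.filter p) (S.filter q)
  exact_mod_cast h1.trans (by omega)

set_option maxHeartbeats 1600000 in
theorem count (m δ : ℕ) : ∃ c : ℝ, 0 < c ∧ ∀ F : (RZ (m+1))[X], F.Monic → F.natDegree ≤ δ →
    IsGenuinePoly F → ¬ IsStronglyGenuinePoly F → ∀ H : ℝ, 3 ≤ H → (∀ k, Grw (F.coeff k) H δ) →
    ∀ N : ℕ, 1 ≤ N → (N:ℝ) ≤ H → ∀ S : Finset (Fin (m+1) → ℤ), (∀ x ∈ S, x ∈ box (m+1) N ∧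
      ∃ y : ℤ, (F.map (MvPolynomial.eval x)).eval y = 0) → (S.card : ℝ) ≤ c * Real.log H ^ 4 * N ^ m := by
  classical
  obtain ⟨c1, hc1, hz1⟩ := zeros_box' m (2 * δ * δ * δ)
  obtain ⟨c2, hc2, hz2⟩ := zeros_box' m (δ * (2 * δ))
  obtain ⟨c3, hc3, hz3⟩ := zeros_box' m (bPhi δ)
  obtain ⟨c4, hc4, h4⟩ := P4 δ
  obtain ⟨c5, hc5, h5⟩ := P5 m (dG δ)
  set κ : ℝ := |Real.log (KK δ)| + (δ * δ + 1 : ℕ) with hκ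
  set b : ℕ := 1 + 2 * m * δ with hb
  have hκ0 : 0 ≤ κ := by positivity
  refine ⟨c1 + c2 + c3 + c5 * κ ^ 2 * (c4 * b ^ 2), by positivity, ?_⟩
  intro F hF hδ hgp hns H hH hG N hN hNH S hS
  have hL := log_ge_one hH
  obtain ⟨⟨i, ⟨E, hEm, hEδ, hED, hEg, hEr, D, hD0, hDg, hDx⟩, Φ, hΦ0, hΦg, hΦ⟩, hDF⟩ :=
    alg_main F hF δ hδ H (by linarith) hG hgp hns
  set S1 := S.filter (fun x => MvPolynomial.eval x D = 0) with hS1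
  set S2 := S.filter (fun x => MvPolynomial.eval x (Dsc F) = 0) with hS2
  set S3 := S.filter (fun x => MvPolynomial.eval x Φ = 0) with hS3
  set S4 := S.filter (fun x => MvPolynomial.eval x D ≠ 0 ∧ MvPolynomial.eval x (Dsc F) ≠ 0 ∧ MvPolynomial.eval x Φ ≠ 0) with hS4
  have b1 := hz1 D hD0 hDg N hN S1 (fun x hx => by
    rw [hS1, Finset.mem_filter] at hx; exact ⟨(hS x hx.1).1, hx.2⟩)
  have b2 := hz2 (Dsc F) hDF ⟨_, Dsc_growth hF hδ (by linarith) hG⟩ N hN S2 (fun x hx => by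
    rw [hS2, Finset.mem_filter] at hx; exact ⟨(hS x hx.1).1, hx.2⟩)
  have b3 := hz3 Φ hΦ0 hΦg N hN S3 (fun x hx => by
    rw [hS3, Finset.mem_filter] at hx; exact ⟨(hS x hx.1).1, hx.2⟩)
  have hcard : (S.card : ℝ) ≤ S1.card + S2.card + S3.card + S4.card := cover_card S _ _ _
  set Xs : Finset (Fin m → ℤ) := S4.image (fun x => (i.removeNth x : Fin m → ℤ)) with hXs
  -- the projection
  set H' : ℝ := KK δ * H ^ (δ * δ + 1) with hH'
  have hK1 := one_le_KK δ
  have hHle : H ≤ H' := by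
    have h1 : 1 ≤ H ^ (δ * δ) := one_le_pow₀ (by linarith)
    have h2 : H ≤ H ^ (δ * δ + 1) := by rw [pow_succ]; nlinarith
    have h3 : H ^ (δ*δ+1) ≤ H' := by rw [hH']; nlinarith
    linarith
  have hXc : (Xs.card : ℝ) * √N ≤ c5 * Real.log H' ^ 2 * N ^ m := by
    apply h5 E hEm (hEδ.trans (Nat.le_add_right _ _)) hED H' (hH.trans hHle) _ N hN (hNH.trans hHle) Xs
    · intro x hx
      rw [hXs, Finset.mem_image] at hx
      obtain ⟨z, hz, rfl⟩ := hx
      rw [hS4, Finset.mem_filter] at hz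
      obtain ⟨t, ht⟩ := hDx z hz.2.1 (hS z hz.1).2
      exact ⟨removeNth_box i (hS z hz.1).1, t, ht, fun r hr => absurd hr (hEr r)⟩
    · intro k
      refine (hEg k).mono ?_ le_rfl
      rw [hH', pow_succ]
      have h1 : 0 < H ^ (δ * δ) := by positivity
      have h2 : H ^ (δ * δ) ≤ H ^ (δ*δ) * H := by nlinarith
      exact mul_le_mul_of_nonneg_left h2 (by linarith)
  have hlog' : Real.log H' ≤ κ * Real.log H := log_mul_pow_le (by linarith) hH _
  have hlog'0 : 0 ≤ Real.log H' := Real.log_nonneg (by linarith)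
  have hHb : H ≤ H ^ b := by
    rw [hb, pow_add, pow_one]
    have h1 : 1 ≤ H ^ (2 * m * δ) := one_le_pow₀ (by linarith)
    nlinarith
  have hfib := fiber_count i S4 Xs (c4 * Real.log (H ^ b) ^ 2 * √N) (fun x hx => by
    rw [hXs]; exact Finset.mem_image_of_mem _ hx) (by
    intro x' hx' T hT
    rw [hXs, Finset.mem_image] at hx'
    obtain ⟨z, hz, hzx⟩ := hx'
    rw [hS4, Finset.mem_filter] at hz
    have hnr : ∀ q : ℤ[X], (F.map (spec i x')).eval q ≠ 0 := by
      rw [← hzx]; exact hΦ z hz.2.2.2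
    have hxb : x' ∈ box m N := by rw [← hzx]; exact removeNth_box i (hS z hz.1).1
    apply h4 (F.map (spec i x')) (hF.map _) (natDegree_map_le.trans hδ) _ (H ^ b) (hH.trans hHb)
      (fun k s => spec_growth hH hG hNH i hxb k s) N hN (hNH.trans hHb) T
    · intro s hs
      have h1 := hT s hs
      rw [hS4, Finset.mem_filter] at h1
      obtain ⟨h2, y, hy⟩ := hS _ h1.1
      refine ⟨?_, y, ?_, fun q hq => absurd hq (hnr q)⟩
      · have := mem_box.1 h2 i
        rwa [Fin.insertNth_apply_same] at this
      · rw [Polynomial.map_map, spec_comp]; exact hy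
    · rw [Dsc_map _ _ hF]
      intro h0
      apply hz.2.2.1
      have h1 := spec_eval i x' (z i) (Dsc F)
      rw [h0, ← hzx, insertNth_removeNth] at h1
      simpa using h1.symm)
  have hlb : Real.log (H ^ b) = b * Real.log H := Real.log_pow _ _
  have b4 : (S4.card : ℝ) ≤ c5 * κ ^ 2 * (c4 * b ^ 2) * Real.log H ^ 4 * N ^ m := by
    calc (S4.card : ℝ) ≤ Xs.card * (c4 * Real.log (H ^ b) ^ 2 * √N) := hfib
      _ = (Xs.card * √N) * (c4 * Real.log (H ^ b) ^ 2) := by ring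
      _ ≤ (c5 * Real.log H' ^ 2 * N ^ m) * (c4 * Real.log (H ^ b) ^ 2) := by
          apply mul_le_mul_of_nonneg_right hXc (by positivity)
      _ ≤ (c5 * (κ * Real.log H) ^ 2 * N ^ m) * (c4 * (b * Real.log H) ^ 2) := by
          rw [hlb]
          gcongr
      _ = _ := by ring
  have hL4 : 1 ≤ Real.log H ^ 4 := one_le_pow₀ hL
  have hNm : (0:ℝ) ≤ N ^ m := by positivity
  have hx : ∀ c : ℝ, 0 < c → c * N ^ m ≤ c * Real.log H ^ 4 * N ^ m := by
    intro c hc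
    apply mul_le_mul_of_nonneg_right _ hNm
    nlinarith
  have := hx c1 hc1
  have := hx c2 hc2
  have := hx c3 hc3
  calc (S.card : ℝ) ≤ _ := hcard
    _ ≤ c1 * Real.log H ^ 4 * N ^ m + c2 * Real.log H ^ 4 * N ^ m + c3 * Real.log H ^ 4 * N ^ m
        + c5 * κ ^ 2 * (c4 * b ^ 2) * Real.log H ^ 4 * N ^ m := by linarith
    _ = _ := by ring


lemma monom_le_wt {n : ℕ} (x : Fin n → ℤ) (s : Fin n →₀ ℕ) {D : ℕ} (h : ∀ i, s i ≤ D) :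
    |(∏ i, (x i : ℝ) ^ s i)| ≤ wt x ^ D := by
  unfold wt
  rw [Finset.abs_prod, ← Finset.prod_pow]
  apply Finset.prod_le_prod
  · intro i _; positivity
  · intro i _
    rw [abs_pow]
    calc |(x i : ℝ)| ^ s i ≤ (1 + |(x i : ℝ)|) ^ s i := by gcongr; linarith
      _ ≤ _ := pow_le_pow_right₀ (by linarith [abs_nonneg (x i : ℝ)]) (h i)

lemma growth_start {n D : ℕ} (p : MvPolynomial (Fin n) ℤ) (hD : p.totalDegree ≤ D) :
    Grw p ((D + 1 : ℕ) ^ n * mvNorm p) D := by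
  classical
  intro x
  have hs : ∀ s ∈ p.support, ∀ i, s i ≤ D := fun s hs i =>
    ((MvPolynomial.monomial_le_degreeOf i hs).trans (MvPolynomial.degreeOf_le_totalDegree p i)).trans hD
  have hcard : p.support.card ≤ (D + 1) ^ n := by
    have h1 : (p.support.image (fun s : Fin n →₀ ℕ => (s : Fin n → ℕ))) ⊆
        Fintype.piFinset fun _ => Finset.range (D + 1) := by
      intro f hf
      rw [Finset.mem_image] at hf
      obtain ⟨s, hs', rfl⟩ := hf
      rw [Fintype.mem_piFinset]
      intro i
      rw [Finset.mem_range]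
      exact Nat.lt_succ_of_le (hs s hs' i)
    have h2 := Finset.card_le_card h1
    rw [Finset.card_image_of_injective _ DFunLike.coe_injective] at h2
    simpa using h2
  have hw : (0:ℝ) ≤ wt x ^ D := by have := one_le_wt x; positivity
  rw [MvPolynomial.eval_eq']
  push_cast
  calc |∑ s ∈ p.support, ((p.coeff s : ℤ) : ℝ) * ∏ i, (x i : ℝ) ^ s i|
      ≤ ∑ s ∈ p.support, |((p.coeff s : ℤ) : ℝ) * ∏ i, (x i : ℝ) ^ s i| := Finset.abs_sum_le_sum_abs _ _
    _ ≤ ∑ s ∈ p.support, (mvNorm p : ℝ) * wt x ^ D := by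
        apply Finset.sum_le_sum
        intro s hs'
        rw [abs_mul]
        apply mul_le_mul _ (monom_le_wt x s (hs s hs')) (abs_nonneg _) (Nat.cast_nonneg _)
        have : (p.coeff s).natAbs ≤ mvNorm p :=
          Finset.le_sup (f := fun m => (p.coeff m).natAbs) hs'
        rw [← Int.cast_abs, Int.abs_eq_natAbs]
        exact_mod_cast this
    _ = p.support.card * ((mvNorm p : ℝ) * wt x ^ D) := by rw [Finset.sum_const, nsmul_eq_mul]
    _ ≤ ((D:ℝ) + 1) ^ n * ((mvNorm p : ℝ) * wt x ^ D) := by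
        apply mul_le_mul_of_nonneg_right _ (by positivity)
        exact_mod_cast hcard
    _ = _ := by ring

lemma growth_poly {n D : ℕ} (F : (RZ n)[X]) (hD : totalDeg F = D) (k : ℕ) :
    Grw (F.coeff k) ((D + 1 : ℕ) ^ n * polyNorm F) D := by
  by_cases hk : k ∈ F.support
  · have h1 : k + (F.coeff k).totalDegree ≤ totalDeg F :=
      Finset.le_sup (f := fun k => k + (F.coeff k).totalDegree) hk
    have h2 : mvNorm (F.coeff k) ≤ polyNorm F := Finset.le_sup (f := fun k => mvNorm (F.coeff k)) hk
    refine (growth_start (D := D) (F.coeff k) (by omega)).mono ?_ le_rfl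
    gcongr
  · intro x
    rw [Polynomial.notMem_support_iff.1 hk]
    have := one_le_wt x
    rw [map_zero, Int.cast_zero, abs_zero]
    positivity

lemma one_le_polyNorm {n : ℕ} (F : (RZ n)[X]) (hF : F.Monic) : 1 ≤ polyNorm F := by
  have h0 : F.natDegree ∈ F.support := by
    rw [Polynomial.mem_support_iff]
    have : F.coeff F.natDegree = 1 := hF
    rw [this]; exact one_ne_zero
  have h2 : mvNorm (F.coeff F.natDegree) ≤ polyNorm F :=
    Finset.le_sup (f := fun k => mvNorm (F.coeff k)) h0
  refine le_trans ?_ h2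
  have h1 : F.coeff F.natDegree = 1 := hF
  rw [h1]
  have h3 : (0 : Fin n →₀ ℕ) ∈ (1 : MvPolynomial (Fin n) ℤ).support := by
    rw [MvPolynomial.mem_support_iff]; simp
  have h4 : ((1 : MvPolynomial (Fin n) ℤ).coeff 0).natAbs ≤ mvNorm (1 : MvPolynomial (Fin n) ℤ) :=
    Finset.le_sup (f := fun m => ((1 : MvPolynomial (Fin n) ℤ).coeff m).natAbs) h3
  simpa using h4

lemma natDegree_le_totalDeg {n : ℕ} (F : (RZ n)[X]) (hF : F.Monic) : F.natDegree ≤ totalDeg F := by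
  have h0 : F.natDegree ∈ F.support := by
    rw [Polynomial.mem_support_iff]
    have : F.coeff F.natDegree = 1 := hF
    rw [this]; exact one_ne_zero
  have h1 : F.natDegree + (F.coeff F.natDegree).totalDegree ≤ totalDeg F :=
    Finset.le_sup (f := fun k => k + (F.coeff k).totalDegree) h0
  omega

lemma NFB_le {n : ℕ} (F : (RZ n)[X]) (B : ℝ) (M : ℝ)
    (h : ∀ S : Finset (Fin n → ℤ), (∀ x ∈ S, x ∈ box n ⌊B⌋₊ ∧
      ∃ y : ℤ, (F.map (MvPolynomial.eval x)).eval y = 0) → (S.card : ℝ) ≤ M) : (NFB F B : ℝ) ≤ M := by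
  unfold NFB
  set Z : Set (Fin n → ℤ) := {x | (∀ i, |(x i : ℝ)| ≤ B) ∧
    ∃ y : ℤ, Polynomial.eval y (F.map (MvPolynomial.eval x)) = 0} with hZ
  have hsub : ∀ x ∈ Z, x ∈ box n ⌊B⌋₊ := by
    intro x hx
    rw [mem_box]
    intro j
    have h1 := hx.1 j
    have h2 : (((x j).natAbs : ℕ) : ℝ) ≤ B := by rwa [Nat.cast_natAbs, Int.cast_abs]
    have h3 := Nat.le_floor h2
    rw [Int.abs_eq_natAbs]
    exact_mod_cast h3
  have hfin : Z.Finite := (box n ⌊B⌋₊).finite_toSet.subset hsub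
  rw [Set.ncard_eq_toFinset_card Z hfin]
  apply h
  intro x hx
  rw [Set.Finite.mem_toFinset] at hx
  exact ⟨hsub x hx, hx.2⟩

theorem statement4 (n : ℕ) (hn : 2 ≤ n) :
    ∃ e : ℕ, 1 ≤ e ∧ ∀ D : ℕ, ∃ C : ℝ, 0 < C ∧
      ∀ F : Polynomial (MvPolynomial (Fin n) ℤ),
        F.Monic → 2 ≤ F.natDegree → IsGenuinePoly F → ¬ IsStronglyGenuinePoly F →
        totalDeg F = D →
        ∀ B : ℝ, 1 ≤ B →
          (NFB F B : ℝ) ≤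
            C * Real.log ((polyNorm F : ℝ) + 2) ^ e * B ^ (n - 1) *
              Real.log (B + 2) ^ (2 * e) := by
  obtain ⟨m, rfl⟩ : ∃ m, n = m + 1 := ⟨n - 1, by omega⟩
  refine ⟨4, by norm_num, fun D => ?_⟩
  obtain ⟨c, hc, hcount⟩ := count m D
  obtain ⟨cn, hcn⟩ : ∃ cn : ℝ, cn = (D + 1 : ℕ) ^ (m + 1) := ⟨_, rfl⟩
  have hcn1 : 1 ≤ cn := by
    rw [hcn]; apply one_le_pow₀; push_cast; linarith [Nat.cast_nonneg (α := ℝ) D]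
  have hlcn : 0 ≤ Real.log cn := Real.log_nonneg hcn1
  refine ⟨c * (Real.log cn + 2) ^ 4, by positivity, ?_⟩
  intro F hF _ hgp hns hD B hB
  have hP1 : (1:ℝ) ≤ polyNorm F := by exact_mod_cast one_le_polyNorm F hF
  have hgr := growth_poly F hD
  rw [← hcn] at hgr
  have hdeg : F.natDegree ≤ D := hD ▸ natDegree_le_totalDeg F hF
  generalize (polyNorm F : ℝ) = P at hP1 hgr ⊢
  have hl1 : 1 ≤ Real.log (P + 2) := log_ge_one (by linarith)
  have hl2 : 1 ≤ Real.log (B + 2) := log_ge_one (by linarith)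
  obtain ⟨H, hHdef⟩ : ∃ H : ℝ, H = cn * ((P + 2) * (B + 2)) := ⟨_, rfl⟩
  have h1 : (P + 2) * (B + 2) ≤ H := by
    rw [hHdef]; nlinarith [mul_pos (show 0 < P + 2 by linarith) (show 0 < B + 2 by linarith)]
  have hH9 : B + 2 ≤ H := by nlinarith
  have hN1 : 1 ≤ ⌊B⌋₊ := Nat.le_floor (by simpa using hB)
  have hNB : (⌊B⌋₊ : ℝ) ≤ B := Nat.floor_le (by linarith)
  have hcP : cn * P ≤ H := by
    rw [hHdef]; apply mul_le_mul_of_nonneg_left _ (by linarith); nlinarith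
  have hlogH : Real.log H ≤ (Real.log cn + 2) * (Real.log (P + 2) * Real.log (B + 2)) := by
    rw [hHdef, Real.log_mul (by linarith) (by
      have : 0 < (P + 2) * (B + 2) := mul_pos (by linarith) (by linarith)
      exact this.ne'), Real.log_mul (by linarith) (by linarith)]
    generalize Real.log (P + 2) = a at *
    generalize Real.log (B + 2) = b at *
    have hab : a ≤ a * b := by nlinarith
    have hab' : b ≤ a * b := by nlinarith
    nlinarith
  have hlogH0 : 0 ≤ Real.log H := Real.log_nonneg (by linarith)
  apply NFB_le
  intro S hS
  have h2 := hcount F hF hdeg hgp hns H (by linarith) (fun k => (hgr k).mono hcP le_rfl) ⌊B⌋₊ hN1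
    (by linarith) S hS
  have h3 : m + 1 - 1 = m := by omega
  rw [h3]
  calc (S.card : ℝ) ≤ _ := h2
    _ ≤ c * ((Real.log cn + 2) * (Real.log (P + 2) * Real.log (B + 2))) ^ 4 * B ^ m := by gcongr
    _ = c * (Real.log cn + 2) ^ 4 * Real.log (P + 2) ^ 4 * B ^ m * Real.log (B + 2) ^ 4 := by ring
    _ ≤ _ := by
        apply mul_le_mul_of_nonneg_left _ (by positivity)
        exact pow_le_pow_right₀ hl2 (by norm_num)
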